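/- Let M be the restricted Melikian algebra over F of characteristic p = 5. Each of Sq(1), Sq(D_1), Sq(D_2), Sq(D̃_1), Sq(D̃_2) is a 2-cocycle of M with adjoint coefficients, and for every 2-cocycle ψ of M there exist unique scalars c_0, c_1, c_2, c̃_1, c̃_2 ∈ F such that ψ − c_0·Sq(1) − Σ_{i=1}^2 c_i·Sq(D_i) − Σ_{i=1}^2 c̃_i·Sq(D̃_i) is a 2-coboundary. (Equivalently, H²(M,M) = ⟨Sq(1)⟩ ⊕ ⊕_{i=1}^2 ⟨Sq(D_i)⟩ ⊕ ⊕_{i=1}^2 ⟨Sq(D̃_i)⟩.) -/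

import Mathlib

/-!
The algebra `M` is free over `A(2)` on `1, D₁, D₂, D̃₁, D̃₂`, so the divided-power monomials give
it a basis of 125 elements `E k a b` with dual functionals `co k a b`. The structure `Model`
records a Lie algebra with such a basis and the structure constants of `M`; the cohomological
argument uses nothing else.

*Normalization.* The Lie derivative of a cocycle is a coboundary, and the torus spanned by `x₁D₁`
and `x₂D₂` acts semisimply, so every cocycle is cohomologous to one of weight zero
(`exists_proj`). For such a cocycle `ψ` put `A = ψ(D₁, ·)` and `d = ad D₁`, where `d⁵ = 0`. Then
`A` is a commutator `[d, φ]` as soon as the obstruction `∑ d^{4-j} A d^j` vanishes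
(`exists_homotopy`). The obstruction is a derivation (`TT_der`), it is a multiple of `ad (x₂D₂)`
by weights (`obs_one`), and it can be removed by a coboundary, so that `ψ(D₁, ·) = 0` may be
assumed (`kill_one`). The same idea for `D₂` makes `ψ(D₂, ·) = 0` (`kill_two`). Altogether every
cocycle is cohomologous to a normalized one (`exists_nrm`).

*Linear algebra modulo 5.* A normalized cocycle commutes with `ad D₁` and `ad D₂`, hence is
determined by the constant terms of its values `ψ(e_y, e_z)` on the basis. The cocycle identity is
a system of linear equations over `𝔽₅` in these unknowns. If 28 of the unknowns, the pivots,
vanish, then there is an order of the equations in which each of them contains one unknown not yet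
known to vanish, and so all the unknowns vanish (`Nrm.eq_zero`; the order is `certL`). Thus the
normalized cocycles form a space of dimension at most 28.

*Coboundaries and squarings.* The linear maps of weight zero which commute with `ad D₁`, `ad D₂`
and vanish at `D₁`, `D₂` depend on 23 parameters (`exists_equi`). Their coboundaries are
normalized, vanish at the first five pivots (`val_dB_sq`), and take arbitrary values at the other
23 (`par_surj`). The squarings of `1, D₁, D₂, D̃₁, D̃₂` are normalized as well, and each of the
first five pivots detects just one of them (`sp_diag`, `sp_off`). Hence every cocycle is
cohomologous to a combination of squarings (`exists_comb`).

*Uniqueness.* Let a combination of squarings be the coboundary of `φ`. It vanishes on `D₁` and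
`D₂`, and since the centre is zero this gives `(ad Dᵢ)⁴ φ(Dᵢ) = 0`. Therefore one can subtract an
inner derivation from `φ` and assume that `φ(D₁) = φ(D₂) = 0` (`int_one`, `int_two`). Then `φ`
commutes with `ad D₁` and `ad D₂`, its coboundary vanishes at the first five pivots, and all the
coefficients are zero (`comb_unique`).
-/

set_option maxHeartbeats 1000000
set_option synthInstance.maxHeartbeats 400000

open scoped BigOperators
noncomputable section

variable (F : Type*) [Field F] (p n : ℕ)

/-- The ideal `(X_1^p, …, X_n^p)` of the polynomial ring. -/
def truncIdeal : Ideal (MvPolynomial (Fin n) F) :=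
  Ideal.span (Set.range fun i : Fin n => MvPolynomial.X i ^ p)

/-- The truncated polynomial algebra `A(n) = F[x_1,…,x_n]/(x_1^p,…,x_n^p)`. -/
abbrev TruncP := MvPolynomial (Fin n) F ⧸ truncIdeal F p n

/-- The monomial `x^a` in `A(n)`. -/
def xpow (a : Fin n → ℕ) : TruncP F p n :=
  Ideal.Quotient.mk _ (MvPolynomial.monomial (Finsupp.equivFunOnFinite.symm a) 1)

/-- Lift an `F`-linear map killing the truncation ideal to the quotient. -/
def liftF {N : Type*} [AddCommGroup N] [Module F N]
    (f : MvPolynomial (Fin n) F →ₗ[F] N)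
    (h : (truncIdeal F p n).restrictScalars F ≤ LinearMap.ker f) :
    TruncP F p n →ₗ[F] N :=
  (Submodule.liftQ ((truncIdeal F p n).restrictScalars F) f h) ∘ₗ
    (Submodule.Quotient.restrictScalarsEquiv F (truncIdeal F p n)).symm.toLinearMap

lemma liftF_mk {N : Type*} [AddCommGroup N] [Module F N]
    (f : MvPolynomial (Fin n) F →ₗ[F] N)
    (h : (truncIdeal F p n).restrictScalars F ≤ LinearMap.ker f)
    (x : MvPolynomial (Fin n) F) :
    liftF F p n f h (Ideal.Quotient.mk _ x) = f x := by
  simp only [liftF, LinearMap.coe_comp, Function.comp_apply, LinearEquiv.coe_coe]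
  have : (Ideal.Quotient.mk (truncIdeal F p n)) x = Submodule.Quotient.mk x := rfl
  rw [this, Submodule.Quotient.restrictScalarsEquiv_symm_mk, Submodule.liftQ_apply]

lemma truncIdeal_pderiv_mem [CharP F p] (j : Fin n) {f : MvPolynomial (Fin n) F}
    (hf : f ∈ truncIdeal F p n) :
    Ideal.Quotient.mk (truncIdeal F p n) (MvPolynomial.pderiv j f) = 0 := by
  classical
  let K : Ideal (MvPolynomial (Fin n) F) :=
    { carrier := {g | Ideal.Quotient.mk (truncIdeal F p n) (MvPolynomial.pderiv j g) = 0 ∧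
        Ideal.Quotient.mk (truncIdeal F p n) g = 0},
      add_mem' := by
        rintro a b ⟨ha1, ha2⟩ ⟨hb1, hb2⟩
        refine ⟨?_, ?_⟩
        · rw [map_add, map_add, ha1, hb1, add_zero]
        · rw [map_add, ha2, hb2, add_zero]
      zero_mem' := ⟨by rw [map_zero, map_zero], by rw [map_zero]⟩
      smul_mem' := by
        rintro c x ⟨hx1, hx2⟩
        refine ⟨?_, ?_⟩
        · have hL : MvPolynomial.pderiv j (c * x)
              = c * MvPolynomial.pderiv j x + x * MvPolynomial.pderiv j c := by
            have := (MvPolynomial.pderiv j).leibniz c x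
            simpa [smul_eq_mul, mul_comm] using this
          rw [smul_eq_mul, hL]
          rw [map_add, map_mul, map_mul, hx1, hx2, mul_zero, zero_mul, add_zero]
        · rw [smul_eq_mul, map_mul, hx2, mul_zero] }
  have hle : truncIdeal F p n ≤ K := by
    rw [truncIdeal, Ideal.span_le]
    rintro _ ⟨i, rfl⟩
    refine ⟨?_, ?_⟩
    · have hgen : MvPolynomial.pderiv j (MvPolynomial.X (R := F) i ^ p) = 0 := by
        rw [MvPolynomial.X_pow_eq_monomial, MvPolynomial.pderiv_monomial]
        rcases eq_or_ne i j with h | h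
        · subst h
          simp [Finsupp.single_apply, CharP.cast_eq_zero F p]
        · simp [Finsupp.single_apply, h]
      rw [hgen, map_zero]
    · exact Ideal.Quotient.eq_zero_iff_mem.mpr (Ideal.subset_span ⟨i, rfl⟩)
  exact (hle hf).1

lemma truncIdeal_support {f : MvPolynomial (Fin n) F} (hf : f ∈ truncIdeal F p n) :
    ∀ d ∈ f.support, ∃ i, p ≤ d i := by
  classical
  let K : Ideal (MvPolynomial (Fin n) F) :=
    { carrier := {g | ∀ d ∈ g.support, ∃ i, p ≤ d i},
      add_mem' := by
        intro a b ha hb d hd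
        rcases Finset.mem_union.mp (MvPolynomial.support_add hd) with h | h
        · exact ha d h
        · exact hb d h
      zero_mem' := by simp
      smul_mem' := by
        intro c x hx d hd
        rw [smul_eq_mul] at hd
        obtain ⟨d1, hd1, d2, hd2, rfl⟩ := Finset.mem_add.mp (MvPolynomial.support_mul c x hd)
        obtain ⟨i, hi⟩ := hx d2 hd2
        exact ⟨i, le_trans hi (by simp)⟩ }
  have hle : truncIdeal F p n ≤ K := by
    rw [truncIdeal, Ideal.span_le]
    rintro _ ⟨i, rfl⟩ d hd
    simp only [MvPolynomial.X_pow_eq_monomial] at hd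
    rw [MvPolynomial.support_monomial] at hd
    simp only [one_ne_zero, if_false] at hd
    rcases Finset.mem_singleton.mp hd with rfl
    exact ⟨i, by simp⟩
  exact hle hf

/-- The coefficient of `x^a` (for `a` componentwise `< p`) of an element of `A(n)`,
as a linear functional. For `a` not in the box this is defined to be `0`. -/
def coeffT (a : Fin n → ℕ) : TruncP F p n →ₗ[F] F :=
  if h : ∀ i, a i < p then
    liftF F p n
      { toFun := fun f => f.coeff (Finsupp.equivFunOnFinite.symm a),
        map_add' := fun f g => MvPolynomial.coeff_add _ f g,
        map_smul' := fun c f => MvPolynomial.coeff_smul _ c f }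
      (by
        intro f hf
        have hf' : f ∈ truncIdeal F p n := hf
        simp only [LinearMap.mem_ker, LinearMap.coe_mk, AddHom.coe_mk]
        by_contra hne
        have hmem : Finsupp.equivFunOnFinite.symm a ∈ f.support :=
          MvPolynomial.mem_support_iff.mpr hne
        obtain ⟨i, hi⟩ := truncIdeal_support F p n hf' _ hmem
        have heq : (Finsupp.equivFunOnFinite.symm a) i = a i := rfl
        have h2 := h i
        rw [heq] at hi
        omega)
  else 0

/-- The Jacobson–Witt algebra `W(n) = Der_F A(n)`. -/
abbrev Witt := Derivation F (TruncP F p n) (TruncP F p n)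

def DjL [CharP F p] (j : Fin n) : TruncP F p n →ₗ[F] TruncP F p n :=
  liftF F p n
    ((Ideal.Quotient.mkₐ F (truncIdeal F p n)).toLinearMap ∘ₗ (MvPolynomial.pderiv j).toLinearMap)
    (by
      intro f hf
      have hf' : f ∈ truncIdeal F p n := hf
      simp only [LinearMap.mem_ker, LinearMap.coe_comp, Function.comp_apply,
        AlgHom.toLinearMap_apply, Ideal.Quotient.mkₐ_eq_mk, Derivation.coeFn_coe]
      exact truncIdeal_pderiv_mem F p n j hf')

lemma DjL_mk [CharP F p] (j : Fin n) (f : MvPolynomial (Fin n) F) :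
    DjL F p n j (Ideal.Quotient.mk _ f) = Ideal.Quotient.mk _ (MvPolynomial.pderiv j f) := by
  rw [DjL, liftF_mk]
  simp

/-- The partial derivative `D_j = ∂/∂x_j`, as a derivation of `A(n)`. -/
def Dj [CharP F p] (j : Fin n) : Witt F p n where
  toLinearMap := DjL F p n j
  map_one_eq_zero' := by
    have h1 : (1 : TruncP F p n) = Ideal.Quotient.mk _ (1 : MvPolynomial (Fin n) F) :=
      (map_one _).symm
    rw [LinearMap.coe_mk] at *
    show DjL F p n j 1 = 0
    rw [h1, DjL_mk]
    simp
  leibniz' := by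
    intro a b
    obtain ⟨x, rfl⟩ := Ideal.Quotient.mk_surjective a
    obtain ⟨y, rfl⟩ := Ideal.Quotient.mk_surjective b
    show DjL F p n j _ = _ • DjL F p n j _ + _ • DjL F p n j _
    rw [← map_mul, DjL_mk, DjL_mk, DjL_mk, smul_eq_mul, smul_eq_mul, ← map_mul, ← map_mul,
      ← map_add]
    congr 1
    have := (MvPolynomial.pderiv j).leibniz x y
    simpa [smul_eq_mul] using this
section Cochains

variable (F : Type*) [Field F] {L : Type*} [AddCommGroup L] [Module F L]

/-- A map of two arguments which is `F`-linear in each argument. -/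
def IsBilinear (ψ : L → L → L) : Prop :=
  (∀ x, IsLinearMap F (ψ x)) ∧ ∀ y, IsLinearMap F fun x => ψ x y

/-- A 2-cochain with adjoint coefficients: an alternating `F`-bilinear map. -/
def IsCochain (ψ : L → L → L) : Prop :=
  IsBilinear F ψ ∧ ∀ x, ψ x x = 0

/-- A 2-cocycle with adjoint coefficients, for the bracket `B`. -/
def IsCocycle (B : L → L → L) (ψ : L → L → L) : Prop :=
  IsCochain F ψ ∧ ∀ x y z,
    B x (ψ y z) - B y (ψ x z) + B z (ψ x y)
      - ψ (B x y) z + ψ (B x z) y - ψ (B y z) x = 0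

/-- A 2-coboundary with adjoint coefficients, for the bracket `B`. -/
def IsCoboundary (B : L → L → L) (ψ : L → L → L) : Prop :=
  ∃ φ : L →ₗ[F] L, ∀ x y, ψ x y = B x (φ y) - B y (φ x) - φ (B x y)

/-- A 2-cocycle of a subspace `V` (closed under the bracket `B` of the ambient space),
with adjoint coefficients.  The cochain is recorded as an everywhere-defined bilinear
map preserving `V`; only its restriction to `V` is relevant. -/
def IsCocycleOn (V : Submodule F L) (B : L → L → L) (ψ : L → L → L) : Prop :=
  IsBilinear F ψ ∧ (∀ x ∈ V, ∀ y ∈ V, ψ x y ∈ V) ∧ (∀ x ∈ V, ψ x x = 0) ∧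
    ∀ x ∈ V, ∀ y ∈ V, ∀ z ∈ V,
      B x (ψ y z) - B y (ψ x z) + B z (ψ x y)
        - ψ (B x y) z + ψ (B x z) y - ψ (B y z) x = 0

/-- A 2-coboundary of a subspace `V`, with adjoint coefficients. -/
def IsCoboundaryOn (V : Submodule F L) (B : L → L → L) (ψ : L → L → L) : Prop :=
  ∃ φ : L →ₗ[F] L, (∀ x ∈ V, φ x ∈ V) ∧
    ∀ x ∈ V, ∀ y ∈ V, ψ x y = B x (φ y) - B y (φ x) - φ (B x y)

/-- A derivation of a subspace `V` closed under the bracket `B`: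
an `F`-linear map preserving `V` and satisfying the Leibniz rule on `V`. -/
def IsDerivationOn (V : Submodule F L) (B : L → L → L) (γ : L →ₗ[F] L) : Prop :=
  (∀ x ∈ V, γ x ∈ V) ∧ ∀ x ∈ V, ∀ y ∈ V, γ (B x y) = B (γ x) y + B x (γ y)

/-- An inner derivation of a subspace `V`: a map agreeing on `V` with `ad z = B z ·`
for some `z ∈ V`. -/
def IsInnerOn (V : Submodule F L) (B : L → L → L) (δ : L → L) : Prop :=
  ∃ z ∈ V, ∀ y ∈ V, δ y = B z y

/-- An inner derivation: `δ = ad z = B z ·` for some `z`. -/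
def IsInner (B : L → L → L) (δ : L → L) : Prop := ∃ z, ∀ y, δ y = B z y

/-- The squaring `Sq(γ)(x,y) = ∑_{i=1}^{p-1} [γ^i(x), γ^{p-i}(y)]/(i!·(p-i)!)`
of an operator `γ`, relative to the bracket `B`. -/
def Squaring (p : ℕ) (B : L → L → L) (γ : L → L) : L → L → L := fun x y =>
  ∑ i ∈ Finset.Ioo 0 p,
    (((Nat.factorial i * Nat.factorial (p - i) : ℕ) : F))⁻¹ • B (γ^[i] x) (γ^[p - i] y)

/-- `Sq(z) := Sq(ad z)` for an element `z`. -/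
def SqE (p : ℕ) (B : L → L → L) (z : L) : L → L → L :=
  Squaring F p B (fun y => B z y)

/-- The Hochschild operator
`H_ψ(x)(y) = ∑_{j=0}^{p-1} (ad x)^j (ψ(x, (ad x)^{p-1-j}(y))) − ψ(x^{[p]}, y)`,
for the bracket `B`, the 2-cochain `ψ`, and the chosen `p`-th power `xp` of `x`. -/
def HOp (p : ℕ) (B : L → L → L) (ψ : L → L → L) (x xp : L) : L → L := fun y =>
  (∑ j ∈ Finset.range p, (fun z => B x z)^[j] (ψ x ((fun z => B x z)^[p - 1 - j] y)))
    - ψ xp y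

end Cochains

section Special

variable (F : Type*) [Field F] (p n : ℕ) [CharP F p]

/-- The element `x^a D_j` of `W(n)`. -/
def xD (a : Fin n → ℕ) (j : Fin n) : Witt F p n := xpow F p n a • Dj F p n j

/-- `D_{ij}(f) = D_j(f)·D_i − D_i(f)·D_j ∈ W(n)`. -/
def Dij (i j : Fin n) (f : TruncP F p n) : Witt F p n :=
  Dj F p n j f • Dj F p n i - Dj F p n i f • Dj F p n j

/-- The divergence `div(∑ f_i D_i) = ∑ D_i(f_i)`, i.e. `div(E) = ∑ D_i(E(x_i))`. -/
def divW (E : Witt F p n) : TruncP F p n :=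
  ∑ i, Dj F p n i (E (xpow F p n (Pi.single i 1)))

/-- The special algebra `S(n) = [S'(n), S'(n)]`, the derived subalgebra of
`S'(n) = ker(div)`, as a subspace of `W(n)`. -/
def Ssub : Submodule F (Witt F p n) :=
  Submodule.span F
    {z | ∃ D E : Witt F p n, divW F p n D = 0 ∧ divW F p n E = 0 ∧ z = ⁅D, E⁆}

/-- The multi-index `τ = (p−1, …, p−1)`. -/
def tauE : Fin n → ℕ := fun _ => p - 1

/-- The coefficient of the basis element `x^a D_i` of `W(n)` in `E ∈ W(n)`;
it equals the coefficient of `x^a` in `E(x_i)`. -/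
def coeffW (a : Fin n → ℕ) (i : Fin n) (E : Witt F p n) : F :=
  coeffT F p n a (E (xpow F p n (Pi.single i 1)))

/-- The degree-`d` homogeneous component of `W(n)`, spanned by the `x^a D_j`
with `|a| − 1 = d`. -/
def Wgr (d : ℤ) : Submodule F (Witt F p n) :=
  Submodule.span F
    {E | ∃ (a : Fin n → ℕ) (j : Fin n),
      (∀ i, a i < p) ∧ (∑ i, (a i : ℤ)) - 1 = d ∧ E = xD F p n a j}

end Special

section Melikian

variable (F : Type*) [Field F] [CharP F 5]

/-- The underlying space of the restricted Melikian algebra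
`M = A(2) ⊕ W(2) ⊕ W̃(2)` (components: `A(2)`-part, `W(2)`-part, `W̃(2)`-part). -/
abbrev Mel := TruncP F 5 2 × Witt F 5 2 × Witt F 5 2

/-- The bracket of the restricted Melikian algebra, for
`X = f + D + Ẽ` and `Y = g + D' + Ẽ'`. -/
def Mbr (X Y : Mel F) : Mel F :=
  ⟨X.2.1 Y.1 - (2 : TruncP F 5 2) * (divW F 5 2 X.2.1 * Y.1)
      - (Y.2.1 X.1 - (2 : TruncP F 5 2) * (divW F 5 2 Y.2.1 * X.1))
      + (X.2.2 (xpow F 5 2 (Pi.single 0 1)) * Y.2.2 (xpow F 5 2 (Pi.single 1 1))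
          - X.2.2 (xpow F 5 2 (Pi.single 1 1)) * Y.2.2 (xpow F 5 2 (Pi.single 0 1))),
    ⁅X.2.1, Y.2.1⁆ + X.1 • Y.2.2 - Y.1 • X.2.2,
    ⁅X.2.1, Y.2.2⁆ + ((2 : TruncP F 5 2) * divW F 5 2 X.2.1) • Y.2.2
      - ⁅Y.2.1, X.2.2⁆ - ((2 : TruncP F 5 2) * divW F 5 2 Y.2.1) • X.2.2
      + ((2 : TruncP F 5 2) * (Y.1 * Dj F 5 2 1 X.1 - X.1 * Dj F 5 2 1 Y.1)) • Dj F 5 2 0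
      + ((2 : TruncP F 5 2) * (X.1 * Dj F 5 2 0 Y.1 - Y.1 * Dj F 5 2 0 X.1)) • Dj F 5 2 1⟩

/-- The element `1 ∈ A(2) ⊆ M`. -/
def melOne : Mel F := ⟨1, 0, 0⟩

/-- The element `D_i ∈ W(2) ⊆ M`. -/
def melD (i : Fin 2) : Mel F := ⟨0, Dj F 5 2 i, 0⟩

/-- The element `D̃_i ∈ W̃(2) ⊆ M`. -/
def melDt (i : Fin 2) : Mel F := ⟨0, 0, Dj F 5 2 i⟩

end Melikian

namespace Mlk

set_option linter.unusedSectionVars false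

/-! ### Divided powers in `A(2)` -/

section Trunc

variable (F : Type*) [Field F] [CharP F 5]

/-- The divided-power monomial `x₁^a x₂^b / (a! b!)`. If `a` or `b` exceeds `4` then `a! b! = 0` in
`F`, and the value is `0` since `0⁻¹ = 0`. -/
def X (a b : ℕ) : TruncP F 5 2 :=
  (((a.factorial * b.factorial : ℕ) : F))⁻¹ • xpow F 5 2 ![a, b]

/-- The coefficient of the divided-power monomial `X a b`, equal to `0` unless `a, b ≤ 4`. -/
def ca (a b : ℕ) : TruncP F 5 2 →ₗ[F] F :=
  ((a.factorial * b.factorial : ℕ) : F) • coeffT F 5 2 ![a, b]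

lemma five_zero : (5 : F) = 0 := by
  have := CharP.cast_eq_zero F 5
  exact_mod_cast this

lemma fact_ne {a : ℕ} (h : a < 5) : ((a.factorial : ℕ) : F) ≠ 0 := by
  intro h0
  rw [CharP.cast_eq_zero_iff F 5] at h0
  have := (Nat.Prime.dvd_factorial (by norm_num : Nat.Prime 5)).1 h0
  omega

lemma fact_zero {a : ℕ} (h : 5 ≤ a) : ((a.factorial : ℕ) : F) = 0 := by
  rw [CharP.cast_eq_zero_iff F 5]
  exact (Nat.Prime.dvd_factorial (by norm_num : Nat.Prime 5)).2 h

lemma X_out {a b : ℕ} (h : 5 ≤ a ∨ 5 ≤ b) : X F a b = 0 := by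
  rw [X, Nat.cast_mul]
  rcases h with h | h <;> simp [fact_zero F h]

lemma ca_out {a b : ℕ} (h : 5 ≤ a ∨ 5 ≤ b) : ca F a b = 0 := by
  rw [ca, Nat.cast_mul]
  rcases h with h | h <;> simp [fact_zero F h]

lemma coeffT_mk {a : Fin 2 → ℕ} (h : ∀ i, a i < 5) (f : MvPolynomial (Fin 2) F) :
    coeffT F 5 2 a (Ideal.Quotient.mk _ f) = f.coeff (Finsupp.equivFunOnFinite.symm a) := by
  rw [coeffT, dif_pos h, liftF_mk]
  rfl

lemma lt_vec {a b : ℕ} (ha : a < 5) (hb : b < 5) : ∀ i, ![a, b] i < 5 := by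
  intro i
  fin_cases i <;> simpa

lemma vec_eq (m : Fin 2 →₀ ℕ) : Finsupp.equivFunOnFinite.symm ![m 0, m 1] = m := by
  ext i
  fin_cases i <;> simp

lemma ca_mk {a b : ℕ} (ha : a < 5) (hb : b < 5) (f : MvPolynomial (Fin 2) F) :
    ca F a b (Ideal.Quotient.mk _ f) =
      ((a.factorial * b.factorial : ℕ) : F) * f.coeff (Finsupp.equivFunOnFinite.symm ![a, b]) := by
  rw [ca, LinearMap.smul_apply, coeffT_mk F (lt_vec ha hb), smul_eq_mul]

lemma ca_X (a b c d : ℕ) (hc : c < 5) (hd : d < 5) :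
    ca F a b (X F c d) = if a = c ∧ b = d then 1 else 0 := by
  by_cases h : a < 5 ∧ b < 5
  · rw [X, LinearMap.map_smul, xpow, ca_mk F h.1 h.2, MvPolynomial.coeff_monomial]
    by_cases h2 : a = c ∧ b = d
    · obtain ⟨rfl, rfl⟩ := h2
      have h3 : ((a.factorial * b.factorial : ℕ) : F) ≠ 0 := by
        rw [Nat.cast_mul]
        exact mul_ne_zero (fact_ne F hc) (fact_ne F hd)
      simp only [if_true, smul_eq_mul, mul_one, and_self]
      exact inv_mul_cancel₀ h3
    · have : ¬ (Finsupp.equivFunOnFinite.symm ![c, d] = Finsupp.equivFunOnFinite.symm ![a, b]) := by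
        intro h3
        have h4 := Finsupp.equivFunOnFinite.symm.injective h3
        have h5 := congrFun h4 0
        have h6 := congrFun h4 1
        simp at h5 h6
        exact h2 ⟨h5.symm, h6.symm⟩
      rw [if_neg this, if_neg h2]
      simp
  · rw [ca_out F (by omega), if_neg (by omega)]
    rfl

/-- A monomial with an exponent at least `5` lies in the truncation ideal. -/
lemma monomial_mem {m : Fin 2 →₀ ℕ} {i : Fin 2} (hi : 5 ≤ m i) (c : F) :
    MvPolynomial.monomial m c ∈ truncIdeal F 5 2 := by
  have e : m - Finsupp.single i 5 + Finsupp.single i 5 = m := by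
    ext j
    by_cases hj : i = j
    · subst hj
      simp only [Finsupp.add_apply, Finsupp.tsub_apply, Finsupp.single_eq_same]
      omega
    · simp [hj]
  have : MvPolynomial.monomial m c
      = MvPolynomial.monomial (m - Finsupp.single i 5) c * MvPolynomial.X i ^ 5 := by
    rw [MvPolynomial.X_pow_eq_monomial, MvPolynomial.monomial_mul, mul_one, e]
  rw [this]
  exact Ideal.mul_mem_left _ _ (Ideal.subset_span ⟨i, rfl⟩)

/-- The coefficients determine an element of `A(2)`. -/
lemma ca_ext {f : TruncP F 5 2} (h : ∀ a b, ca F a b f = 0) : f = 0 := by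
  obtain ⟨g, rfl⟩ := Ideal.Quotient.mk_surjective f
  rw [Ideal.Quotient.eq_zero_iff_mem, g.as_sum]
  refine Ideal.sum_mem _ fun m hm => ?_
  by_cases hb : m 0 < 5 ∧ m 1 < 5
  · exfalso
    have := h (m 0) (m 1)
    rw [ca_mk F hb.1 hb.2, vec_eq, Nat.cast_mul] at this
    exact mul_ne_zero (mul_ne_zero (fact_ne F hb.1) (fact_ne F hb.2))
      (MvPolynomial.mem_support_iff.1 hm) this
  · rcases not_and_or.1 hb with h1 | h1
    · exact monomial_mem F (i := 0) (by omega) _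
    · exact monomial_mem F (i := 1) (by omega) _

lemma Dj_mk (j : Fin 2) (f : MvPolynomial (Fin 2) F) :
    Dj F 5 2 j (Ideal.Quotient.mk _ f) = Ideal.Quotient.mk _ (MvPolynomial.pderiv j f) :=
  DjL_mk F 5 2 j f

lemma pderiv_coeff (j : Fin 2) (f : MvPolynomial (Fin 2) F) (m : Fin 2 →₀ ℕ) :
    (MvPolynomial.pderiv j f).coeff m = ((m j + 1 : ℕ) : F) * f.coeff (m + Finsupp.single j 1) := by
  induction f using MvPolynomial.induction_on' with
  | monomial u a =>
    rw [MvPolynomial.pderiv_monomial, MvPolynomial.coeff_monomial, MvPolynomial.coeff_monomial]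
    by_cases h : u = m + Finsupp.single j 1
    · subst h
      simp [mul_comm]
    · rw [if_neg h, mul_zero]
      by_cases h2 : u - Finsupp.single j 1 = m
      · rw [if_pos h2]
        have h3 : u j = 0 := by
          by_contra h4
          apply h
          rw [← h2]
          ext i
          by_cases hi : j = i
          · subst hi
            simp
            omega
          · simp [Finsupp.single_apply, hi]
        simp [h3]
      · rw [if_neg h2]
  | add p q hp hq =>
    rw [map_add, MvPolynomial.coeff_add, MvPolynomial.coeff_add, hp, hq, mul_add]

lemma ca_D0 (a b : ℕ) (f : TruncP F 5 2) : ca F a b (Dj F 5 2 0 f) = ca F (a + 1) b f := by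
  obtain ⟨g, rfl⟩ := Ideal.Quotient.mk_surjective f
  by_cases h : a < 5 ∧ b < 5
  · rw [Dj_mk, ca_mk F h.1 h.2, pderiv_coeff]
    have e : Finsupp.equivFunOnFinite.symm ![a, b] + Finsupp.single (0 : Fin 2) 1
        = Finsupp.equivFunOnFinite.symm ![a + 1, b] := by
      ext i
      fin_cases i <;> simp
    have e2 : (Finsupp.equivFunOnFinite.symm ![a, b] : Fin 2 →₀ ℕ) 0 = a := by simp
    rw [e, e2]
    by_cases h4 : a < 4
    · rw [ca_mk F (by omega) h.2, Nat.factorial_succ]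
      push_cast
      ring
    · have : a = 4 := by omega
      subst this
      rw [ca_out F (Or.inl (by omega))]
      have : (((4 + 1 : ℕ)) : F) = 0 := CharP.cast_eq_zero F 5
      rw [this]
      simp
  · rw [ca_out F (by omega), ca_out F (by omega)]
    rfl

lemma ca_D1 (a b : ℕ) (f : TruncP F 5 2) : ca F a b (Dj F 5 2 1 f) = ca F a (b + 1) f := by
  obtain ⟨g, rfl⟩ := Ideal.Quotient.mk_surjective f
  by_cases h : a < 5 ∧ b < 5
  · rw [Dj_mk, ca_mk F h.1 h.2, pderiv_coeff]
    have e : Finsupp.equivFunOnFinite.symm ![a, b] + Finsupp.single (1 : Fin 2) 1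
        = Finsupp.equivFunOnFinite.symm ![a, b + 1] := by
      ext i
      fin_cases i <;> simp
    have e2 : (Finsupp.equivFunOnFinite.symm ![a, b] : Fin 2 →₀ ℕ) 1 = b := by simp
    rw [e, e2]
    by_cases h4 : b < 4
    · rw [ca_mk F h.1 (by omega), Nat.factorial_succ]
      push_cast
      ring
    · have : b = 4 := by omega
      subst this
      rw [ca_out F (Or.inr (by omega))]
      have : (((4 + 1 : ℕ)) : F) = 0 := CharP.cast_eq_zero F 5
      rw [this]
      simp
  · rw [ca_out F (by omega), ca_out F (by omega)]
    rfl

lemma ca_eq {f g : TruncP F 5 2} (h : ∀ a b, ca F a b f = ca F a b g) : f = g := by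
  rw [← sub_eq_zero]
  exact ca_ext F fun a b => by rw [map_sub, h, sub_self]

lemma D0_X_succ {a : ℕ} (ha : a < 4) (b : ℕ) : Dj F 5 2 0 (X F (a + 1) b) = X F a b := by
  by_cases hb : b < 5
  · refine ca_eq F fun c d => ?_
    rw [ca_D0, ca_X F _ _ _ _ (by omega) hb, ca_X F _ _ _ _ (by omega) hb]
    simp
  · rw [X_out F (by omega), X_out F (by omega), map_zero]

lemma D0_X_zero (b : ℕ) : Dj F 5 2 0 (X F 0 b) = 0 := by
  by_cases hb : b < 5
  · refine ca_ext F fun c d => ?_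
    rw [ca_D0, ca_X F _ _ _ _ (by omega) hb]
    simp
  · rw [X_out F (by omega), map_zero]

lemma D1_X_succ {b : ℕ} (hb : b < 4) (a : ℕ) : Dj F 5 2 1 (X F a (b + 1)) = X F a b := by
  by_cases ha : a < 5
  · refine ca_eq F fun c d => ?_
    rw [ca_D1, ca_X F _ _ _ _ ha (by omega), ca_X F _ _ _ _ ha (by omega)]
    simp
  · rw [X_out F (by omega), X_out F (by omega), map_zero]

lemma D1_X_zero (a : ℕ) : Dj F 5 2 1 (X F a 0) = 0 := by
  by_cases ha : a < 5
  · refine ca_ext F fun c d => ?_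
    rw [ca_D1, ca_X F _ _ _ _ ha (by omega)]
    simp
  · rw [X_out F (by omega), map_zero]

lemma xpow_mul (a b c d : ℕ) :
    xpow F 5 2 ![a, b] * xpow F 5 2 ![c, d] = xpow F 5 2 ![a + c, b + d] := by
  have e : (Finsupp.equivFunOnFinite.symm ![a, b] : Fin 2 →₀ ℕ)
      + Finsupp.equivFunOnFinite.symm ![c, d] = Finsupp.equivFunOnFinite.symm ![a + c, b + d] := by
    ext i
    fin_cases i <;> simp
  rw [xpow, xpow, xpow, ← map_mul, MvPolynomial.monomial_mul, mul_one, e]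

lemma xpow_eq {a b : ℕ} (ha : a < 5) (hb : b < 5) :
    xpow F 5 2 ![a, b] = ((a.factorial * b.factorial : ℕ) : F) • X F a b := by
  rw [X, smul_smul, mul_inv_cancel₀, one_smul]
  rw [Nat.cast_mul]
  exact mul_ne_zero (fact_ne F ha) (fact_ne F hb)

lemma xpow_out {a b : ℕ} (h : 5 ≤ a ∨ 5 ≤ b) : xpow F 5 2 ![a, b] = 0 := by
  rw [xpow, Ideal.Quotient.eq_zero_iff_mem]
  rcases h with h | h
  · exact monomial_mem F (i := 0) (by simpa using h) _
  · exact monomial_mem F (i := 1) (by simpa using h) _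

/-- Divided powers multiply with binomial coefficients; modulo `5` these already vanish when an
exponent overflows. -/
lemma X_mul {a b c d : ℕ} (ha : a < 5) (hb : b < 5) (hc : c < 5) (hd : d < 5) :
    X F a b * X F c d =
      (((a + c).choose a * (b + d).choose b : ℕ) : F) • X F (a + c) (b + d) := by
  have key : X F a b * X F c d = ((((a.factorial * b.factorial : ℕ) : F))⁻¹ *
      (((c.factorial * d.factorial : ℕ) : F))⁻¹) • xpow F 5 2 ![a + c, b + d] := by
    rw [X, X, smul_mul_smul_comm, xpow_mul]
  by_cases h : a + c < 5 ∧ b + d < 5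
  · rw [key, xpow_eq F h.1 h.2, smul_smul]
    congr 1
    rw [← Nat.add_choose_mul_factorial_mul_factorial a c,
      ← Nat.add_choose_mul_factorial_mul_factorial b d]
    have h1 := fact_ne F ha
    have h2 := fact_ne F hb
    have h3 := fact_ne F hc
    have h4 := fact_ne F hd
    push_cast
    field_simp
    rw [Nat.choose_symm_add, Nat.choose_symm_add]
  · rw [key, xpow_out F (by omega), X_out F (by omega), smul_zero, smul_zero]

lemma X_zero : X F 0 0 = 1 := by
  have : (Finsupp.equivFunOnFinite.symm ![0, 0] : Fin 2 →₀ ℕ) = 0 := by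
    ext i
    fin_cases i <;> simp
  simp [X, xpow, this]

lemma xpow_single0 : xpow F 5 2 (Pi.single 0 1) = X F 1 0 := by
  have : (Pi.single 0 1 : Fin 2 → ℕ) = ![1, 0] := by
    ext i
    fin_cases i <;> simp
  rw [this, X]
  simp

lemma xpow_single1 : xpow F 5 2 (Pi.single 1 1) = X F 0 1 := by
  have : (Pi.single 1 1 : Fin 2 → ℕ) = ![0, 1] := by
    ext i
    fin_cases i <;> simp
  rw [this, X]
  simp

lemma ca_one : ca F 0 0 (1 : TruncP F 5 2) = 1 := by
  rw [← X_zero, ca_X F _ _ _ _ (by omega) (by omega)]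
  simp

lemma ca_mul (f g : TruncP F 5 2) : ca F 0 0 (f * g) = ca F 0 0 f * ca F 0 0 g := by
  obtain ⟨f, rfl⟩ := Ideal.Quotient.mk_surjective f
  obtain ⟨g, rfl⟩ := Ideal.Quotient.mk_surjective g
  have : (Finsupp.equivFunOnFinite.symm ![0, 0] : Fin 2 →₀ ℕ) = 0 := by
    ext i
    fin_cases i <;> simp
  rw [← map_mul, ca_mk F (by omega) (by omega), ca_mk F (by omega) (by omega),
    ca_mk F (by omega) (by omega), this]
  have h : (f * g).coeff 0 = f.coeff 0 * g.coeff 0 := by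
    have := map_mul (MvPolynomial.constantCoeff (R := F) (σ := Fin 2)) f g
    simpa [MvPolynomial.constantCoeff_eq] using this
  rw [h]
  simp

/-- A derivation of `A(2)` is determined by its values on the two variables. -/
lemma witt_ext {D E : Witt F 5 2} (h0 : D (X F 1 0) = E (X F 1 0))
    (h1 : D (X F 0 1) = E (X F 0 1)) : D = E := by
  have e : ∀ i : Fin 2, xpow F 5 2 (Pi.single i 1)
      = Ideal.Quotient.mk _ (MvPolynomial.X i) := by
    intro i
    have : (Finsupp.equivFunOnFinite.symm (Pi.single i 1) : Fin 2 →₀ ℕ) = Finsupp.single i 1 := by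
      ext j
      simp [Finsupp.single_apply, Pi.single_apply, eq_comm]
    rw [xpow, this, MvPolynomial.X]
  have h : ∀ i, D (Ideal.Quotient.mk _ (MvPolynomial.X i))
      = E (Ideal.Quotient.mk _ (MvPolynomial.X i)) := by
    intro i
    rw [← e]
    fin_cases i
    · exact (xpow_single0 F).symm ▸ h0
    · exact (xpow_single1 F).symm ▸ h1
  ext f
  obtain ⟨g, rfl⟩ := Ideal.Quotient.mk_surjective f
  induction g using MvPolynomial.induction_on with
  | C a =>
    have : (Ideal.Quotient.mk (truncIdeal F 5 2)) (MvPolynomial.C a)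
        = algebraMap F (TruncP F 5 2) a := rfl
    rw [this, Derivation.map_algebraMap, Derivation.map_algebraMap]
  | add p q hp hq => rw [map_add, map_add, map_add, hp, hq]
  | mul_X p i hp => rw [map_mul, Derivation.leibniz, Derivation.leibniz, hp, h]

lemma Dj_comm (f : TruncP F 5 2) : Dj F 5 2 0 (Dj F 5 2 1 f) = Dj F 5 2 1 (Dj F 5 2 0 f) := by
  refine ca_eq F fun a b => ?_
  rw [ca_D0, ca_D1, ca_D1, ca_D0]

lemma D0x0 : Dj F 5 2 0 (X F 1 0) = 1 := by rw [D0_X_succ F (by omega), X_zero]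
lemma D0x1 : Dj F 5 2 0 (X F 0 1) = 0 := D0_X_zero F 1
lemma D1x0 : Dj F 5 2 1 (X F 1 0) = 0 := D1_X_zero F 1
lemma D1x1 : Dj F 5 2 1 (X F 0 1) = 1 := by rw [D1_X_succ F (by omega), X_zero]

lemma witt_apply (D : Witt F 5 2) (f : TruncP F 5 2) :
    D f = D (X F 1 0) * Dj F 5 2 0 f + D (X F 0 1) * Dj F 5 2 1 f := by
  have : D = D (X F 1 0) • Dj F 5 2 0 + D (X F 0 1) • Dj F 5 2 1 := by
    refine witt_ext F ?_ ?_ <;>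
    simp [D0x0, D0x1, D1x0, D1x1]
  conv_lhs => rw [this]
  simp

end Trunc

end Mlk
namespace Mlk

/-! ### Coordinates on the Melikian algebra -/

section Coord

variable (F : Type*) [Field F] [CharP F 5]

/-- The identity, `∂/∂x₁` and `∂/∂x₂` on `A(2)`, numbered `0`, `1`, `2`. -/
def dd : ℕ → TruncP F 5 2 →ₗ[F] TruncP F 5 2
  | 0 => LinearMap.id
  | 1 => (Dj F 5 2 0).toLinearMap
  | _ => (Dj F 5 2 1).toLinearMap

/-- The five summands of `M` as a free `A(2)`-module with basis `1, D₁, D₂, D̃₁, D̃₂`: the embedding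
of the `k`-th copy of `A(2)`, and `0` for `k ≥ 5`. -/
def mk : ℕ → TruncP F 5 2 →ₗ[F] Mel F
  | 0 => LinearMap.inl F _ _
  | 1 => LinearMap.inr F _ _ ∘ₗ LinearMap.inl F _ _ ∘ₗ
      (LinearMap.toSpanSingleton (TruncP F 5 2) (Witt F 5 2) (Dj F 5 2 0)).restrictScalars F
  | 2 => LinearMap.inr F _ _ ∘ₗ LinearMap.inl F _ _ ∘ₗ
      (LinearMap.toSpanSingleton (TruncP F 5 2) (Witt F 5 2) (Dj F 5 2 1)).restrictScalars F
  | 3 => LinearMap.inr F _ _ ∘ₗ LinearMap.inr F _ _ ∘ₗ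
      (LinearMap.toSpanSingleton (TruncP F 5 2) (Witt F 5 2) (Dj F 5 2 0)).restrictScalars F
  | 4 => LinearMap.inr F _ _ ∘ₗ LinearMap.inr F _ _ ∘ₗ
      (LinearMap.toSpanSingleton (TruncP F 5 2) (Witt F 5 2) (Dj F 5 2 1)).restrictScalars F
  | _ + 5 => 0

/-- Evaluation of a derivation at an element of `A(2)`. -/
def evW (f : TruncP F 5 2) : Witt F 5 2 →ₗ[F] TruncP F 5 2 where
  toFun D := D f
  map_add' _ _ := rfl
  map_smul' _ _ := rfl

/-- The `k`-th `A(2)`-component of an element of `M`, inverse to `mk`; it is `0` for `k ≥ 5`. -/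
def cp : ℕ → Mel F →ₗ[F] TruncP F 5 2
  | 0 => LinearMap.fst F _ _
  | 1 => evW F (X F 1 0) ∘ₗ LinearMap.fst F _ _ ∘ₗ LinearMap.snd F _ _
  | 2 => evW F (X F 0 1) ∘ₗ LinearMap.fst F _ _ ∘ₗ LinearMap.snd F _ _
  | 3 => evW F (X F 1 0) ∘ₗ LinearMap.snd F _ _ ∘ₗ LinearMap.snd F _ _
  | 4 => evW F (X F 0 1) ∘ₗ LinearMap.snd F _ _ ∘ₗ LinearMap.snd F _ _
  | _ + 5 => 0

/-- The basis element of `M` with divided-power exponents `(a, b)` in the `k`-th summand. -/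
def E (k a b : ℕ) : Mel F := mk F k (X F a b)

/-- The coordinate functional dual to `E k a b`. -/
def co (k a b : ℕ) : Mel F →ₗ[F] F := ca F a b ∘ₗ cp F k

lemma mk0 (f) : mk F 0 f = (f, 0, 0) := rfl
lemma mk1 (f) : mk F 1 f = (0, f • Dj F 5 2 0, 0) := rfl
lemma mk2 (f) : mk F 2 f = (0, f • Dj F 5 2 1, 0) := rfl
lemma mk3 (f) : mk F 3 f = (0, 0, f • Dj F 5 2 0) := rfl
lemma mk4 (f) : mk F 4 f = (0, 0, f • Dj F 5 2 1) := rfl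
lemma cp0 (x : Mel F) : cp F 0 x = x.1 := rfl
lemma cp1 (x : Mel F) : cp F 1 x = x.2.1 (X F 1 0) := rfl
lemma cp2 (x : Mel F) : cp F 2 x = x.2.1 (X F 0 1) := rfl
lemma cp3 (x : Mel F) : cp F 3 x = x.2.2 (X F 1 0) := rfl
lemma cp4 (x : Mel F) : cp F 4 x = x.2.2 (X F 0 1) := rfl

lemma mel_ext {x y : Mel F} (h : ∀ k < 5, cp F k x = cp F k y) : x = y := by
  refine Prod.ext (h 0 (by omega)) (Prod.ext ?_ ?_)
  · exact witt_ext F (h 1 (by omega)) (h 2 (by omega))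
  · exact witt_ext F (h 3 (by omega)) (h 4 (by omega))

lemma cp_out (k : ℕ) (x : Mel F) : cp F (k + 5) x = 0 := rfl

lemma dj_x (f : TruncP F 5 2) :
    (f • Dj F 5 2 0) (X F 1 0) = f ∧ (f • Dj F 5 2 0) (X F 0 1) = 0 ∧
    (f • Dj F 5 2 1) (X F 1 0) = 0 ∧ (f • Dj F 5 2 1) (X F 0 1) = f := by
  simp only [Derivation.smul_apply, D0x0, D0x1, D1x0, D1x1, smul_eq_mul, mul_one, mul_zero,
    and_self]

lemma cp_mk (k l : ℕ) (hl : l < 5) (f : TruncP F 5 2) :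
    cp F k (mk F l f) = if k = l then f else 0 :=
  match k, l, hl with
  | 0, 0, _ => rfl
  | 1, 1, _ => (dj_x F f).1
  | 1, 2, _ => (dj_x F f).2.2.1
  | 2, 1, _ => (dj_x F f).2.1
  | 2, 2, _ => (dj_x F f).2.2.2
  | 3, 3, _ => (dj_x F f).1
  | 3, 4, _ => (dj_x F f).2.2.1
  | 4, 3, _ => (dj_x F f).2.1
  | 4, 4, _ => (dj_x F f).2.2.2
  | 0, 1, _ | 0, 2, _ | 0, 3, _ | 0, 4, _ | 1, 0, _ | 1, 3, _ | 1, 4, _ | 2, 0, _ | 2, 3, _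
  | 2, 4, _ | 3, 0, _ | 3, 1, _ | 3, 2, _ | 4, 0, _ | 4, 1, _ | 4, 2, _ => rfl
  | k + 5, l, hl => by rw [if_neg (by omega), cp_out]

lemma co_ext {x : Mel F} (h : ∀ k a b, co F k a b x = 0) : x = 0 := by
  refine mel_ext F fun k _ => ?_
  rw [map_zero]
  exact ca_ext F fun a b => h k a b

lemma co_out {k a b : ℕ} (h : 5 ≤ k ∨ 5 ≤ a ∨ 5 ≤ b) : co F k a b = 0 := by
  rcases h with h | h | h
  · obtain ⟨k, rfl⟩ := Nat.exists_eq_add_of_le' h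
    exact LinearMap.ext fun x => by
      rw [co, LinearMap.comp_apply, cp_out, map_zero, LinearMap.zero_apply]
  · rw [co, ca_out F (Or.inl h), LinearMap.zero_comp]
  · rw [co, ca_out F (Or.inr h), LinearMap.zero_comp]

lemma E_out {k a b : ℕ} (h : 5 ≤ k ∨ 5 ≤ a ∨ 5 ≤ b) : E F k a b = 0 := by
  rcases h with h | h | h
  · obtain ⟨k, rfl⟩ := Nat.exists_eq_add_of_le' h
    rfl
  · rw [E, X_out F (Or.inl h), map_zero]
  · rw [E, X_out F (Or.inr h), map_zero]

lemma co_E (k a b : ℕ) {l c d : ℕ} (hl : l < 5) (hc : c < 5) (hd : d < 5) :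
    co F k a b (E F l c d) = if k = l ∧ a = c ∧ b = d then 1 else 0 := by
  rw [co, LinearMap.comp_apply, E, cp_mk F _ _ hl]
  by_cases h : k = l
  · simp [h, ca_X F a b c d hc hd]
  · simp [h]

/-- The bracket of `M` on the five summands: `[f·v_k, g·v_l]` is the sum of the
`c · (∂_s f)(∂_t g)·v_m` over the entries `(c, s, t, m)` of `brT k l`, with `v` the basis
`1, D₁, D₂, D̃₁, D̃₂` and `∂₀` the identity. -/
def brT : ℕ → ℕ → List (ℕ × ℕ × ℕ × ℕ)
  | 0, 0 => [(2, 2, 0, 3), (3, 0, 2, 3), (2, 0, 1, 4), (3, 1, 0, 4)]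
  | 0, 1 => [(4, 1, 0, 0), (2, 0, 1, 0)]
  | 0, 2 => [(4, 2, 0, 0), (2, 0, 2, 0)]
  | 0, 3 => [(1, 0, 0, 1)]
  | 0, 4 => [(1, 0, 0, 2)]
  | 1, 0 => [(1, 0, 1, 0), (3, 1, 0, 0)]
  | 1, 1 => [(1, 0, 1, 1), (4, 1, 0, 1)]
  | 1, 2 => [(1, 0, 1, 2), (4, 2, 0, 1)]
  | 1, 3 => [(1, 0, 1, 3), (1, 1, 0, 3)]
  | 1, 4 => [(1, 0, 1, 4), (4, 2, 0, 3), (2, 1, 0, 4)]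
  | 2, 0 => [(1, 0, 2, 0), (3, 2, 0, 0)]
  | 2, 1 => [(1, 0, 2, 1), (4, 1, 0, 2)]
  | 2, 2 => [(1, 0, 2, 2), (4, 2, 0, 2)]
  | 2, 3 => [(1, 0, 2, 3), (4, 1, 0, 4), (2, 2, 0, 3)]
  | 2, 4 => [(1, 0, 2, 4), (1, 2, 0, 4)]
  | 3, 0 => [(4, 0, 0, 1)]
  | 3, 1 => [(4, 1, 0, 3), (4, 0, 1, 3)]
  | 3, 2 => [(4, 2, 0, 3), (1, 0, 1, 4), (3, 0, 2, 3)]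
  | 3, 4 => [(1, 0, 0, 0)]
  | 4, 0 => [(4, 0, 0, 2)]
  | 4, 1 => [(4, 1, 0, 4), (1, 0, 2, 3), (3, 0, 1, 4)]
  | 4, 2 => [(4, 2, 0, 4), (4, 0, 2, 4)]
  | 4, 3 => [(4, 0, 0, 0)]
  | _, _ => []

lemma divW_eq (D : Witt F 5 2) :
    divW F 5 2 D = Dj F 5 2 0 (D (X F 1 0)) + Dj F 5 2 1 (D (X F 0 1)) := by
  rw [divW, Fin.sum_univ_two, xpow_single0, xpow_single1]

lemma Mbr_eq (x y : Mel F) (k : ℕ) : cp F k (Mbr F x y) =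
    match k with
    | 0 => cp F 1 x * Dj F 5 2 0 (cp F 0 y) + cp F 2 x * Dj F 5 2 1 (cp F 0 y)
        - 2 * ((Dj F 5 2 0 (cp F 1 x) + Dj F 5 2 1 (cp F 2 x)) * cp F 0 y)
        - (cp F 1 y * Dj F 5 2 0 (cp F 0 x) + cp F 2 y * Dj F 5 2 1 (cp F 0 x)
        - 2 * ((Dj F 5 2 0 (cp F 1 y) + Dj F 5 2 1 (cp F 2 y)) * cp F 0 x))
        + (cp F 3 x * cp F 4 y - cp F 4 x * cp F 3 y)
    | 1 => cp F 1 x * Dj F 5 2 0 (cp F 1 y) + cp F 2 x * Dj F 5 2 1 (cp F 1 y)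
        - (cp F 1 y * Dj F 5 2 0 (cp F 1 x) + cp F 2 y * Dj F 5 2 1 (cp F 1 x))
        + cp F 0 x * cp F 3 y - cp F 0 y * cp F 3 x
    | 2 => cp F 1 x * Dj F 5 2 0 (cp F 2 y) + cp F 2 x * Dj F 5 2 1 (cp F 2 y)
        - (cp F 1 y * Dj F 5 2 0 (cp F 2 x) + cp F 2 y * Dj F 5 2 1 (cp F 2 x))
        + cp F 0 x * cp F 4 y - cp F 0 y * cp F 4 x
    | 3 => (cp F 1 x * Dj F 5 2 0 (cp F 3 y) + cp F 2 x * Dj F 5 2 1 (cp F 3 y)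
        - (cp F 3 y * Dj F 5 2 0 (cp F 1 x) + cp F 4 y * Dj F 5 2 1 (cp F 1 x)))
        + 2 * (Dj F 5 2 0 (cp F 1 x) + Dj F 5 2 1 (cp F 2 x)) * cp F 3 y
        - (cp F 1 y * Dj F 5 2 0 (cp F 3 x) + cp F 2 y * Dj F 5 2 1 (cp F 3 x)
        - (cp F 3 x * Dj F 5 2 0 (cp F 1 y) + cp F 4 x * Dj F 5 2 1 (cp F 1 y)))
        - 2 * (Dj F 5 2 0 (cp F 1 y) + Dj F 5 2 1 (cp F 2 y)) * cp F 3 x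
        + 2 * (cp F 0 y * Dj F 5 2 1 (cp F 0 x) - cp F 0 x * Dj F 5 2 1 (cp F 0 y))
    | 4 => (cp F 1 x * Dj F 5 2 0 (cp F 4 y) + cp F 2 x * Dj F 5 2 1 (cp F 4 y)
        - (cp F 3 y * Dj F 5 2 0 (cp F 2 x) + cp F 4 y * Dj F 5 2 1 (cp F 2 x)))
        + 2 * (Dj F 5 2 0 (cp F 1 x) + Dj F 5 2 1 (cp F 2 x)) * cp F 4 y
        - (cp F 1 y * Dj F 5 2 0 (cp F 4 x) + cp F 2 y * Dj F 5 2 1 (cp F 4 x)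
        - (cp F 3 x * Dj F 5 2 0 (cp F 2 y) + cp F 4 x * Dj F 5 2 1 (cp F 2 y)))
        - 2 * (Dj F 5 2 0 (cp F 1 y) + Dj F 5 2 1 (cp F 2 y)) * cp F 4 x
        + 2 * (cp F 0 x * Dj F 5 2 0 (cp F 0 y) - cp F 0 y * Dj F 5 2 0 (cp F 0 x))
    | _ + 5 => 0 := by
  obtain ⟨f, D, D'⟩ := x
  obtain ⟨g, G, G'⟩ := y
  match k with
  | 0 =>
    simp only [cp0, cp1, cp2, cp3, cp4, Mbr, divW_eq, xpow_single0, xpow_single1]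
    rw [witt_apply F D g, witt_apply F G f]
  | 1 =>
    simp only [cp0, cp1, cp2, cp3, cp4, Mbr, Derivation.add_apply, Derivation.sub_apply,
      Derivation.smul_apply, Derivation.commutator_apply, smul_eq_mul]
    rw [witt_apply F D (G _), witt_apply F G (D _)]
  | 2 =>
    simp only [cp0, cp1, cp2, cp3, cp4, Mbr, Derivation.add_apply, Derivation.sub_apply,
      Derivation.smul_apply, Derivation.commutator_apply, smul_eq_mul]
    rw [witt_apply F D (G _), witt_apply F G (D _)]
  | 3 =>
    simp only [cp0, cp1, cp2, cp3, cp4, Mbr, Derivation.add_apply, Derivation.sub_apply, divW_eq,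
      Derivation.smul_apply, Derivation.commutator_apply, smul_eq_mul, D0x0, D0x1, D1x0, D1x1]
    rw [witt_apply F D (G' _), witt_apply F G' (D _), witt_apply F G (D' _),
      witt_apply F D' (G _)]
    ring
  | 4 =>
    simp only [cp0, cp1, cp2, cp3, cp4, Mbr, Derivation.add_apply, Derivation.sub_apply, divW_eq,
      Derivation.smul_apply, Derivation.commutator_apply, smul_eq_mul, D0x0, D0x1, D1x0, D1x1]
    rw [witt_apply F D (G' _), witt_apply F G' (D _), witt_apply F G (D' _),
      witt_apply F D' (G _)]
    ring
  | k + 5 => rfl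

lemma smulA (c : F) (f : TruncP F 5 2) : c • f = algebraMap F (TruncP F 5 2) c * f :=
  Algebra.smul_def c f

lemma DsmulA (i : Fin 2) (c : F) (f : TruncP F 5 2) :
    Dj F 5 2 i (algebraMap F (TruncP F 5 2) c * f)
      = algebraMap F (TruncP F 5 2) c * Dj F 5 2 i f := by
  rw [← smulA, Derivation.map_smul, smulA]

lemma cp_smul (k : ℕ) (c : F) (x : Mel F) :
    cp F k (c • x) = algebraMap F (TruncP F 5 2) c * cp F k x := by
  rw [map_smul, smulA]

lemma cp_add (k : ℕ) (x y : Mel F) : cp F k (x + y) = cp F k x + cp F k y := map_add _ _ _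

/-- The bracket of `M` as a bilinear map. -/
def Bl : Mel F →ₗ[F] Mel F →ₗ[F] Mel F :=
  LinearMap.mk₂ F (Mbr F)
    (by
      intro x x' y
      refine mel_ext F fun k hk => ?_
      interval_cases k <;> simp only [cp_add, map_add, Mbr_eq] <;> ring)
    (by
      intro c x y
      refine mel_ext F fun k hk => ?_
      interval_cases k <;> simp only [cp_smul, Mbr_eq, DsmulA] <;> ring)
    (by
      intro x y y'
      refine mel_ext F fun k hk => ?_
      interval_cases k <;> simp only [cp_add, map_add, Mbr_eq] <;> ring)
    (by
      intro c x y
      refine mel_ext F fun k hk => ?_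
      interval_cases k <;> simp only [cp_smul, Mbr_eq, DsmulA] <;> ring)

lemma Bl_apply (x y : Mel F) : Bl F x y = Mbr F x y := rfl

lemma cp_zero (k : ℕ) : cp F k 0 = 0 := map_zero _

lemma Bl_self (x : Mel F) : Bl F x x = 0 := by
  refine mel_ext F fun k hk => ?_
  rw [Bl_apply, cp_zero]
  interval_cases k <;> rw [Mbr_eq] <;> dsimp only <;> ring

lemma dd0 (f) : dd F 0 f = f := rfl
lemma dd1 (f) : dd F 1 f = Dj F 5 2 0 f := rfl
lemma dd2 (f) : dd F 2 f = Dj F 5 2 1 f := rfl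

lemma five_A : (5 : TruncP F 5 2) = 0 := by
  have h : (5 : TruncP F 5 2) = algebraMap F (TruncP F 5 2) 5 :=
    (map_ofNat (algebraMap F (TruncP F 5 2)) 5).symm
  rw [h, five_zero, map_zero]

lemma c4 : ((4 : ℕ) : TruncP F 5 2) = -1 := by
  have := five_A F
  push_cast
  linear_combination this

lemma c3 : ((3 : ℕ) : TruncP F 5 2) = -2 := by
  have := five_A F
  push_cast
  linear_combination this

/-- The bracket on the five summands is given by the table. -/
lemma Bl_mk (m k l : ℕ) (f g : TruncP F 5 2) : cp F m (Bl F (mk F k f) (mk F l g)) =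
    ((brT k l).map fun e => (e.1 : TruncP F 5 2) *
      if m = e.2.2.2 then dd F e.2.1 f * dd F e.2.2.1 g else 0).sum := by
  rcases Nat.lt_or_ge k 5 with hk | hk
  · rcases Nat.lt_or_ge l 5 with hl | hl
    · rw [Bl_apply, Mbr_eq]
      rcases Nat.lt_or_ge m 5 with hm | hm
      · interval_cases k <;> interval_cases l <;> interval_cases m <;>
          simp only [brT, dd0, dd1, dd2, cp_mk, List.map_cons, List.map_nil, List.sum_cons,
            List.sum_nil, reduceIte, Nat.reduceEqDiff, Nat.reduceLT, OfNat.ofNat_ne_zero,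
            OfNat.zero_ne_ofNat, OfNat.ofNat_ne_one, OfNat.one_ne_ofNat, one_ne_zero, zero_ne_one,
            mul_zero, zero_mul, map_zero, Nat.cast_one, c3, c4] <;>
          push_cast <;> ring
      · obtain ⟨m, rfl⟩ := Nat.exists_eq_add_of_le' hm
        interval_cases k <;> interval_cases l <;> simp [brT]
    · obtain ⟨l, rfl⟩ := Nat.exists_eq_add_of_le' hl
      have h1 : mk F (l + 5) g = 0 := rfl
      have h2 : brT k (l + 5) = [] := by
        rcases k with _ | _ | _ | _ | _ | k <;> rfl
      rw [h1, h2, map_zero, cp_zero]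
      rfl
  · obtain ⟨k, rfl⟩ := Nat.exists_eq_add_of_le' hk
    have h1 : mk F (k + 5) f = 0 := rfl
    have h2 : brT (k + 5) l = [] := rfl
    rw [h1, h2, map_zero, LinearMap.zero_apply, cp_zero]
    rfl

end Coord

end Mlk
namespace Mlk

/-! ### The Jacobi identity -/

section
variable (F : Type*) [Field F] [CharP F 5]

lemma ten_A : (10 : TruncP F 5 2) = 0 := by
  linear_combination 2 * five_A F

lemma D_two (i : Fin 2) : Dj F 5 2 i 2 = 0 := by
  have h : (2 : TruncP F 5 2) = algebraMap F (TruncP F 5 2) 2 :=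
    (map_ofNat (algebraMap F (TruncP F 5 2)) 2).symm
  rw [h, Derivation.map_algebraMap]

/-- The Jacobi identity in `M`. It is special to characteristic `5`. -/
lemma Bl_jacobi (x y z : Mel F) :
    Bl F x (Bl F y z) + Bl F y (Bl F z x) + Bl F z (Bl F x y) = 0 := by
  refine mel_ext F fun k hk => ?_
  rw [cp_add, cp_add, cp_zero]
  simp only [Bl_apply]
  interval_cases k <;>
    simp only [Mbr_eq, Derivation.leibniz, map_add, map_sub, smul_eq_mul, Dj_comm, D_two,
      mul_zero, add_zero] <;>
    ring_nf <;> simp only [five_A, ten_A, mul_zero, neg_zero, add_zero, sub_zero]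

end

end Mlk
namespace Mlk

/-! ### Structure constants -/

/-- The exponent of `x₁` lowered by `∂_s`. -/
def sx : ℕ → ℕ
  | 1 => 1
  | _ => 0

/-- The exponent of `x₂` lowered by `∂_s`. -/
def sy : ℕ → ℕ
  | 0 => 0
  | 1 => 0
  | _ => 1

/-- The term of `[e_i, e_j]` coming from the entry `t` of the bracket table, as a list with at most
one pair (coefficient, index). Here `e_i` with
`i = 25 k + 5 a + b` stands for `E k a b`. -/
def term (i j : ℕ) (t : ℕ × ℕ × ℕ × ℕ) : List (ℕ × ℕ) :=
  if i / 5 % 5 < sx t.2.1 ∨ i % 5 < sy t.2.1 ∨ j / 5 % 5 < sx t.2.2.1 ∨ j % 5 < sy t.2.2.1 then []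
  else if 5 ≤ i / 5 % 5 - sx t.2.1 + (j / 5 % 5 - sx t.2.2.1) ∨
      5 ≤ i % 5 - sy t.2.1 + (j % 5 - sy t.2.2.1) then []
  else [(t.1 * ((i / 5 % 5 - sx t.2.1 + (j / 5 % 5 - sx t.2.2.1)).choose (i / 5 % 5 - sx t.2.1) *
      (i % 5 - sy t.2.1 + (j % 5 - sy t.2.2.1)).choose (i % 5 - sy t.2.1)),
    25 * t.2.2.2 + 5 * (i / 5 % 5 - sx t.2.1 + (j / 5 % 5 - sx t.2.2.1)) +
      (i % 5 - sy t.2.1 + (j % 5 - sy t.2.2.1)))]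

/-- The bracket `[e_i, e_j]` as a list of pairs (coefficient, index). -/
def brE (i j : ℕ) : List (ℕ × ℕ) := (brT (i / 25) (j / 25)).flatMap (term i j)

/-- The constant term of the `m`-th component of `[e_i, z]` is the sum, over the entries `(c, l, t)`
of this list, of `c` times the constant term of `∂_t` of the `l`-th component of `z`. -/
def evT (m i : ℕ) : List (ℕ × ℕ × ℕ) :=
  [0, 1, 2, 3, 4].flatMap fun l => (brT (i / 25) l).flatMap fun t =>
    if t.2.2.2 = m ∧ i / 5 % 5 = sx t.2.1 ∧ i % 5 = sy t.2.1 then [(t.1, l, t.2.2.1)] else []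

/-- The Melikian algebra in coordinates: a Lie algebra with a basis `E k a b`, `k, a, b ≤ 4`, dual
functionals `co k a b`, and the Melikian structure constants. Here `k` numbers the generators
`1, D₁, D₂, D̃₁, D̃₂`, and `a, b` are the exponents of a divided-power monomial. All the
cohomological arguments use only this data. -/
structure Model (F L : Type*) [Field F] [AddCommGroup L] [Module F L] where
  B : L →ₗ[F] L →ₗ[F] L
  E : ℕ → ℕ → ℕ → L
  co : ℕ → ℕ → ℕ → L →ₗ[F] F
  self : ∀ x, B x x = 0
  jacobi : ∀ x y z, B x (B y z) + B y (B z x) + B z (B x y) = 0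
  co_ext : ∀ {x}, (∀ k a b, k < 5 → a < 5 → b < 5 → co k a b x = 0) → x = 0
  co_out : ∀ {k a b}, (5 ≤ k ∨ 5 ≤ a ∨ 5 ≤ b) → co k a b = 0
  co_E : ∀ k a b {l c d}, l < 5 → c < 5 → d < 5 →
    co k a b (E l c d) = if k = l ∧ a = c ∧ b = d then 1 else 0
  co_d1 : ∀ k a b z, co k a b (B (E 1 0 0) z) = co k (a + 1) b z
  co_d2 : ∀ k a b z, co k a b (B (E 2 0 0) z) = co k a (b + 1) z
  br : ∀ i j, i < 125 → j < 125 →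
    B (E (i / 25) (i / 5 % 5) (i % 5)) (E (j / 25) (j / 5 % 5) (j % 5)) =
      ((brE i j).map fun t => (t.1 : F) • E (t.2 / 25) (t.2 / 5 % 5) (t.2 % 5)).sum
  ev : ∀ m i z, m < 5 → i < 125 → co m 0 0 (B (E (i / 25) (i / 5 % 5) (i % 5)) z) =
    ((evT m i).map fun t => (t.1 : F) * co t.2.1 (sx t.2.2) (sy t.2.2) z).sum

lemma sum_flatMap {α β V : Type*} [AddCommMonoid V] (l : List α) (f : α → List β) (g : β → V) :
    ((l.flatMap f).map g).sum = (l.map fun x => ((f x).map g).sum).sum := by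
  induction l with
  | nil => rfl
  | cons a l ih => simp [List.flatMap_cons, ih]

lemma sum_map {V W : Type*} [AddCommMonoid V] [AddCommMonoid W] {α H : Type*} [FunLike H V W]
    [AddMonoidHomClass H V W] (φ : H) (l : List α) (f : α → V) :
    φ (l.map f).sum = (l.map fun x => φ (f x)).sum := by
  rw [map_list_sum, List.map_map]
  rfl

lemma brT_lt (k l : ℕ) : ∀ t ∈ brT k l, t.2.2.2 < 5 := by
  rcases Nat.lt_or_ge k 5 with hk | hk
  · rcases Nat.lt_or_ge l 5 with hl | hl
    · interval_cases k <;> interval_cases l <;> decide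
    · obtain ⟨l, rfl⟩ := Nat.exists_eq_add_of_le' hl
      have : brT k (l + 5) = [] := by
        rcases k with _ | _ | _ | _ | _ | k <;> rfl
      rw [this]
      simp
  · obtain ⟨k, rfl⟩ := Nat.exists_eq_add_of_le' hk
    have : brT (k + 5) l = [] := rfl
    rw [this]
    simp

section

variable (F : Type*) [Field F] [CharP F 5]

lemma dd_X (s : ℕ) {a b : ℕ} (ha : a < 5) (hb : b < 5) : dd F s (X F a b) =
    if a < sx s ∨ b < sy s then 0 else X F (a - sx s) (b - sy s) := by
  match s with
  | 0 => simp [sx, sy, dd0]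
  | 1 =>
    rcases a with _ | a
    · simp [sx, sy, dd1, D0_X_zero]
    · simp [sx, sy, dd1, D0_X_succ F (by omega : a < 4)]
  | s + 2 =>
    have h1 : sx (s + 2) = 0 := rfl
    have h2 : sy (s + 2) = 1 := rfl
    have h3 : dd F (s + 2) (X F a b) = Dj F 5 2 1 (X F a b) := rfl
    rw [h1, h2, h3]
    rcases b with _ | b
    · simp [D1_X_zero]
    · simp [D1_X_succ F (by omega : b < 4)]

lemma ca_dd (s a b : ℕ) (f : TruncP F 5 2) :
    ca F a b (dd F s f) = ca F (a + sx s) (b + sy s) f := by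
  match s with
  | 0 => rfl
  | 1 => exact ca_D0 F a b f
  | s + 2 => exact ca_D1 F a b f

lemma Mel_br (i j : ℕ) (hi : i < 125) (hj : j < 125) :
    Bl F (E F (i / 25) (i / 5 % 5) (i % 5)) (E F (j / 25) (j / 5 % 5) (j % 5)) =
      ((brE i j).map fun t => (t.1 : F) • E F (t.2 / 25) (t.2 / 5 % 5) (t.2 % 5)).sum := by
  refine mel_ext F fun m _ => ?_
  rw [sum_map (cp F m), E, E, Bl_mk, brE, sum_flatMap]
  congr 1
  refine List.map_congr_left fun t ht => ?_
  have ht5 := brT_lt _ _ t ht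
  rw [dd_X F _ (by omega) (by omega), dd_X F _ (by omega) (by omega), term]
  generalize ha : i / 5 % 5 = a
  generalize hb : i % 5 = b
  generalize hc : j / 5 % 5 = c
  generalize hd : j % 5 = d
  by_cases h1 : a < sx t.2.1 ∨ b < sy t.2.1
  · rw [if_pos h1, zero_mul, ite_self, mul_zero, if_pos (show a < sx t.2.1 ∨ b < sy t.2.1 ∨ c < sx t.2.2.1 ∨ d < sy t.2.2.1 by omega)]
    simp
  by_cases h2 : c < sx t.2.2.1 ∨ d < sy t.2.2.1
  · rw [if_pos h2, mul_zero, ite_self, mul_zero, if_pos (show a < sx t.2.1 ∨ b < sy t.2.1 ∨ c < sx t.2.2.1 ∨ d < sy t.2.2.1 by omega)]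
    simp
  rw [if_neg h1, if_neg h2, if_neg (show ¬(a < sx t.2.1 ∨ b < sy t.2.1 ∨ c < sx t.2.2.1 ∨ d < sy t.2.2.1) by omega), X_mul F (by omega) (by omega) (by omega) (by omega)]
  generalize a - sx t.2.1 = a at *
  generalize b - sy t.2.1 = b at *
  generalize c - sx t.2.2.1 = c at *
  generalize d - sy t.2.2.1 = d at *
  by_cases h3 : 5 ≤ a + c ∨ 5 ≤ b + d
  · rw [if_pos h3, X_out F h3]
    simp
  · rw [if_neg h3]
    have e1 : (25 * t.2.2.2 + 5 * (a + c) + (b + d)) / 25 = t.2.2.2 := by omega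
    have e2 : (25 * t.2.2.2 + 5 * (a + c) + (b + d)) / 5 % 5 = a + c := by omega
    have e3 : (25 * t.2.2.2 + 5 * (a + c) + (b + d)) % 5 = b + d := by omega
    simp only [List.map_cons, List.map_nil, List.sum_cons, List.sum_nil, add_zero]
    rw [e1, e2, e3, E, cp_smul, cp_mk F _ _ ht5, smulA]
    by_cases h4 : m = t.2.2.2
    · rw [if_pos h4, if_pos h4]
      have hc : ((t.1 : ℕ) : TruncP F 5 2) = algebraMap F _ (t.1 : F) := (map_natCast _ _).symm
      rw [hc, Nat.cast_mul, Nat.cast_mul, Nat.cast_mul, map_mul, map_mul, map_mul]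
      ring
    · rw [if_neg h4, if_neg h4, mul_zero, mul_zero]

lemma mel_decomp (z : Mel F) :
    z = (([0, 1, 2, 3, 4] : List ℕ).map fun l => mk F l (cp F l z)).sum := by
  refine mel_ext F fun m hm => ?_
  rw [sum_map (cp F m)]
  simp only [List.map_cons, List.map_nil, List.sum_cons, List.sum_nil]
  rw [cp_mk F _ _ (by omega), cp_mk F _ _ (by omega), cp_mk F _ _ (by omega),
    cp_mk F _ _ (by omega), cp_mk F _ _ (by omega)]
  interval_cases m <;> simp

lemma Mel_ev (m i : ℕ) (z : Mel F) :
    co F m 0 0 (Bl F (E F (i / 25) (i / 5 % 5) (i % 5)) z) =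
    ((evT m i).map fun t => (t.1 : F) * co F t.2.1 (sx t.2.2) (sy t.2.2) z).sum := by
  conv_lhs => rw [mel_decomp F z]
  rw [sum_map (Bl F _), sum_map (co F m 0 0), evT, sum_flatMap]
  congr 1
  refine List.map_congr_left fun l _ => ?_
  rw [sum_flatMap, co, LinearMap.comp_apply, E, Bl_mk, sum_map (ca F 0 0)]
  congr 1
  refine List.map_congr_left fun t _ => ?_
  have hc : ((t.1 : ℕ) : TruncP F 5 2) = algebraMap F _ (t.1 : F) := (map_natCast _ _).symm
  rw [hc, ← smulA, LinearMap.map_smul, smul_eq_mul]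
  by_cases h1 : m = t.2.2.2
  · rw [if_pos h1, ca_mul, ca_dd, ca_dd, ca_X F _ _ _ _ (by omega) (by omega)]
    by_cases h2 : i / 5 % 5 = sx t.2.1 ∧ i % 5 = sy t.2.1
    · rw [if_pos (by omega), if_pos (by omega)]
      simp [co]
    · rw [if_neg (by omega), if_neg (by omega)]
      simp
  · rw [if_neg h1, if_neg (by omega)]
    simp

/-- The coordinates of the Melikian algebra. -/
def melModel : Model F (Mel F) where
  B := Bl F
  E := E F
  co := co F
  self := Bl_self F
  jacobi := Bl_jacobi F
  co_ext := fun {x} h => co_ext F fun k a b => by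
    by_cases hk : k < 5 ∧ a < 5 ∧ b < 5
    · exact h k a b hk.1 hk.2.1 hk.2.2
    · rw [co_out F (by omega), LinearMap.zero_apply]
  co_out := co_out F
  co_E := co_E F
  co_d1 := by
    intro k a b z
    rw [co, co, LinearMap.comp_apply, LinearMap.comp_apply, ← ca_D0, Bl_apply, Mbr_eq, E, X_zero]
    rcases Nat.lt_or_ge k 5 with hk | hk
    · interval_cases k <;> simp [cp_mk]
    · obtain ⟨k, rfl⟩ := Nat.exists_eq_add_of_le' hk
      have h0 : cp F (k + 5) z = 0 := rfl
      rw [h0, Derivation.map_zero]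
  co_d2 := by
    intro k a b z
    rw [co, co, LinearMap.comp_apply, LinearMap.comp_apply, ← ca_D1, Bl_apply, Mbr_eq, E, X_zero]
    rcases Nat.lt_or_ge k 5 with hk | hk
    · interval_cases k <;> simp [cp_mk]
    · obtain ⟨k, rfl⟩ := Nat.exists_eq_add_of_le' hk
      have h0 : cp F (k + 5) z = 0 := rfl
      rw [h0, Derivation.map_zero]
  br := Mel_br F
  ev := fun m i z _ _ => Mel_ev F m i z

end

end Mlk
namespace Mlk

/-! ### Cochains in coordinates -/

section Abs

variable {F L : Type*} [Field F] [AddCommGroup L] [Module F L] (M : Model F L)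

/-- The 2-cocycles of a model. -/
def Coc (ψ : L →ₗ[F] L →ₗ[F] L) : Prop :=
  (∀ x, ψ x x = 0) ∧ ∀ x y z, M.B x (ψ y z) - M.B y (ψ x z) + M.B z (ψ x y)
    - ψ (M.B x y) z + ψ (M.B x z) y - ψ (M.B y z) x = 0

/-- The coboundary of a linear map. -/
def dB (φ : L →ₗ[F] L) : L →ₗ[F] L →ₗ[F] L :=
  M.B.compl₂ φ - (M.B.compl₂ φ).flip - M.B.compr₂ φ

/-- The Lie derivative of a bilinear map along `t`. -/
def Lie (t : L) (ψ : L →ₗ[F] L →ₗ[F] L) : L →ₗ[F] L →ₗ[F] L :=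
  ψ.compr₂ (M.B t) - ψ.comp (M.B t) - ψ.compl₂ (M.B t)

lemma dB_apply (φ : L →ₗ[F] L) (x y : L) :
    dB M φ x y = M.B x (φ y) - M.B y (φ x) - φ (M.B x y) := rfl

lemma Lie_apply (t : L) (ψ : L →ₗ[F] L →ₗ[F] L) (x y : L) :
    Lie M t ψ x y = M.B t (ψ x y) - ψ (M.B t x) y - ψ x (M.B t y) := rfl

variable {M}

lemma alt_neg {ψ : L →ₗ[F] L →ₗ[F] L} (h : ∀ x, ψ x x = 0) (x y : L) : ψ y x = -ψ x y := by
  have := h (x + y)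
  simp only [map_add, LinearMap.add_apply, h, zero_add, add_zero] at this
  exact eq_neg_of_add_eq_zero_left this

lemma Bneg (x y : L) : M.B y x = -M.B x y := alt_neg M.self x y

lemma ad_br (x y z : L) : M.B x (M.B y z) = M.B (M.B x y) z + M.B y (M.B x z) := by
  have := M.jacobi x y z
  rw [Bneg (M.B x y) z, Bneg x z, map_neg] at this
  rw [← sub_eq_zero, ← this]
  abel

lemma dB_add (φ χ : L →ₗ[F] L) : dB M (φ + χ) = dB M φ + dB M χ := by
  ext x y
  simp only [dB_apply, LinearMap.add_apply, map_add]
  abel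

lemma dB_neg (φ : L →ₗ[F] L) : dB M (-φ) = -dB M φ := by
  ext x y
  simp only [dB_apply, LinearMap.neg_apply, map_neg]
  abel

lemma dB_sub (φ χ : L →ₗ[F] L) : dB M (φ - χ) = dB M φ - dB M χ := by
  rw [sub_eq_add_neg, dB_add, dB_neg, sub_eq_add_neg]

lemma dB_ad (w : L) : dB M (M.B w) = 0 := by
  ext x y
  rw [dB_apply, ad_br w x y, Bneg (M.B w x) y, LinearMap.zero_apply, LinearMap.zero_apply]
  abel

lemma coc_dB (φ : L →ₗ[F] L) : Coc M (dB M φ) := by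
  refine ⟨fun x => by simp [dB_apply, M.self], fun x y z => ?_⟩
  simp only [dB_apply, map_sub]
  rw [ad_br x y (φ z), ad_br x z (φ y), ad_br y z (φ x)]
  have j : M.B (M.B x y) z - M.B (M.B x z) y + M.B (M.B y z) x = 0 := by
    rw [Bneg x (M.B y z), ad_br x y z, Bneg y (M.B x z)]
    abel
  have hj := congrArg φ j
  simp only [map_add, map_sub, map_zero] at hj
  rw [← hj]
  abel

lemma Coc.sub {ψ χ : L →ₗ[F] L →ₗ[F] L} (h : Coc M ψ) (h' : Coc M χ) : Coc M (ψ - χ) := by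
  refine ⟨fun x => by simp [h.1, h'.1], fun x y z => ?_⟩
  have h1 := h.2 x y z
  have h2 := h'.2 x y z
  simp only [LinearMap.sub_apply, map_sub]
  rw [← sub_zero (0 : L)]
  nth_rw 1 [← h1]
  rw [← h2]
  abel

lemma Coc.smul {ψ : L →ₗ[F] L →ₗ[F] L} (h : Coc M ψ) (c : F) : Coc M (c • ψ) := by
  refine ⟨fun x => by simp [h.1], fun x y z => ?_⟩
  have h1 := h.2 x y z
  simp only [LinearMap.smul_apply, map_smul]
  rw [← smul_zero c, ← h1]
  module

lemma Lie_coc {ψ : L →ₗ[F] L →ₗ[F] L} (h : Coc M ψ) (t : L) : Lie M t ψ = dB M (ψ t) := by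
  ext x y
  have h1 := h.2 t x y
  rw [Lie_apply, dB_apply, ← sub_eq_zero, ← h1, alt_neg h.1 x (M.B t y),
    alt_neg h.1 t (M.B x y)]
  abel

lemma Lie_dB (t : L) (φ : L →ₗ[F] L) (h : ∀ y, M.B t (φ y) = φ (M.B t y)) :
    Lie M t (dB M φ) = 0 := by
  ext x y
  simp only [Lie_apply, dB_apply, map_sub]
  rw [ad_br t x (φ y), ad_br t y (φ x), h y, h x, h (M.B x y), ad_br t x y, map_add]
  simp only [LinearMap.zero_apply]
  abel

lemma Lie_sub (t : L) (ψ χ : L →ₗ[F] L →ₗ[F] L) :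
    Lie M t (ψ - χ) = Lie M t ψ - Lie M t χ := by
  ext x y
  simp only [Lie_apply, LinearMap.sub_apply, map_sub]
  abel

lemma Lie_comm {s t : L} (h : M.B s t = 0) (ψ : L →ₗ[F] L →ₗ[F] L) :
    Lie M s (Lie M t ψ) = Lie M t (Lie M s ψ) := by
  have h1 : ∀ z, M.B s (M.B t z) = M.B t (M.B s z) := fun z => by
    rw [ad_br s t z, h, map_zero, LinearMap.zero_apply, zero_add]
  ext x y
  simp only [Lie_apply, map_sub, LinearMap.sub_apply, h1]
  abel

/-! ### The basis -/

variable (M)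

/-- The basis vector of index `i = 25 k + 5 a + b`. -/
def ee (i : ℕ) : L := M.E (i / 25) (i / 5 % 5) (i % 5)

/-- The coordinate of index `i`. -/
def cc (i : ℕ) : L →ₗ[F] F := M.co (i / 25) (i / 5 % 5) (i % 5)

variable {M}

lemma exists_index {k a b : ℕ} (hk : k < 5) (ha : a < 5) (hb : b < 5) :
    ∃ i < 125, i / 25 = k ∧ i / 5 % 5 = a ∧ i % 5 = b :=
  ⟨25 * k + 5 * a + b, by omega, by omega, by omega, by omega⟩

lemma cc_ext {x : L} (h : ∀ i < 125, cc M i x = 0) : x = 0 := by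
  refine M.co_ext fun k a b hk ha hb => ?_
  obtain ⟨i, hi, rfl, rfl, rfl⟩ := exists_index hk ha hb
  exact h i hi

lemma cc_ee {i j : ℕ} (hj : j < 125) : cc M i (ee M j) = if i = j then 1 else 0 := by
  rw [cc, ee, M.co_E _ _ _ (by omega) (by omega) (by omega)]
  congr 1
  exact propext ⟨fun h => by omega, fun h => by subst h; simp⟩

lemma decomp (z : L) : z = ∑ i ∈ Finset.range 125, cc M i z • ee M i := by
  rw [← sub_eq_zero]
  refine cc_ext (M := M) fun i hi => ?_
  rw [map_sub, map_sum, Finset.sum_eq_single i]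
  · rw [map_smul, cc_ee hi, if_pos rfl, smul_eq_mul, mul_one, sub_self]
  · intro j hj hij
    rw [map_smul, cc_ee (Finset.mem_range.1 hj), if_neg hij.symm, smul_zero]
  · exact fun h => absurd (Finset.mem_range.2 hi) h

lemma lin_ext {V : Type*} [AddCommGroup V] [Module F V] {f : L →ₗ[F] V}
    (h : ∀ i < 125, f (ee M i) = 0) (z : L) : f z = 0 := by
  rw [decomp (M := M) z, map_sum]
  exact Finset.sum_eq_zero fun i hi => by rw [map_smul, h i (Finset.mem_range.1 hi), smul_zero]

lemma bil_ext {ψ : L →ₗ[F] L →ₗ[F] L}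
    (h : ∀ i < 125, ∀ j < 125, ∀ l < 125, cc M l (ψ (ee M i) (ee M j)) = 0) : ψ = 0 := by
  ext x y
  refine lin_ext (M := M) (f := ψ.flip y) (fun i hi => ?_) x
  exact lin_ext (M := M) (f := ψ (ee M i)) (fun j hj => cc_ext (M := M) (h i hi j hj)) y

/-- A linear map with prescribed coordinates exists. -/
lemma exists_lin (M : Model F L) (f : ℕ → ℕ → ℕ → L →ₗ[F] F) :
    ∃ φ : L →ₗ[F] L, ∀ k a b z, k < 5 → a < 5 → b < 5 → M.co k a b (φ z) = f k a b z := by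
  refine ⟨∑ i ∈ Finset.range 125, (f (i / 25) (i / 5 % 5) (i % 5)).smulRight (ee M i),
    fun k a b z hk ha hb => ?_⟩
  obtain ⟨i, hi, rfl, rfl, rfl⟩ := exists_index hk ha hb
  change cc M i _ = _
  rw [LinearMap.sum_apply, map_sum, Finset.sum_eq_single i]
  · rw [LinearMap.smulRight_apply, map_smul, cc_ee hi, if_pos rfl, smul_eq_mul, mul_one]
  · intro j hj hij
    rw [LinearMap.smulRight_apply, map_smul, cc_ee (Finset.mem_range.1 hj), if_neg hij.symm,
      smul_zero]
  · exact fun h => absurd (Finset.mem_range.2 hi) h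

lemma br_ee {i j : ℕ} (hi : i < 125) (hj : j < 125) : M.B (ee M i) (ee M j) =
    ((brE i j).map fun t => (t.1 : F) • ee M t.2).sum := M.br i j hi hj

lemma d1d2 (z : L) : M.B (M.E 1 0 0) (M.B (M.E 2 0 0) z) =
    M.B (M.E 2 0 0) (M.B (M.E 1 0 0) z) := by
  rw [← sub_eq_zero]
  refine M.co_ext fun k a b _ _ _ => ?_
  rw [map_sub, M.co_d1, M.co_d2, M.co_d2, M.co_d1, sub_self]

end Abs

end Mlk
namespace Mlk

section Weights

variable {F L : Type*} [Field F] [CharP F 5] [AddCommGroup L] [Module F L] {M : Model F L}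

/-! ### The torus and the projection to weight zero -/

/-- The weight of the basis vector of index `i` for `x₁D₁`, up to multiples of 5. -/
def wt1 (i : ℕ) : ℕ := i / 5 % 5 + match i / 25 with
  | 0 => 3
  | 1 => 4
  | 2 => 0
  | 3 => 1
  | _ => 2

/-- The weight of the basis vector of index `i` for `x₂D₂`, up to multiples of 5. -/
def wt2 (i : ℕ) : ℕ := i % 5 + match i / 25 with
  | 0 => 3
  | 1 => 0
  | 2 => 4
  | 3 => 2
  | _ => 1

lemma co_index (k a b : ℕ) (ha : a < 5) (hb : b < 5) : M.co k a b = cc M (25 * k + 5 * a + b) := by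
  rw [cc]
  congr <;> omega

lemma br_d1_t1 : M.B (M.E 1 0 0) (M.E 1 1 0) = M.E 1 0 0 := by
  have h := br_ee (M := M) (i := 25) (j := 30) (by omega) (by omega)
  rw [show brE 25 30 = [(1, 25)] by decide] at h
  simpa [ee] using h

lemma br_d2_t1 : M.B (M.E 2 0 0) (M.E 1 1 0) = 0 := by
  have h := br_ee (M := M) (i := 50) (j := 30) (by omega) (by omega)
  rw [show brE 50 30 = [] by decide] at h
  simpa [ee] using h

lemma br_d1_t2 : M.B (M.E 1 0 0) (M.E 2 0 1) = 0 := by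
  have h := br_ee (M := M) (i := 25) (j := 51) (by omega) (by omega)
  rw [show brE 25 51 = [] by decide] at h
  simpa [ee] using h

lemma br_d2_t2 : M.B (M.E 2 0 0) (M.E 2 0 1) = M.E 2 0 0 := by
  have h := br_ee (M := M) (i := 50) (j := 51) (by omega) (by omega)
  rw [show brE 50 51 = [(1, 50)] by decide] at h
  simpa [ee] using h

lemma br_d1_d2 : M.B (M.E 1 0 0) (M.E 2 0 0) = 0 := by
  have h := br_ee (M := M) (i := 25) (j := 50) (by omega) (by omega)
  rw [show brE 25 50 = [] by decide] at h
  simpa [ee] using h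

lemma br_t1_t2 : M.B (M.E 1 1 0) (M.E 2 0 1) = 0 := by
  have h := br_ee (M := M) (i := 30) (j := 51) (by omega) (by omega)
  rw [show brE 30 51 = [] by decide] at h
  simpa [ee] using h

/-- A diagonal action of an element `t` on the constant terms extends to all coordinates. -/
lemma wt_aux {t : L} {u v : F} (h1 : M.B (M.E 1 0 0) t = u • M.E 1 0 0)
    (h2 : M.B (M.E 2 0 0) t = v • M.E 2 0 0) {k : ℕ} {s : F}
    (h : ∀ z, M.co k 0 0 (M.B t z) = s * M.co k 0 0 z) (a b : ℕ) (z : L) :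
    M.co k a b (M.B t z) = (a * u + b * v + s) * M.co k a b z := by
  induction a generalizing z with
  | zero =>
    induction b generalizing z with
    | zero => simp [h]
    | succ b ih =>
      rw [← M.co_d2, ad_br, h2, map_add, ih, map_smul, LinearMap.smul_apply, map_smul, M.co_d2,
        smul_eq_mul]
      push_cast
      ring
  | succ a ih =>
    rw [← M.co_d1, ad_br, h1, map_add, ih, map_smul, LinearMap.smul_apply, map_smul, M.co_d1,
      smul_eq_mul]
    push_cast
    ring

lemma cc_t1 {i : ℕ} (hi : i < 125) (z : L) :
    cc M i (M.B (M.E 1 1 0) z) = (wt1 i : F) * cc M i z := by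
  have h5 : (5 : F) = 0 := by exact_mod_cast CharP.cast_eq_zero F 5
  have key : ∀ k < 5, ∀ z, M.co k 0 0 (M.B (M.E 1 1 0) z) =
      (wt1 (25 * k) : F) * M.co k 0 0 z := by
    intro k hk z
    have h := M.ev k 30 z hk (by omega)
    norm_num at h
    rw [h]
    interval_cases k
    · rw [show evT 0 30 = [(3, 0, 0)] by decide]; simp [sx, sy, wt1]
    · rw [show evT 1 30 = [(4, 1, 0)] by decide]; simp [sx, sy, wt1]
    · rw [show evT 2 30 = [] by decide]; simp [wt1]
    · rw [show evT 3 30 = [(1, 3, 0)] by decide]; simp [sx, sy, wt1]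
    · rw [show evT 4 30 = [(2, 4, 0)] by decide]; simp [sx, sy, wt1]
  rw [cc, wt_aux (u := 1) (v := 0) (by rw [one_smul, br_d1_t1]) (by rw [zero_smul, br_d2_t1])
    (key _ (by omega))]
  congr 1
  have h1 : wt1 i = i / 5 % 5 + wt1 (25 * (i / 25)) := by
    rw [wt1, wt1, Nat.mul_div_cancel_left _ (by omega)]
    omega
  rw [h1]
  push_cast
  ring

lemma cc_t2 {i : ℕ} (hi : i < 125) (z : L) :
    cc M i (M.B (M.E 2 0 1) z) = (wt2 i : F) * cc M i z := by
  have h5 : (5 : F) = 0 := by exact_mod_cast CharP.cast_eq_zero F 5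
  have key : ∀ k < 5, ∀ z, M.co k 0 0 (M.B (M.E 2 0 1) z) =
      (wt2 (25 * k) : F) * M.co k 0 0 z := by
    intro k hk z
    have h := M.ev k 51 z hk (by omega)
    norm_num at h
    rw [h]
    interval_cases k
    · rw [show evT 0 51 = [(3, 0, 0)] by decide]; simp [sx, sy, wt2]
    · rw [show evT 1 51 = [] by decide]; simp [wt2]
    · rw [show evT 2 51 = [(4, 2, 0)] by decide]; simp [sx, sy, wt2]
    · rw [show evT 3 51 = [(2, 3, 0)] by decide]; simp [sx, sy, wt2]
    · rw [show evT 4 51 = [(1, 4, 0)] by decide]; simp [sx, sy, wt2]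
  rw [cc, wt_aux (u := 0) (v := 1) (by rw [zero_smul, br_d1_t2]) (by rw [one_smul, br_d2_t2])
    (key _ (by omega))]
  congr 1
  have h1 : wt2 i = i % 5 + wt2 (25 * (i / 25)) := by
    rw [wt2, wt2, Nat.mul_div_cancel_left _ (by omega)]
    omega
  rw [h1]
  push_cast
  ring

/-- `w` gives the weights of the basis vectors for `t`. -/
def HasWt (M : Model F L) (t : L) (w : ℕ → ℕ) : Prop :=
  ∀ i < 125, ∀ z, cc M i (M.B t z) = (w i : F) * cc M i z

lemma HasWt.apply_ee {t : L} {w : ℕ → ℕ} (h : HasWt M t w) {i : ℕ} (hi : i < 125) :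
    M.B t (ee M i) = (w i : F) • ee M i := by
  rw [← sub_eq_zero]
  refine cc_ext (M := M) fun j hj => ?_
  rw [map_sub, h j hj, map_smul, cc_ee hi]
  split_ifs with hij
  · subst hij
    simp
  · simp

lemma HasWt.lie {t : L} {w : ℕ → ℕ} (h : HasWt M t w) (ψ : L →ₗ[F] L →ₗ[F] L) {i j l : ℕ}
    (hi : i < 125) (hj : j < 125) (hl : l < 125) :
    cc M l (Lie M t ψ (ee M i) (ee M j)) =
      ((w l : F) - w i - w j) * cc M l (ψ (ee M i) (ee M j)) := by
  rw [Lie_apply, h.apply_ee hi, h.apply_ee hj, map_sub, map_sub, h l hl]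
  simp only [map_smul, LinearMap.smul_apply, smul_eq_mul]
  ring

lemma natCast_pow_five (n : ℕ) : (n : F) ^ 5 = n := by
  have : Fact (Nat.Prime 5) := ⟨by norm_num⟩
  have h := congrArg (ZMod.castHom (dvd_refl 5) F) (ZMod.pow_card (n : ZMod 5))
  rwa [map_pow, map_natCast] at h

/-- The projection of a cocycle to weight zero. -/
lemma exists_proj {t : L} {w : ℕ → ℕ} (h : HasWt M t w) {ψ : L →ₗ[F] L →ₗ[F] L}
    (hψ : Coc M ψ) : ∃ φ : L →ₗ[F] L, Lie M t (ψ - dB M φ) = 0 ∧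
      (∀ D, (∀ y, ψ D y = 0) → (∃ c : F, M.B t D = c • D) → ∀ y, dB M φ D y = 0) ∧
      (∀ s, M.B s t = 0 → Lie M s ψ = 0 → Lie M s (dB M φ) = 0) := by
  have : Fact (Nat.Prime 5) := ⟨by norm_num⟩
  have hc : ∀ χ, Coc M χ → Coc M (Lie M t χ) := fun χ hχ => by
    rw [Lie_coc hχ]
    exact coc_dB _
  have e : dB M (Lie M t (Lie M t (Lie M t ψ)) t) = Lie M t (Lie M t (Lie M t (Lie M t ψ))) :=
    (Lie_coc (hc _ (hc _ (hc _ hψ))) t).symm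
  refine ⟨Lie M t (Lie M t (Lie M t ψ)) t, ?_, ?_, ?_⟩
  · rw [e]
    refine bil_ext (M := M) fun i hi j hj l hl => ?_
    simp only [Lie_sub, LinearMap.sub_apply, map_sub, h.lie _ hi hj hl]
    have := sub_pow_expChar (p := 5) ((w l : F) - w i) (w j : F)
    rw [sub_pow_expChar (p := 5) (w l : F) (w i), natCast_pow_five, natCast_pow_five,
      natCast_pow_five] at this
    linear_combination (-cc M l (ψ (ee M i) (ee M j))) * this
  · rintro D hD ⟨c, hDc⟩
    have step : ∀ χ : L →ₗ[F] L →ₗ[F] L, (∀ y, χ D y = 0) → ∀ y, Lie M t χ D y = 0 := by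
      intro χ hχ y
      rw [Lie_apply, hDc, hχ, hχ, map_smul, LinearMap.smul_apply, hχ]
      simp
    rw [e]
    exact step _ (step _ (step _ (step _ hD)))
  · intro s hs h0
    rw [e, Lie_comm hs, Lie_comm hs, Lie_comm hs, Lie_comm hs, h0]
    have : Lie M t 0 = 0 := by
      ext x y
      simp [Lie_apply]
    rw [this, this, this, this]

/-! ### The obstruction operator -/

lemma five_smul {V : Type*} [AddCommGroup V] [Module F V] (v : V) : (5 : F) • v = 0 := by
  have h5 : (5 : F) = 0 := by exact_mod_cast CharP.cast_eq_zero F 5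
  rw [h5, zero_smul]

/-- In characteristic 5 the fifth power of a derivation is a derivation. -/
lemma leib5 {V : Type*} [AddCommGroup V] [Module F V] (β : V → V → V) (Δ : V →ₗ[F] V)
    (h : ∀ u v, Δ (β u v) = β (Δ u) v + β u (Δ v)) (u v : V) :
    Δ (Δ (Δ (Δ (Δ (β u v))))) = β (Δ (Δ (Δ (Δ (Δ u))))) v + β u (Δ (Δ (Δ (Δ (Δ v))))) := by
  simp only [h, map_add]
  have := five_smul (F := F) (β (Δ u) (Δ (Δ (Δ (Δ v)))) +
    (2 : F) • β (Δ (Δ u)) (Δ (Δ (Δ v))) + (2 : F) • β (Δ (Δ (Δ u))) (Δ (Δ v)) +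
    β (Δ (Δ (Δ (Δ u)))) (Δ v))
  rw [← sub_eq_zero, ← this]
  module

/-- The partial sums `∑_{j < a} d^{a-1-j} A d^j`. -/
def TT (d A : L →ₗ[F] L) : ℕ → L →ₗ[F] L
  | 0 => 0
  | a + 1 => TT d A a ∘ₗ d + (d ^ a) ∘ₗ A

lemma TT_five (d A : L →ₗ[F] L) (y : L) : TT d A 5 y = A (d (d (d (d y)))) + d (A (d (d (d y)))) +
    d (d (A (d (d y)))) + d (d (d (A (d y)))) + d (d (d (d (A y)))) := by
  simp only [TT, pow_succ, pow_zero, LinearMap.add_apply, LinearMap.comp_apply,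
    LinearMap.zero_apply, zero_add, Module.End.mul_apply, Module.End.one_apply]

lemma TT_sub (d A A' : L →ₗ[F] L) (a : ℕ) (y : L) :
    TT d (A - A') a y = TT d A a y - TT d A' a y := by
  induction a generalizing y with
  | zero => simp [TT]
  | succ a ih =>
    simp only [TT, LinearMap.add_apply, LinearMap.comp_apply, LinearMap.sub_apply, map_sub, ih]
    abel

lemma TT_kill (d A : L →ₗ[F] L) {y : L} (hd : d y = 0) (hA : A y = 0) (a : ℕ) :
    TT d A a y = 0 := by
  cases a with
  | zero => rfl
  | succ a => simp [TT, hd, hA]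

lemma TT_comm (d A e : L →ₗ[F] L) (hd : ∀ y, e (d y) = d (e y)) (hA : ∀ y, e (A y) = A (e y))
    (a : ℕ) (y : L) : e (TT d A a y) = TT d A a (e y) := by
  have hp : ∀ a y, e ((d ^ a) y) = (d ^ a) (e y) := fun a => by
    induction a with
    | zero => simp
    | succ a ih => intro y; rw [pow_succ, Module.End.mul_apply, Module.End.mul_apply, ih, hd]
  induction a generalizing y with
  | zero => simp [TT]
  | succ a ih => simp only [TT, LinearMap.add_apply, LinearMap.comp_apply, map_add, ih, hd, hp, hA]

/-- If `d⁵ = 0` then the obstruction operator commutes with `d`. -/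
lemma TT_self (d A : L →ₗ[F] L) (h : ∀ y, d (d (d (d (d y)))) = 0) (y : L) :
    d (TT d A 5 y) = TT d A 5 (d y) := by
  simp only [TT_five, map_add, h, map_zero]
  abel

/-- The obstruction operator of a commutator vanishes. -/
lemma TT_commutator (d φ : L →ₗ[F] L) (h : ∀ y, d (d (d (d (d y)))) = 0) (y : L) :
    TT d (d ∘ₗ φ - φ ∘ₗ d) 5 y = 0 := by
  simp only [TT_five, map_sub, LinearMap.sub_apply, LinearMap.comp_apply, h, map_zero]
  abel

/-- The obstruction operator of an inner derivation. -/
lemma TT_ad (x m : L) (y : L) :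
    TT (M.B x) (M.B m) 5 y = M.B (M.B x (M.B x (M.B x (M.B x m)))) y := by
  have hb : ∀ m y, M.B (M.B x m) y = M.B x (M.B m y) - M.B m (M.B x y) := fun m y => by
    rw [ad_br x m y]
    abel
  have := five_smul (F := F) (M.B m (M.B x (M.B x (M.B x (M.B x y)))))
  have h5 := five_smul (F := F) ((M.B x) ((M.B m) ((M.B x) ((M.B x) ((M.B x) y)))) -
    (M.B x) ((M.B x) ((M.B m) ((M.B x) ((M.B x) y)))) +
    (M.B x) ((M.B x) ((M.B x) ((M.B m) ((M.B x) y)))))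
  rw [TT_five]
  simp only [hb, map_sub]
  rw [← sub_eq_zero, ← h5]
  module

/-- The obstruction operator of a cocycle along an element `x` with `(ad x)⁵ = 0` is a
derivation. It is the fifth power of the derivation `(z, m) ↦ ([x, z], [x, m] + ψ(x, z))` of the
extension of `L` by `L` given by `ψ`. -/
lemma TT_der {ψ : L →ₗ[F] L →ₗ[F] L} (hψ : Coc M ψ) {x : L}
    (hx : ∀ y, M.B x (M.B x (M.B x (M.B x (M.B x y)))) = 0) (y z : L) :
    TT (M.B x) (ψ x) 5 (M.B y z) =
      M.B (TT (M.B x) (ψ x) 5 y) z + M.B y (TT (M.B x) (ψ x) 5 z) := by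
  let Δ : (L × L) →ₗ[F] (L × L) :=
    ((M.B x).comp (LinearMap.fst F L L)).prod
      ((M.B x).comp (LinearMap.snd F L L) + (ψ x).comp (LinearMap.fst F L L))
  have hΔ : ∀ u, Δ u = (M.B x u.1, M.B x u.2 + ψ x u.1) := fun u => rfl
  let β : L × L → L × L → L × L := fun u v =>
    (M.B u.1 v.1, M.B u.1 v.2 + M.B u.2 v.1 + ψ u.1 v.1)
  have hβ : ∀ u v, β u v = (M.B u.1 v.1, M.B u.1 v.2 + M.B u.2 v.1 + ψ u.1 v.1) := fun u v => rfl
  have hl : ∀ u v, Δ (β u v) = β (Δ u) v + β u (Δ v) := by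
    intro u v
    refine Prod.ext (ad_br x u.1 v.1) ?_
    change M.B x (M.B u.1 v.2 + M.B u.2 v.1 + ψ u.1 v.1) + ψ x (M.B u.1 v.1) =
      (M.B (M.B x u.1) v.2 + M.B (M.B x u.2 + ψ x u.1) v.1 + ψ (M.B x u.1) v.1) +
        (M.B u.1 (M.B x v.2 + ψ x v.1) + M.B u.2 (M.B x v.1) + ψ u.1 (M.B x v.1))
    have h := hψ.2 x u.1 v.1
    rw [Bneg (ψ x u.1) v.1, alt_neg hψ.1 x (M.B u.1 v.1), alt_neg hψ.1 u.1 (M.B x v.1)] at h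
    simp only [map_add, LinearMap.add_apply]
    rw [ad_br x u.1 v.2, ad_br x u.2 v.1, ← sub_eq_zero, ← h]
    abel
  have h := congrArg Prod.snd (leib5 (F := F) β Δ hl (y, 0) (z, 0))
  simp only [hΔ, hβ, map_add, map_zero, zero_add, hx, LinearMap.zero_apply, add_zero,
    Prod.mk_add_mk, Prod.snd_add, LinearMap.add_apply] at h
  simp only [TT_five]
  simp only [map_add, LinearMap.add_apply]
  simp only [← add_assoc] at h ⊢
  rw [← sub_eq_zero] at h ⊢
  rw [← h]
  abel

/-- If the obstruction operator vanishes then `A` is a commutator with `d`. The coordinates `c a i`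
are shifted by `d`. -/
lemma exists_homotopy {ι : Type*} (d A : L →ₗ[F] L) (c : ℕ → ι → L →ₗ[F] F)
    (hc : ∀ a i z, c (a + 1) i z = c a i (d z)) (h5 : ∀ i, c 5 i = 0)
    (hs : ∀ x, (∀ a < 5, ∀ i, c a i x = 0) → x = 0)
    (hA : ∀ y, TT d A 5 y = 0) (φ : L →ₗ[F] L)
    (hφ : ∀ a < 5, ∀ i z, c a i (φ z) = c 0 i (TT d A a z)) (y : L) :
    d (φ y) - φ (d y) = A y := by
  have hp : ∀ a i z, c a i z = c 0 i ((d ^ a) z) := fun a => by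
    induction a with
    | zero => simp
    | succ a ih => intro i z; rw [hc, ih, pow_succ, Module.End.mul_apply]
  rw [← sub_eq_zero]
  refine hs _ fun a ha i => ?_
  rw [map_sub, map_sub, ← hc, hφ a ha, hp a i (A y)]
  have h1 : c (a + 1) i (φ y) = c 0 i (TT d A (a + 1) y) := by
    rcases Nat.lt_or_ge (a + 1) 5 with h | h
    · exact hφ _ h i y
    · obtain rfl : a = 4 := by omega
      rw [h5, hA, map_zero, LinearMap.zero_apply]
  rw [h1]
  simp [TT]

end Weights

end Mlk
namespace Mlk

/-! ### Propagation of zeros through the cocycle equations -/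

/-- The indices of the basis vectors (at most one) occurring in `[D_t, e_y]`. -/
def dsub (t y : ℕ) : List ℕ :=
  bif t == 1 then (bif y / 5 % 5 == 0 then [] else [y - 5])
  else (bif y % 5 == 0 then [] else [y - 1])

/-- The term `c · co k 0 0 (ψ e_y e_z)`, encoded with its arguments in increasing order; the
unknown `co k 0 0 (ψ e_y e_z)` has the code `5 (125 y + z) + k`. The factor `4` stands for `-1`. -/
def ut (c y z k : ℕ) : ℕ × ℕ :=
  bif Nat.blt y z then (c, (y * 125 + z) * 5 + k) else (4 * c, (z * 125 + y) * 5 + k)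

/-- One term of `P`. -/
def Pterm (y z s : ℕ) (e : ℕ × ℕ × ℕ) : List (ℕ × ℕ) :=
  bif e.2.2 == 0 then [ut (s * e.1) y z e.2.1]
  else (dsub e.2.2 y).map (fun y' => ut (s * e.1) y' z e.2.1) ++
    (dsub e.2.2 z).map fun z' => ut (s * e.1) y z' e.2.1

/-- The terms of `s · co k 0 0 [e_x, ψ e_y e_z]`. -/
def P (k x y z s : ℕ) : List (ℕ × ℕ) := (evT k x).flatMap (Pterm y z s)

/-- The terms of `s · co k 0 0 (ψ [e_x, e_y] e_z)`. -/
def Q (k x y z s : ℕ) : List (ℕ × ℕ) := (brE x y).map fun t => ut (s * t.1) t.2 z k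

/-- The `k`-th constant term of the cocycle identity at `e_x, e_y, e_z`. The coefficient `4` stands
for `-1`. -/
def eqC (x y z k : ℕ) : List (ℕ × ℕ) :=
  P k x y z 1 ++ (P k y x z 4 ++ (P k z x y 1 ++ (Q k x y z 4 ++ (Q k x z y 1 ++ Q k y z x 4))))

/-- The unknown of code `c` vanishes for an obvious reason: its weight for `x₁D₁` or for `x₂D₂`
does not fit, the arguments agree, or one of them is `D₁` or `D₂`. The weights of `E k 0 0` are
`k + 3` for `x₁D₁` and, for `x₂D₂`, the digit of `12403` at the place `10 ^ k`, modulo 5. -/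
def zc (c : ℕ) : Bool :=
  !((c % 5 + 3 + 4 * (c / 3125 % 5 + c / 15625 + c / 25 % 5 + c / 125 % 5 + 6)) % 5 == 0) ||
  !((12403 / 10 ^ (c % 5) % 10 + 4 * (c / 625 % 5 + 12403 / 10 ^ (c / 15625) % 10 +
    (c / 5 % 5 + 12403 / 10 ^ (c / 125 % 5) % 10))) % 5 == 0) ||
  c / 625 == c / 5 % 125 || c / 625 == 25 || c / 625 == 50 || c / 5 % 125 == 25 ||
    c / 5 % 125 == 50

/-- If exactly one unknown of a linear relation is not known to vanish and its coefficient is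
nonzero, then its code plus one; otherwise `0`. The set of known zeros is the set of bits of `S`.
The last two arguments are the code plus one of the unknown found so far, or `0`, and the sum of its
coefficients. -/
def scan (S : ℕ) : List (ℕ × ℕ) → ℕ → ℕ → ℕ
  | [], cur, s => bif s % 5 == 0 then 0 else cur
  | t :: l, cur, s =>
    bif t.1 % 5 == 0 || ((S >>> t.2) % 2 == 1 || zc t.2) then scan S l cur s
    else bif cur == 0 then scan S l (t.2 + 1) (s + t.1)
    else bif cur == t.2 + 1 then scan S l cur (s + t.1)
    else 0

/-- Propagation along a list of codes `5 (125 (125 x + y) + z) + k` of equations. The state is one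
less than the set of known zeros, and `0` is returned when an equation does not give a new zero. -/
def runC : List ℕ → ℕ → ℕ
  | [], S => S + 1
  | q :: qs, S =>
    match scan (S + 1) (eqC (q / 78125) (q / 625 % 125) (q / 5 % 125) (q % 5)) 0 0 with
    | 0 => 0
    | n + 1 => match (S + 1) ||| 2 ^ n with
      | 0 => 0
      | m + 1 => runC qs m

/-- All the unknowns with codes from `b` to `b + n - 1` and with arguments in increasing order are
known to vanish. -/
def cover (S b : ℕ) : ℕ → Bool
  | 0 => true
  | n + 1 => (Nat.ble ((b + n) / 5 % 125) ((b + n) / 625) ||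
      ((S >>> (b + n)) % 2 == 1 || zc (b + n))) && cover S b n

/-- All the unknowns with first argument of index less than `n` are known to vanish. -/
def cover2 (S : ℕ) : ℕ → Bool
  | 0 => true
  | n + 1 => cover S (625 * n) 625 && cover2 S n

section

variable {F L : Type*} [Field F] [CharP F 5] [AddCommGroup L] [Module F L] {M : Model F L}

/-- The normalized cocycles: of weight zero for `x₁D₁` and `x₂D₂`, and vanishing if an argument is
`D₁` or `D₂`. -/
structure Nrm (M : Model F L) (ψ : L →ₗ[F] L →ₗ[F] L) : Prop where
  coc : Coc M ψ
  d1 : ∀ y, ψ (M.E 1 0 0) y = 0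
  d2 : ∀ y, ψ (M.E 2 0 0) y = 0
  t1 : Lie M (M.E 1 1 0) ψ = 0
  t2 : Lie M (M.E 2 0 1) ψ = 0

lemma eqv_of_kill {ψ : L →ₗ[F] L →ₗ[F] L} (hψ : Coc M ψ) {D : L} (h : ∀ y, ψ D y = 0) (y z : L) :
    M.B D (ψ y z) = ψ (M.B D y) z + ψ y (M.B D z) := by
  have h0 : ψ D = 0 := LinearMap.ext h
  have h1 := LinearMap.congr_fun₂ (Lie_coc hψ D) y z
  rw [h0, Lie_apply, dB_apply] at h1
  simp only [LinearMap.zero_apply, map_zero, sub_zero] at h1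
  rw [sub_sub, sub_eq_zero] at h1
  exact h1

/-- The value of the unknown of code `c`. -/
def val (M : Model F L) (ψ : L →ₗ[F] L →ₗ[F] L) (c : ℕ) : F :=
  M.co (c % 5) 0 0 (ψ (ee M (c / 625)) (ee M (c / 5 % 125)))

/-- The value of a linear combination of unknowns. -/
def evl (u : ℕ → F) (l : List (ℕ × ℕ)) : F := (l.map fun t => (t.1 : F) * u t.2).sum

lemma evl_append (u : ℕ → F) (l l' : List (ℕ × ℕ)) : evl u (l ++ l') = evl u l + evl u l' := by
  simp [evl]

lemma evl_cons (u : ℕ → F) (t : ℕ × ℕ) (l : List (ℕ × ℕ)) :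
    evl u (t :: l) = t.1 * u t.2 + evl u l := by
  simp [evl]

lemma cast4 : ((4 : ℕ) : F) = -1 := by
  have h : ((5 : ℕ) : F) = 0 := CharP.cast_eq_zero F 5
  push_cast at h ⊢
  linear_combination h

lemma ut_val {ψ : L →ₗ[F] L →ₗ[F] L} (h : ∀ x, ψ x x = 0) (c : ℕ) {y z k : ℕ} (hy : y < 125)
    (hz : z < 125) (hk : k < 5) : ((ut c y z k).1 : F) * val M ψ (ut c y z k).2 =
      c * M.co k 0 0 (ψ (ee M y) (ee M z)) := by
  have e : ∀ a b, a < 125 → b < 125 →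
      val M ψ ((a * 125 + b) * 5 + k) = M.co k 0 0 (ψ (ee M a) (ee M b)) := by
    intro a b ha hb
    rw [val, show ((a * 125 + b) * 5 + k) % 5 = k by omega,
      show ((a * 125 + b) * 5 + k) / 625 = a by omega,
      show ((a * 125 + b) * 5 + k) / 5 % 125 = b by omega]
  rw [ut]
  cases Nat.blt y z
  · rw [cond_false]
    change ((4 * c : ℕ) : F) * val M ψ ((z * 125 + y) * 5 + k) = _
    rw [e z y hz hy, alt_neg h (ee M y) (ee M z), Nat.cast_mul, cast4, map_neg]
    ring
  · rw [cond_true]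
    change (c : F) * val M ψ ((y * 125 + z) * 5 + k) = _
    rw [e y z hy hz]

lemma dsub_lt {t y : ℕ} (hy : y < 125) : ∀ i ∈ dsub t y, i < 125 := by
  intro i hi
  rw [dsub] at hi
  cases h1 : t == 1 <;> cases h2 : y / 5 % 5 == 0 <;> cases h3 : y % 5 == 0 <;>
    simp [h1, h2, h3] at hi <;> omega

lemma dsub_one {y : ℕ} (hy : y < 125) :
    M.B (M.E 1 0 0) (ee M y) = ((dsub 1 y).map (ee M)).sum := by
  rw [← sub_eq_zero]
  refine M.co_ext fun k a b hk ha hb => ?_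
  rw [map_sub, M.co_d1, ee, M.co_E _ _ _ (by omega) (by omega) (by omega), dsub]
  change _ - M.co k a b (List.map (ee M) (bif y / 5 % 5 == 0 then [] else [y - 5])).sum = 0
  by_cases h : y / 5 % 5 = 0
  · rw [if_neg (by omega)]
    simp [h]
  · have h' : (y / 5 % 5 == 0) = false := by simpa using h
    rw [h', cond_false, List.map_singleton, List.sum_singleton, ee,
      M.co_E _ _ _ (by omega) (by omega) (by omega), sub_eq_zero]
    congr 1
    exact propext (by omega)

lemma dsub_two {t y : ℕ} (ht : t ≠ 1) (hy : y < 125) :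
    M.B (M.E 2 0 0) (ee M y) = ((dsub t y).map (ee M)).sum := by
  rw [← sub_eq_zero]
  refine M.co_ext fun k a b hk ha hb => ?_
  have ht' : (t == 1) = false := by simpa using ht
  rw [map_sub, M.co_d2, ee, M.co_E _ _ _ (by omega) (by omega) (by omega), dsub, ht', cond_false]
  by_cases h : y % 5 = 0
  · rw [if_neg (by omega)]
    simp [h]
  · have h' : (y % 5 == 0) = false := by simpa using h
    rw [h', cond_false, List.map_singleton, List.sum_singleton, ee,
      M.co_E _ _ _ (by omega) (by omega) (by omega), sub_eq_zero]
    congr 1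
    exact propext (by omega)

lemma evT_lt (m i : ℕ) : ∀ e ∈ evT m i, e.2.1 < 5 := by
  intro e he
  simp only [evT, List.mem_flatMap] at he
  obtain ⟨l, hl, t, _, he⟩ := he
  have hl5 : l < 5 := by
    simp only [List.mem_cons, List.not_mem_nil, or_false] at hl
    omega
  split_ifs at he
  · rw [List.mem_singleton] at he
    rw [he]
    exact hl5
  · exact absurd he List.not_mem_nil

lemma brE_lt (i j : ℕ) : ∀ t ∈ brE i j, t.2 < 125 := by
  intro e he
  simp only [brE, List.mem_flatMap] at he
  obtain ⟨t, ht, he⟩ := he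
  have := brT_lt _ _ t ht
  rw [term] at he
  split_ifs at he
  · exact absurd he List.not_mem_nil
  · exact absurd he List.not_mem_nil
  · rw [List.mem_singleton] at he
    rw [he]
    change 25 * t.2.2.2 + _ + _ < 125
    omega

lemma evl_map_left (u : ℕ → F) {ι : Type*} (g : ι → ℕ × ℕ) (l : List ι) :
    evl u (l.map g) = (l.map fun i => ((g i).1 : F) * u (g i).2).sum := by
  rw [evl, List.map_map]
  rfl

lemma Pterm_val {ψ : L →ₗ[F] L →ₗ[F] L} (h : Nrm M ψ) {y z : ℕ} (s : ℕ) (hy : y < 125)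
    (hz : z < 125) (e : ℕ × ℕ × ℕ) (he : e.2.1 < 5) : evl (val M ψ) (Pterm y z s e) =
      s * (e.1 * M.co e.2.1 (sx e.2.2) (sy e.2.2) (ψ (ee M y) (ee M z))) := by
  obtain ⟨c, l, t⟩ := e
  change l < 5 at he
  change evl _ (bif t == 0 then [ut (s * c) y z l] else
    (dsub t y).map (fun y' => ut (s * c) y' z l) ++
    (dsub t z).map fun z' => ut (s * c) y z' l) = s * (c * M.co l (sx t) (sy t) _)
  have key : ∀ D, (∀ y < 125, M.B D (ee M y) = ((dsub t y).map (ee M)).sum) →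
      (∀ y z, M.B D (ψ y z) = ψ (M.B D y) z + ψ y (M.B D z)) →
      evl (val M ψ) ((dsub t y).map (fun y' => ut (s * c) y' z l) ++
        (dsub t z).map fun z' => ut (s * c) y z' l) =
      s * (c * M.co l 0 0 (M.B D (ψ (ee M y) (ee M z)))) := by
    intro D hD hD'
    rw [hD', hD y hy, hD z hz, evl_append, evl_map_left, evl_map_left, map_add,
      sum_map ψ, sum_map (ψ (ee M y)), sum_map (M.co l 0 0)]
    have e1 : ((dsub t y).map fun x => ψ (ee M x)).sum (ee M z) =
        ((dsub t y).map fun x => ψ (ee M x) (ee M z)).sum :=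
      sum_map ((LinearMap.applyₗ (ee M z) : (L →ₗ[F] L) →ₗ[F] L)) _ _
    rw [e1, sum_map (M.co l 0 0), mul_add, mul_add, ← mul_assoc, ← mul_assoc, ← Nat.cast_mul,
      ← List.sum_map_mul_left, ← List.sum_map_mul_left]
    congr 2
    · exact List.map_congr_left fun i hi => ut_val h.coc.1 _ (dsub_lt hy i hi) hz he
    · exact List.map_congr_left fun i hi => ut_val h.coc.1 _ hy (dsub_lt hz i hi) he
  match t with
  | 0 =>
    change evl _ [ut (s * c) y z l] = s * (c * M.co l 0 0 _)
    rw [evl_cons, ut_val h.coc.1 _ hy hz he, Nat.cast_mul]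
    simp [evl, mul_assoc]
  | 1 =>
    have h1 : M.co l (sx 1) (sy 1) (ψ (ee M y) (ee M z)) = _ := (M.co_d1 l 0 0 _).symm
    rw [h1]
    exact key _ (fun y hy => dsub_one hy) (eqv_of_kill h.coc h.d1)
  | t + 2 =>
    have h1 : M.co l (sx (t + 2)) (sy (t + 2)) (ψ (ee M y) (ee M z)) = _ :=
      (M.co_d2 l 0 0 _).symm
    rw [h1]
    exact key _ (fun y hy => dsub_two (by omega) hy) (eqv_of_kill h.coc h.d2)

lemma P_val {ψ : L →ₗ[F] L →ₗ[F] L} (h : Nrm M ψ) {k x y z : ℕ} (s : ℕ) (hk : k < 5)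
    (hx : x < 125) (hy : y < 125) (hz : z < 125) : evl (val M ψ) (P k x y z s) =
      s * M.co k 0 0 (M.B (ee M x) (ψ (ee M y) (ee M z))) := by
  rw [ee, M.ev _ _ _ hk hx, evl, P, sum_flatMap, ← List.sum_map_mul_left]
  congr 1
  exact List.map_congr_left fun e he => Pterm_val h s hy hz e (evT_lt _ _ e he)

lemma Q_val {ψ : L →ₗ[F] L →ₗ[F] L} (h : ∀ x, ψ x x = 0) {k x y z : ℕ} (s : ℕ) (hk : k < 5)
    (hx : x < 125) (hy : y < 125) (hz : z < 125) : evl (val M ψ) (Q k x y z s) =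
      s * M.co k 0 0 (ψ (M.B (ee M x) (ee M y)) (ee M z)) := by
  rw [br_ee hx hy, Q, evl_map_left, sum_map ψ]
  have e1 : ((brE x y).map fun t => ψ ((t.1 : F) • ee M t.2)).sum (ee M z) =
      ((brE x y).map fun t => ψ ((t.1 : F) • ee M t.2) (ee M z)).sum :=
    sum_map ((LinearMap.applyₗ (ee M z) : (L →ₗ[F] L) →ₗ[F] L)) _ _
  rw [e1, sum_map (M.co k 0 0), ← List.sum_map_mul_left]
  congr 1
  refine List.map_congr_left fun t ht => ?_
  rw [ut_val h _ (brE_lt _ _ t ht) hz hk, map_smul, LinearMap.smul_apply, map_smul, smul_eq_mul,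
    Nat.cast_mul, mul_assoc]

/-- For a normalized cocycle the list `eqC` is a relation between the unknowns. -/
lemma eqC_val {ψ : L →ₗ[F] L →ₗ[F] L} (h : Nrm M ψ) {k x y z : ℕ} (hk : k < 5)
    (hx : x < 125) (hy : y < 125) (hz : z < 125) : evl (val M ψ) (eqC x y z k) = 0 := by
  have h0 := congrArg (M.co k 0 0) (h.coc.2 (ee M x) (ee M y) (ee M z))
  rw [map_zero] at h0
  rw [← h0]
  simp only [eqC, evl_append, P_val h _ hk hx hy hz, P_val h _ hk hy hx hz, P_val h _ hk hz hx hy,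
    Q_val h.coc.1 _ hk hx hy hz, Q_val h.coc.1 _ hk hx hz hy, Q_val h.coc.1 _ hk hy hz hx, cast4,
    Nat.cast_one, map_sub, map_add]
  ring

lemma cast_mod_five (a : ℕ) : ((a % 5 : ℕ) : F) = a :=
  ((CharP.cast_eq_iff_mod_eq F 5).2 (by simp))

lemma wt1_mod : ∀ i < 125, (i / 5 % 5 + (i / 25 + 3)) % 5 = wt1 i % 5 := by decide +kernel

lemma wt2_eq : ∀ i < 125, i % 5 + 12403 / 10 ^ (i / 25) % 10 = wt2 i := by decide +kernel

lemma wt_zero {ψ : L →ₗ[F] L →ₗ[F] L} {t : L} {w : ℕ → ℕ} (hw : HasWt M t w)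
    (h : Lie M t ψ = 0) {x y l : ℕ} (hx : x < 125) (hy : y < 125) (hl : l < 125)
    (hn : (w l + 4 * (w x + w y)) % 5 ≠ 0) : cc M l (ψ (ee M x) (ee M y)) = 0 := by
  have h1 := hw.lie ψ hx hy hl
  rw [h, LinearMap.zero_apply, LinearMap.zero_apply, map_zero, eq_comm, mul_eq_zero] at h1
  refine h1.resolve_left fun h2 => hn ?_
  have h3 : ((w l + 4 * (w x + w y) : ℕ) : F) = 0 := by
    rw [Nat.cast_add, Nat.cast_mul, cast4, Nat.cast_add, ← h2]
    ring
  rw [CharP.cast_eq_zero_iff F 5] at h3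
  omega

lemma zc_val {ψ : L →ₗ[F] L →ₗ[F] L} (h : Nrm M ψ) {c : ℕ} (hc : zc c = true)
    (h5 : c < 78125) : val M ψ c = 0 := by
  have e25 : ee M 25 = M.E 1 0 0 := rfl
  have e50 : ee M 50 = M.E 2 0 0 := rfl
  have hk : M.co (c % 5) 0 0 = cc M (25 * (c % 5)) := by
    rw [co_index _ _ _ (by omega) (by omega), Nat.mul_zero, Nat.add_zero]
  simp only [zc, Bool.or_eq_true, Bool.not_eq_true', beq_eq_false_iff_ne, beq_iff_eq] at hc
  rw [val, hk]
  obtain (((((hc | hc) | hc) | hc) | hc) | hc) | hc := hc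
  · refine wt_zero (w := wt1) (fun i hi z => cc_t1 hi z) h.t1 (by omega) (by omega) (by omega) ?_
    have a1 := wt1_mod (25 * (c % 5)) (by omega)
    have a2 := wt1_mod (c / 625) (by omega)
    have a3 := wt1_mod (c / 5 % 125) (by omega)
    rw [show 25 * (c % 5) / 25 = c % 5 by omega, show 25 * (c % 5) / 5 % 5 = 0 by omega] at a1
    rw [show c / 625 / 25 = c / 15625 by omega, show c / 625 / 5 = c / 3125 by omega] at a2
    rw [show c / 5 % 125 / 25 = c / 125 % 5 by omega,
      show c / 5 % 125 / 5 % 5 = c / 25 % 5 by omega] at a3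
    generalize c % 5 = u1 at *
    generalize c / 3125 % 5 = u2 at *
    generalize c / 15625 = u3 at *
    generalize c / 25 % 5 = u4 at *
    generalize c / 125 % 5 = u5 at *
    generalize wt1 (25 * u1) = v1 at *
    generalize wt1 (c / 625) = v2 at *
    generalize wt1 (c / 5 % 125) = v3 at *
    clear e25 e50 hk h h5
    omega
  · refine wt_zero (w := wt2) (fun i hi z => cc_t2 hi z) h.t2 (by omega) (by omega) (by omega) ?_
    rw [← wt2_eq _ (by omega), ← wt2_eq _ (by omega), ← wt2_eq _ (by omega),
      show 25 * (c % 5) / 25 = c % 5 by omega, show 25 * (c % 5) % 5 = 0 by omega,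
      show c / 625 / 25 = c / 15625 by omega, show c / 5 % 125 / 25 = c / 125 % 5 by omega,
      show c / 5 % 125 % 5 = c / 5 % 5 by omega, zero_add]
    exact hc
  · rw [hc, h.coc.1, map_zero]
  · rw [hc, e25, h.d1, map_zero]
  · rw [hc, e50, h.d2, map_zero]
  · rw [hc, alt_neg h.coc.1 (ee M 25), e25, h.d1, neg_zero, map_zero]
  · rw [hc, alt_neg h.coc.1 (ee M 50), e50, h.d2, neg_zero, map_zero]

end

end Mlk
namespace Mlk

/-! ### The certificate for the vanishing of normalized cocycles -/

/-- The codes of the unknowns that are normalized to zero. The first five detect the squaring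
operations, the others the remaining coboundaries. -/
def pivC : List ℕ := [
  12901, 38001, 63016, 49260, 17252, 9906, 63105, 35567, 11030, 9275, 20582, 21076, 25521,
  56773, 60514, 48052, 48651, 7279, 36130, 2403, 22900, 1804, 6638, 2282, 47295, 376, 47375,
  502]

/-- Cocycle equations, in an order in which each of them contains just one unknown that has not
yet been shown to vanish. -/
def certL : List ℕ := [
  18299, 44108, 87323, 95242, 95473, 95494, 95841, 95862, 96020, 96114, 96198, 96219, 96461,
  96482, 96640, 96734, 96839, 96870, 97722, 97974, 98121, 98321, 98699, 99561, 99582, 99623,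
  99834, 99939, 99970, 99981, 100496, 100622, 100822, 101074, 101221, 101799, 102124, 102314,
  102723, 102744, 102934, 102976, 103039, 103070, 103081, 103102, 103596, 103722, 104174, 104321,
  104899, 105224, 106034, 106076, 106139, 106170, 106181, 106202, 106696, 106822, 107274, 107421,
  107746, 108124, 109176, 109270, 109281, 109302, 109364, 116122, 119222, 122322, 127371, 127991,
  128117, 129872, 130471, 131091, 131112, 131217, 131874, 132972, 133571, 134212, 134317, 134354,
  134974, 137417, 137454, 138074, 140517, 140554, 141196, 143676, 144296, 144999, 146859, 148099,
  149959, 150621, 153101, 158955, 159181, 159286, 159307, 161041, 162055, 162112, 162281, 162386,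
  162407, 162475, 165155, 165228, 165354, 165507, 165575, 165611, 168328, 168454, 168606, 168675,
  168711, 168732, 171412, 171428, 171480, 171554, 171664, 171706, 171727, 171775, 171811, 171832,
  174213, 174833, 174938, 176073, 176693, 176745, 176798, 177313, 177933, 178038, 178495, 178616,
  178742, 179173, 179793, 179845, 179898, 180476, 180602, 180975, 181138, 181490, 181595, 181716,
  181842, 182273, 182893, 183123, 183350, 183576, 183702, 184075, 184363, 184695, 184816, 184942,
  185372, 185498, 186045, 186118, 186223, 186244, 186676, 186738, 186802, 186864, 187175, 187463,
  190564, 193727, 194242, 196827, 197342, 199927, 199989, 200373, 200442, 200547, 200615, 203027,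
  204215, 204940, 205455, 205560, 206075, 206180, 206695, 207315, 207420, 207493, 207992, 208040,
  208555, 208612, 208660, 208733, 209175, 209280, 209353, 209868, 209973, 209994, 210520, 210593,
  211092, 211140, 211712, 211728, 211760, 211833, 211854, 212380, 212453, 212968, 213073, 213094,
  213693, 213745, 214365, 214933, 214954, 214985, 215553, 215605, 216120, 216173, 216194, 216740,
  216793, 216845, 217465, 218033, 218054, 218085, 218653, 218705, 219316, 219998, 220545, 220618,
  221176, 221238, 221785, 221858, 222416, 223098, 223119, 223718, 224338, 224359, 224958, 226198,
  226219, 226818, 226870, 227459, 228110, 228741, 229970, 230601, 239975, 240353, 242728, 242854,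
  243075, 244210, 245954, 246175, 248928, 248980, 249054, 249206, 249227, 249275, 249332, 250862,
  251114, 256736, 256862, 258102, 258475, 259610, 259647, 259836, 259962, 260850, 261202, 262936,
  263062, 264302, 265352, 271227, 271600, 272362, 274327, 275462, 278493, 278562, 278624, 278667,
  278735, 282335, 282955, 283008, 285435, 285613, 286055, 286233, 287988, 288114, 288713, 289228,
  289333, 289354, 291088, 291214, 291813, 292433, 292454, 294314, 294860, 294913, 295533, 295554,
  297436, 298676, 300536, 301239, 301859, 304339, 304959, 306861, 308101, 328982, 329234, 334856,
  334982, 335602, 335975, 337730, 337956, 338082, 338350, 338702, 341056, 341182, 341802, 350482,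
  353582, 356613, 356682, 356723, 356744, 356787, 356849, 356855, 366108, 366234, 366728, 366854,
  369208, 369334, 369954, 372434, 373054, 375556, 376176, 378656, 384981, 385601, 408741, 409361,
  425991, 426243, 426611, 426863, 427231, 427483, 427851, 428103, 428471, 428723, 428744, 429112,
  429238, 429732, 429858, 430352, 430478, 430951, 431592, 431718, 431739, 431823, 431850, 433063,
  434818, 434870, 434923, 434950, 435374, 435438, 435490, 435543, 435994, 436058, 436110, 436163,
  436641, 436678, 436730, 436783, 437261, 437350, 437987, 438607, 439227, 439373, 441748, 447496,
  448116, 448736, 449356, 449976, 463122, 463742, 464362, 464982, 465602, 484076, 484150, 484328,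
  506864, 509859, 509995, 512959, 513064, 513579, 513684, 514304, 522348, 522369, 522480, 522989,
  523100, 523609, 524229, 524828, 525475, 528680, 529300, 534985, 535605, 536225, 561576, 584984,
  587979, 663104, 719582, 788707, 794040, 794161, 794182, 794287, 794660, 794781, 794802, 794907,
  795280, 795401, 799341, 799961, 809813, 809939, 819964, 820584, 821204, 822444, 824141, 824761,
  828587, 829207, 829827, 831749, 831860, 834849, 834855, 834960, 835469, 835580, 836089, 836200,
  836709, 837329, 838060, 838680, 839300, 847465, 848085, 848705, 849325, 1110182, 1110434,
  1128703, 1141728, 1189941, 1190561, 1200266, 1206571, 1206823, 1211641, 1212261, 1219187,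
  1219807, 1220427, 1222429, 1238065, 1238685, 1239305, 1239925, 1423639, 1501013, 1519303,
  1532328, 1580541, 1581161, 1584666, 1595421, 1596041, 1596661, 1597423, 1599141, 1599761,
  1609787, 1610407, 1611027, 1662786, 1740906, 1753663, 1784279, 1861779, 1891665, 1892358,
  1897256, 1897382, 1900523, 1903644, 1908604, 1909850, 1922928, 1939279, 2079185, 2079221,
  2079805, 2079862, 2080398, 2080425, 2080482, 2081102, 2084202, 2084822, 2086124, 2087343,
  2087448, 2089224, 2089230, 2146564, 2157961, 2158581, 2159201, 2159368, 2160546, 2161249,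
  2161702, 2162301, 2162363, 2162942, 2164244, 2164349, 2166871, 2167350, 2169246, 2169372,
  2169866, 2169971, 2170549, 2173072, 2174994, 2215899, 2244991, 2247492, 2247986, 2248091,
  2251192, 2251791, 2252411, 2258736, 2325612, 2326232, 2329312, 2329932, 2332412, 2339357,
  2532824, 2719980, 2762818, 2763438, 2764058, 2767846, 2768466, 2782359, 2782495, 2782979,
  2783115, 2783735, 2794895, 2795515, 2796135, 2796755, 2797491, 2798111, 2798731, 2799351,
  2799996, 2884353, 3110580, 3154022, 3172959, 3172990, 3173095, 3173579, 3173610, 3173715,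
  3174335, 3182395, 3183635, 3184255, 3186771, 3188091, 3188711, 3188732, 3189331, 3189352,
  3189951, 3189997, 3190596, 3190617, 3231522, 3563590, 3563601, 3564179, 3565450, 3576772,
  3577392, 3578728, 3579373, 3579952, 3579993, 3580597, 3580613, 3581233, 4128053, 4128673,
  4200492, 4205553, 4206225, 4206793, 4206845, 4209325, 4209945, 4283053, 4283725, 4284277,
  4284965, 4358114, 4361200, 4363060, 4364300, 4434994, 4436854, 4441237, 4514953, 4669953,
  4737986, 4741107, 4746728, 5128586, 5131707, 5132327, 5519186, 5519806, 5520426, 5909151,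
  5909860, 5912996, 5989298, 5989939, 5992398, 5993039, 6072478, 6079944, 6080564, 6083044,
  6306733, 6385578, 6698678, 6707463, 6708083, 7488064, 7566184, 7876195, 7876227, 7876872,
  7955549, 762, 3426, 17139, 1634, 1382, 2254, 16393, 22178, 6778, 6526, 9878, 34704, 98962,
  99214, 101442, 104237, 104857, 105477, 106481, 107826, 129826, 144317, 175947, 179047, 207326,
  129206, 206706, 128586, 219900, 222437, 144937, 223057, 145557, 223677, 146177, 251052, 94812,
  95432, 96052, 172932, 271826, 274926, 278026, 429711, 430331, 432443, 438586, 126106, 204226,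
  126726, 439826, 441066, 441686, 131686, 209806, 442926, 454317, 141837, 219957, 142457, 220577,
  143077, 456177, 456797, 797892, 798512, 799132, 829150, 877252, 799752, 1128630, 353630,
  347430, 350530, 659910, 272410, 269310, 275510, 581790, 194290, 191190, 197390, 503670, 506770,
  738030, 1206761, 191201, 425561, 428661, 194301, 431761, 197401, 588001, 200501, 816161,
  1344800, 1189800, 1188560, 876080, 563600, 486100, 485480, 797960, 799200, 954200, 1266680,
  1579160, 1580400, 1597277, 122402, 44282, 434882, 425477, 428577, 37977, 428682, 38082, 116202,
  431677, 41077, 87829, 41182, 119302, 434777, 44177, 441103, 53603, 444203, 25451, 513002,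
  190975, 581575, 194075, 814075, 844954, 147454, 1204675, 1206677, 1197251, 1595275, 1613029,
  831829, 1657280, 1735400, 2053397, 2078565, 2048584, 126064, 204184, 126684, 204804, 127304,
  516664, 129164, 206664, 128544, 2089267, 2095515, 2131517, 2173015, 128008, 2094895, 2172395,
  17396, 95516, 94896, 95411, 17291, 96031, 17911, 96136, 18016, 96651, 18531, 96756, 18636,
  141774, 64274, 142394, 33642, 173016, 204783, 205403, 251651, 251136, 268002, 329876, 329256,
  360508, 205508, 487251, 564751, 173925, 172685, 173305, 250805, 328925, 2209637, 2241167,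
  2759645, 2767201, 3157801, 3266211, 3266831, 3548401, 4359960, 4175578, 222453, 454953, 456813,
  532453, 454333, 534933, 457433, 535553, 458053, 4734850, 4347350, 441229, 4737950, 4350450,
  5909277, 5909897, 5988054, 6000601, 6079278, 6313701, 7876143, 7954904, 1444, 206769, 2064,
  284889, 2148, 1549, 2169, 2684, 4728, 6588, 838008, 7024, 7644, 7828, 8264, 8884, 9604, 6483,
  9688, 1225508, 9583, 10928, 12788, 14028, 16445, 16692, 16671, 16751, 16797, 17417, 18037,
  18657, 19771, 21631, 22351, 24752, 33022, 34735, 34752, 34961, 34856, 34982, 35602, 37956,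
  41056, 44156, 44902, 45501, 47278, 48606, 49226, 2160478, 49289, 2789, 49804, 49909, 51228,
  51706, 2162958, 2241078, 2163578, 51769, 52389, 4096654, 51149, 128649, 824, 53708, 2763008,
  54328, 12683, 56808, 59908, 450508, 3488, 63009, 64337, 4751794, 5142394, 4752414, 64353,
  65577, 4753034, 68677, 116170, 142400, 173105, 173725, 194154, 203606, 219337, 141217, 63717,
  269258, 297400, 347325, 350425, 353525, 363009, 407980, 437966, 50466, 531760, 191138, 178633,
  219280, 141780, 798633, 906650, 1188529, 1580505, 1613008, 2050297, 2052756, 2059634, 2059750,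
  16729, 2091784, 84839, 797739, 100239, 178359, 100859, 178979, 101479, 875859, 103339, 181459,
  1188339, 1578939, 1657059, 1735179, 87939, 91039, 162959, 166059, 169159, 241079, 244179,
  247279, 806524, 1579044, 1266564, 954084, 641604, 99104, 102204, 105304, 176604, 254104,
  485364, 563484, 797844, 875964, 1032204, 1188444, 1344684, 1422804, 1657164, 1735284, 2081864,
  2082484, 2083104, 2086204, 2089304, 2091164, 2094927, 2142351, 2173026, 2219851, 2250526,
  2172406, 2376601, 2377778, 2378077, 2442137, 2454101, 2767380, 2768551, 2768677, 2769681,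
  2782381, 22141, 100261, 178381, 2797387, 3159277, 3548637, 3549131, 4191126, 4253625, 34898,
  4345401, 441030, 828530, 797929, 516050, 128550, 5909829, 5987928, 814154, 2078576, 2163001,
  2767275, 4346126, 34026, 347378, 408401, 4346703, 2174328, 166143, 190328, 190948, 193428,
  423448, 345328, 347188, 348428, 580928, 269068, 267828, 270928, 735928, 1126528, 159943,
  163043, 184643, 238063, 241163, 244263, 316183, 319283, 322383, 332203, 335303, 338403, 642203,
  251603, 254703, 257803, 260903, 407843, 408463, 174103, 177203, 180303, 183403, 409083, 490303,
  493403, 722803, 1113403, 2158103, 2173708, 2175568, 2177428, 4348048, 4735402, 5125382,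
  2078702, 16477, 1579129, 3172382, 25262, 94702, 412762, 800262, 4113027, 4734887, 5907485,
  5918025, 5923679, 6001179, 6066153, 6069253, 5991133, 5988653, 6078710, 6000590, 6313659,
  6003659, 1077, 1676, 17076, 17328, 17801, 407928, 2056513, 2134633, 2444013, 1781, 1802, 17202,
  33427, 38019, 116139, 94954, 2377179, 2767779, 2767159, 1864, 1244, 2978, 3598, 3641, 425393,
  6657, 16623, 16708, 16456, 94576, 95301, 1056, 16834, 2056755, 519255, 4175400, 17454, 9510,
  2175, 18483, 22162, 407802, 424027, 3662, 30904, 34667, 50424, 50608, 53009, 56771, 12646,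
  59251, 136751, 90766, 126831, 127451, 134891, 135511, 136131, 204951, 168886, 126211, 282451,
  369251, 1221751, 866, 48091, 63733, 84923, 87630, 95553, 1161, 97676, 100282, 100429, 103382,
  103529, 108404, 125591, 126175, 516775, 206775, 128655, 516155, 129275, 519875, 141160, 173053,
  176100, 2053360, 2131480, 2053980, 2056460, 2132100, 2054600, 2450265, 2528385, 22119, 178685,
  2767190, 4096575, 4097195, 4099675, 4253435, 4177175, 4175315, 3157790, 32848, 189278, 191054,
  237775, 253401, 272379, 331604, 340883, 400146, 438691, 128691, 206811, 129311, 207431, 129931,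
  208051, 130551, 441171, 441791, 131791, 209911, 132411, 210531, 133031, 211151, 133651, 443651,
  446751, 516811, 594931, 673051, 753651, 407223, 407308, 3557, 424258, 425445, 113070, 66197,
  6313070, 50571, 437930, 1189128, 1500903, 1813404, 2050985, 2051605, 2052225, 2053434, 2054085,
  2054705, 2055325, 2056534, 2057185, 2057805, 2058425, 2061525, 2063575, 2065970, 2066003,
  32251, 16525, 19252, 47383, 904, 2131533, 2366513, 2377400, 2455278, 2766539, 3578649, 63097,
  47471, 18957, 19556, 32166, 35287, 2131832, 95605, 125486, 47986, 5920505, 94985, 96225,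
  247006, 281852, 47492, 2852, 125612, 126232, 126852, 129332, 203732, 206832, 128712, 207452,
  129952, 438092, 315952, 441812, 131812, 209932, 132432, 210552, 133052, 444912, 134912, 213032,
  135532, 213652, 136152, 446152, 319052, 448012, 138012, 216132, 138632, 516212, 594332, 672452,
  906812, 58652, 61132, 139252, 4266103, 47366, 61752]

/-- The final state of the propagation covers all unknowns. -/
def finC (S : ℕ) : Bool := match S with
  | 0 => false
  | m + 1 => cover2 (m + 1) 125

lemma finC_spec {S : ℕ} (h : finC S = true) : ∃ m, S = m + 1 ∧ cover2 (m + 1) 125 = true := by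
  rcases S with _ | m
  · simp only [finC, Bool.false_eq_true] at h
  · rw [finC] at h
    exact ⟨m, rfl, h⟩

/-- Propagation through `certL`, starting from the pivots, reaches all the unknowns. -/
lemma chk : finC (runC certL ((pivC.foldl (fun S n => S ||| 2 ^ n) 0) - 1)) = true := by
  decide +kernel

section

variable {F L : Type*} [Field F] [CharP F 5] [AddCommGroup L] [Module F L] {M : Model F L}

/-- Every code in the set `S` has value zero. -/
def Valid (u : ℕ → F) (S : ℕ) : Prop := ∀ c, (S >>> c) % 2 = 1 → u c = 0

lemma bit_iff (S c : ℕ) : (S >>> c) % 2 = 1 ↔ S.testBit c = true := by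
  rw [Nat.testBit_eq_decide_div_mod_eq, Nat.shiftRight_eq_div_pow, decide_eq_true_iff]

lemma Valid.insert {u : ℕ → F} {S n : ℕ} (h : Valid u S) (hn : u n = 0) :
    Valid u (S ||| 2 ^ n) := by
  intro c hc
  rw [bit_iff, Nat.testBit_lor, Nat.testBit_two_pow, Bool.or_eq_true, decide_eq_true_iff] at hc
  rcases hc with hc | rfl
  · exact h c ((bit_iff S c).2 hc)
  · exact hn

lemma cast_ne_zero {s : ℕ} (h : s % 5 ≠ 0) : (s : F) ≠ 0 := by
  intro h0
  rw [CharP.cast_eq_zero_iff F 5] at h0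
  omega

/-- Modulo the known zeros a linear relation is a nonzero multiple of the unknown found by `scan`. -/
lemma scan_sound {u : ℕ → F} {S n : ℕ} (hS : Valid u S) (l : List (ℕ × ℕ))
    (hz : ∀ t ∈ l, zc t.2 = true → u t.2 = 0) (cur s : ℕ) (h0 : cur = 0 → s = 0)
    (h : scan S l cur s = n + 1) :
    (cur = 0 ∨ cur = n + 1) ∧ ∃ m : ℕ, m % 5 ≠ 0 ∧ evl u l + s * u n = m * u n := by
  induction l generalizing cur s with
  | nil =>
    by_cases h5 : s % 5 = 0
    · simp [scan, h5] at h
    · have h6 : (s % 5 == 0) = false := by simpa using h5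
      rw [scan, h6, cond_false] at h
      exact ⟨Or.inr h, s, h5, by simp [evl]⟩
  | cons t l ih =>
    have hz' : ∀ t ∈ l, zc t.2 = true → u t.2 = 0 := fun t ht => hz t (List.mem_cons_of_mem _ ht)
    rw [scan] at h
    cases h1 : (t.1 % 5 == 0 || ((S >>> t.2) % 2 == 1 || zc t.2))
    · rw [h1, cond_false] at h
      cases h2 : cur == 0
      · rw [h2, cond_false] at h
        cases h3 : cur == t.2 + 1
        · rw [h3, cond_false] at h
          omega
        · rw [h3, cond_true] at h
          obtain ⟨a, m, hm, e⟩ := ih hz' _ _ (fun h => by simp [h] at h2) h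
          refine ⟨a, m, hm, ?_⟩
          have h3' : t.2 = n := by
            have := beq_iff_eq.1 h3
            have := beq_eq_false_iff_ne.1 h2
            omega
          rw [evl_cons, h3', ← e, Nat.cast_add]
          ring
      · rw [h2, cond_true] at h
        have h2' := beq_iff_eq.1 h2
        obtain ⟨a, m, hm, e⟩ := ih hz' _ _ (fun h => by omega) h
        refine ⟨Or.inl h2', m, hm, ?_⟩
        have h3' : t.2 = n := by omega
        rw [evl_cons, h3', ← e, Nat.cast_add]
        ring
    · rw [h1, cond_true] at h
      obtain ⟨a, m, hm, e⟩ := ih hz' _ _ h0 h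
      refine ⟨a, m, hm, ?_⟩
      have h4 : (t.1 : F) * u t.2 = 0 := by
        simp only [Bool.or_eq_true, beq_iff_eq] at h1
        rcases h1 with h1 | h1 | h1
        · rw [← cast_mod_five, h1, Nat.cast_zero, zero_mul]
        · rw [hS _ h1, mul_zero]
        · rw [hz t List.mem_cons_self h1, mul_zero]
      rw [evl_cons, h4, zero_add, e]

lemma ut_lt (c : ℕ) {y z k : ℕ} (hy : y < 125) (hz : z < 125) (hk : k < 5) :
    (ut c y z k).2 < 78125 := by
  rw [ut]
  cases Nat.blt y z
  · change (z * 125 + y) * 5 + k < _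
    omega
  · change (y * 125 + z) * 5 + k < _
    omega

lemma P_lt {k x y z s : ℕ} (hy : y < 125) (hz : z < 125) : ∀ t ∈ P k x y z s, t.2 < 78125 := by
  intro t ht
  rw [P, List.mem_flatMap] at ht
  obtain ⟨e, he, ht⟩ := ht
  have hk := evT_lt _ _ e he
  rw [Pterm] at ht
  cases h0 : e.2.2 == 0
  · rw [h0, cond_false, List.mem_append, List.mem_map, List.mem_map] at ht
    rcases ht with ⟨i, hi, rfl⟩ | ⟨i, hi, rfl⟩
    · exact ut_lt _ (dsub_lt hy i hi) hz hk
    · exact ut_lt _ hy (dsub_lt hz i hi) hk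
  · rw [h0, cond_true, List.mem_singleton] at ht
    rw [ht]
    exact ut_lt _ hy hz hk

lemma Q_lt {k x y z s : ℕ} (hz : z < 125) (hk : k < 5) : ∀ t ∈ Q k x y z s, t.2 < 78125 := by
  intro t ht
  rw [Q, List.mem_map] at ht
  obtain ⟨e, he, rfl⟩ := ht
  exact ut_lt _ (brE_lt _ _ e he) hz hk

lemma eqC_lt {x y z k : ℕ} (hx : x < 125) (hy : y < 125) (hz : z < 125) (hk : k < 5) :
    ∀ t ∈ eqC x y z k, t.2 < 78125 := by
  intro t ht
  simp only [eqC, List.mem_append] at ht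
  rcases ht with h | h | h | h | h | h
  · exact P_lt hy hz t h
  · exact P_lt hx hz t h
  · exact P_lt hx hy t h
  · exact Q_lt hz hk t h
  · exact Q_lt hy hk t h
  · exact Q_lt hx hk t h

/-- For a normalized cocycle the final state of the propagation consists of zeros if the initial one
does. -/
lemma runC_sound {ψ : L →ₗ[F] L →ₗ[F] L} (h : Nrm M ψ) (l : List ℕ)
    (hl : ∀ q ∈ l, q / 78125 < 125) (S : ℕ)
    (hS : Valid (val M ψ) (S + 1)) : Valid (val M ψ) (runC l S) := by
  have v0 : Valid (val M ψ) 0 := fun c hc => by simp at hc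
  induction l generalizing S with
  | nil => exact hS
  | cons q l ih =>
    rw [runC]
    have hq : q / 78125 < 125 := hl q List.mem_cons_self
    split
    · exact v0
    · next n hn =>
      split
      · exact v0
      · next m hm =>
        refine ih (fun q hq => hl q (List.mem_cons_of_mem _ hq)) m ?_
        change Valid _ m.succ
        rw [← hm]
        refine hS.insert ?_
        obtain ⟨_, a, ha, e⟩ := scan_sound hS _ (fun t ht hz => zc_val h hz
          (eqC_lt hq (Nat.mod_lt _ (by omega)) (Nat.mod_lt _ (by omega)) (Nat.mod_lt _ (by omega))
            t ht)) 0 0 (fun _ => rfl) hn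
        rw [eqC_val h (Nat.mod_lt _ (by omega)) hq (Nat.mod_lt _ (by omega))
          (Nat.mod_lt _ (by omega)), Nat.cast_zero, zero_mul, add_zero, eq_comm, mul_eq_zero] at e
        exact e.resolve_left (cast_ne_zero ha)

lemma cover_sound {u : ℕ → F} {S b : ℕ} (hS : Valid u S) (n : ℕ) (h : cover S b n = true)
    (hz : ∀ c < b + n, zc c = true → u c = 0) (c : ℕ) (hb : b ≤ c) (hn : c < b + n)
    (ho : c / 625 < c / 5 % 125) : u c = 0 := by
  induction n with
  | zero => omega
  | succ n ih =>
    rw [cover, Bool.and_eq_true] at h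
    rcases Nat.lt_or_ge c (b + n) with hc | hc
    · exact ih h.2 (fun c hc => hz c (by omega)) hc
    · obtain rfl : c = b + n := by omega
      have h1 := h.1
      simp only [Bool.or_eq_true, beq_iff_eq, Nat.ble_eq] at h1
      rcases h1 with h1 | h1 | h1
      · omega
      · exact hS _ h1
      · exact hz _ hn h1

lemma cover2_sound {u : ℕ → F} {S : ℕ} (hS : Valid u S) (n : ℕ) (h : cover2 S n = true)
    (hz : ∀ c < 625 * n, zc c = true → u c = 0) (c : ℕ) (hn : c < 625 * n)
    (ho : c / 625 < c / 5 % 125) : u c = 0 := by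
  induction n with
  | zero => omega
  | succ n ih =>
    rw [cover2, Bool.and_eq_true] at h
    rcases Nat.lt_or_ge c (625 * n) with hc | hc
    · exact ih h.2 (fun c hc => hz c (by omega)) hc
    · exact cover_sound hS 625 h.1 (fun c hc => hz c (by omega)) c hc (by omega) ho

/-- An equivariant bilinear map is determined by the constant terms of its values. -/
lemma eqv_ext {ψ : L →ₗ[F] L →ₗ[F] L}
    (h1 : ∀ y z, M.B (M.E 1 0 0) (ψ y z) = ψ (M.B (M.E 1 0 0) y) z + ψ y (M.B (M.E 1 0 0) z))
    (h2 : ∀ y z, M.B (M.E 2 0 0) (ψ y z) = ψ (M.B (M.E 2 0 0) y) z + ψ y (M.B (M.E 2 0 0) z))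
    (h : ∀ k < 5, ∀ y z, M.co k 0 0 (ψ y z) = 0) : ψ = 0 := by
  have key : ∀ a b k, k < 5 → ∀ y z, M.co k a b (ψ y z) = 0 := by
    intro a b
    induction a with
    | zero =>
      induction b with
      | zero => exact h
      | succ b ih =>
        intro k hk y z
        rw [← M.co_d2, h2, map_add, ih k hk, ih k hk, add_zero]
    | succ a ih =>
      intro k hk y z
      rw [← M.co_d1, h1, map_add, ih k hk, ih k hk, add_zero]
  ext y z
  exact M.co_ext fun k a b hk _ _ => key a b k hk y z

/-- A normalized cocycle is zero if it is zero at the pivots. -/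
theorem Nrm.eq_zero {ψ : L →ₗ[F] L →ₗ[F] L} (h : Nrm M ψ)
    (hp : ∀ c ∈ pivC, val M ψ c = 0) : ψ = 0 := by
  have h0 : Valid (val M ψ) (pivC.foldl (fun S n => S ||| 2 ^ n) 0 - 1 + 1) := by
    have h1 : ∀ (l : List ℕ) (S : ℕ), (∀ c ∈ l, val M ψ c = 0) → Valid (val M ψ) S →
        Valid (val M ψ) (l.foldl (fun S n => S ||| 2 ^ n) S) := by
      intro l
      induction l with
      | nil => exact fun S _ hS => hS
      | cons n l ih =>
        exact fun S hl hS => ih _ (fun c hc => hl c (List.mem_cons_of_mem _ hc))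
          (hS.insert (hl n List.mem_cons_self))
    have h2 : pivC.foldl (fun S n => S ||| 2 ^ n) 0 - 1 + 1 =
        pivC.foldl (fun S n => S ||| 2 ^ n) 0 := by decide +kernel
    rw [h2]
    exact h1 _ 0 hp fun c hc => by simp at hc
  have h1 := runC_sound h certL (by decide +kernel) _ h0
  have h2 := chk
  generalize runC certL _ = S at h1 h2
  have h3 : ∀ c < 78125, c / 625 < c / 5 % 125 → val M ψ c = 0 := by
    intro c hc ho
    obtain ⟨m, rfl, h2⟩ := finC_spec h2
    exact cover2_sound h1 125 h2 (fun c hc hz => zc_val h hz (by omega)) c (by omega) ho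
  have h4 : ∀ k < 5, ∀ y < 125, ∀ z < 125, y < z → M.co k 0 0 (ψ (ee M y) (ee M z)) = 0 := by
    intro k hk y hy z hz hyz
    have := h3 ((y * 125 + z) * 5 + k) (by omega) (by omega)
    rwa [val, show ((y * 125 + z) * 5 + k) % 5 = k by omega,
      show ((y * 125 + z) * 5 + k) / 625 = y by omega,
      show ((y * 125 + z) * 5 + k) / 5 % 125 = z by omega] at this
  refine eqv_ext (eqv_of_kill h.coc h.d1) (eqv_of_kill h.coc h.d2) fun k hk y z => ?_
  refine lin_ext (M := M) (f := M.co k 0 0 ∘ₗ ψ.flip z) (fun i hi => ?_) y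
  refine lin_ext (M := M) (f := M.co k 0 0 ∘ₗ ψ (ee M i)) (fun j hj => ?_) z
  change M.co k 0 0 (ψ (ee M i) (ee M j)) = 0
  rcases lt_trichotomy i j with hij | rfl | hij
  · exact h4 k hk i hi j hj hij
  · rw [h.coc.1, map_zero]
  · rw [alt_neg h.coc.1 (ee M j), map_neg, h4 k hk j hj i hi hij, neg_zero]

end

end Mlk
namespace Mlk

/-! ### Equivariant 1-cochains -/

section

/-- The terms of `s · co k 0 0 [e_x, φ e_y]` for an equivariant `φ`; the parameter
`co k 0 0 (φ e_i)` has the code `5 i + k`. -/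
def PT (k x y s : ℕ) : List (ℕ × ℕ) := (evT k x).flatMap fun e =>
  bif e.2.2 == 0 then [(s * e.1, y * 5 + e.2.1)]
  else (dsub e.2.2 y).map fun y' => (s * e.1, y' * 5 + e.2.1)

/-- The value of the coboundary of an equivariant `φ` at the unknown of code `c`, as a linear
combination of parameters. -/
def dterms (c : ℕ) : List (ℕ × ℕ) :=
  PT (c % 5) (c / 625) (c / 5 % 125) 1 ++ (PT (c % 5) (c / 5 % 125) (c / 625) 4 ++
    (brE (c / 625) (c / 5 % 125)).map fun t => (4 * t.1, t.2 * 5 + c % 5))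

/-- A linear combination of parameters without its obviously zero terms. -/
def red : List (ℕ × ℕ) → List (ℕ × ℕ)
  | [] => []
  | t :: l => bif t.1 % 5 == 0 || (t.2 / 5 == 25 || t.2 / 5 == 50) then red l
    else (t.1 % 5, t.2) :: red l

/-- The parameters of weight zero not involving the values at `D₁` and `D₂`. -/
def parL : List ℕ := [0, 36, 57, 98, 119, 172, 188, 209, 240, 293, 314, 345, 356, 378, 424, 430,
  466, 487, 504, 535, 571, 592, 608]

/-- The values of a coboundary at the first five pivots are zero. -/
lemma red_sq : ∀ c ∈ pivC.take 5, red (dterms c) = [] := by decide +kernel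

/-- The values of a coboundary at the last 23 pivots as linear forms in the parameters. They form an
almost diagonal system. -/
lemma red_ph : (pivC.drop 5).map (fun c => red (dterms c)) =
    [[(1, 356)], [(4, 608)], [(1, 592), (2, 592)], [(3, 240)], [(2, 345)],
      [(1, 592), (3, 487), (4, 592)], [(2, 466), (4, 466)], [(3, 571)], [(4, 98)], [(2, 119)],
      [(4, 57)], [(4, 36)], [(2, 209)], [(4, 535), (3, 535)], [(4, 293)], [(4, 430), (3, 430)],
      [(4, 314)], [(4, 188)], [(1, 172)], [(1, 424)], [(1, 378), (1, 0)],
      [(1, 504), (1, 378), (4, 0)], [(1, 504), (1, 0)]] := by decide +kernel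

lemma parL_spec : ∀ i < 125, ∀ k < 5, (wt1 (25 * k) + 4 * wt1 i) % 5 ≠ 0 ∨
    (wt2 (25 * k) + 4 * wt2 i) % 5 ≠ 0 ∨ i = 25 ∨ i = 50 ∨ i * 5 + k ∈ parL := by decide +kernel

lemma parL_spec' : ∀ c ∈ parL, c < 625 ∧ (wt1 (25 * (c % 5)) + 4 * wt1 (c / 5)) % 5 = 0 ∧
    (wt2 (25 * (c % 5)) + 4 * wt2 (c / 5)) % 5 = 0 ∧ c / 5 ≠ 25 ∧ c / 5 ≠ 50 := by decide +kernel

variable {F L : Type*} [Field F] [CharP F 5] [AddCommGroup L] [Module F L] {M : Model F L}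

/-- The linear maps commuting with `ad D₁` and `ad D₂`. -/
structure Equi (M : Model F L) (φ : L →ₗ[F] L) : Prop where
  d1 : ∀ y, M.B (M.E 1 0 0) (φ y) = φ (M.B (M.E 1 0 0) y)
  d2 : ∀ y, M.B (M.E 2 0 0) (φ y) = φ (M.B (M.E 2 0 0) y)

/-- The value of the parameter of code `c`. -/
def pv (M : Model F L) (φ : L →ₗ[F] L) (c : ℕ) : F := M.co (c % 5) 0 0 (φ (ee M (c / 5)))

lemma pv_mk (φ : L →ₗ[F] L) {i k : ℕ} (hk : k < 5) :
    pv M φ (i * 5 + k) = M.co k 0 0 (φ (ee M i)) := by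
  rw [pv, show (i * 5 + k) % 5 = k by omega, show (i * 5 + k) / 5 = i by omega]

lemma PT_val {φ : L →ₗ[F] L} (h : Equi M φ) {k x y : ℕ} (s : ℕ) (hk : k < 5) (hx : x < 125)
    (hy : y < 125) : evl (pv M φ) (PT k x y s) =
      s * M.co k 0 0 (M.B (ee M x) (φ (ee M y))) := by
  rw [ee, M.ev _ _ _ hk hx, evl, PT, sum_flatMap, ← List.sum_map_mul_left]
  congr 1
  refine List.map_congr_left fun e he => ?_
  have hl := evT_lt _ _ e he
  obtain ⟨c, l, t⟩ := e
  change l < 5 at hl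
  change evl (pv M φ) (bif t == 0 then [(s * c, y * 5 + l)] else
    (dsub t y).map fun y' => (s * c, y' * 5 + l)) =
    s * (c * M.co l (sx t) (sy t) (φ (ee M y)))
  have key : ∀ D, M.B D (ee M y) = ((dsub t y).map (ee M)).sum →
      M.B D (φ (ee M y)) = φ (M.B D (ee M y)) →
      evl (pv M φ) ((dsub t y).map fun y' => (s * c, y' * 5 + l)) =
      s * (c * M.co l 0 0 (M.B D (φ (ee M y)))) := by
    intro D hD hD'
    rw [hD', hD, evl_map_left, sum_map φ, sum_map (M.co l 0 0), ← mul_assoc, ← Nat.cast_mul,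
      ← List.sum_map_mul_left]
    congr 1
    refine List.map_congr_left fun i hi => ?_
    change ((s * c : ℕ) : F) * pv M φ (i * 5 + l) = _
    rw [pv_mk φ hl]
  match t with
  | 0 =>
    change evl _ [(s * c, y * 5 + l)] = s * (c * M.co l 0 0 _)
    rw [evl_cons, pv_mk φ hl, Nat.cast_mul]
    simp [evl, mul_assoc]
  | 1 =>
    have h1 : M.co l (sx 1) (sy 1) (φ (ee M y)) = _ := (M.co_d1 l 0 0 _).symm
    rw [h1]
    exact key _ (dsub_one hy) (h.d1 _)
  | t + 2 =>
    have h1 : M.co l (sx (t + 2)) (sy (t + 2)) (φ (ee M y)) = _ := (M.co_d2 l 0 0 _).symm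
    rw [h1]
    exact key _ (dsub_two (by omega) hy) (h.d2 _)

lemma val_dB {φ : L →ₗ[F] L} (h : Equi M φ) {c : ℕ} (hc : c < 78125) :
    val M (dB M φ) c = evl (pv M φ) (dterms c) := by
  have hk : c % 5 < 5 := Nat.mod_lt _ (by omega)
  have hx : c / 625 < 125 := by omega
  have hy : c / 5 % 125 < 125 := Nat.mod_lt _ (by omega)
  have e : evl (pv M φ) ((brE (c / 625) (c / 5 % 125)).map fun t => (4 * t.1, t.2 * 5 + c % 5)) =
      -M.co (c % 5) 0 0 (φ (M.B (ee M (c / 625)) (ee M (c / 5 % 125)))) := by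
    rw [br_ee hx hy, evl_map_left, sum_map φ, sum_map (M.co (c % 5) 0 0), ← neg_one_mul,
      ← cast4, ← List.sum_map_mul_left]
    congr 1
    refine List.map_congr_left fun t _ => ?_
    change ((4 * t.1 : ℕ) : F) * pv M φ (t.2 * 5 + c % 5) = _
    rw [pv_mk φ hk, map_smul, map_smul, smul_eq_mul, Nat.cast_mul, mul_assoc]
  rw [val, dB_apply, dterms, evl_append, evl_append, e, PT_val h _ hk hx hy, PT_val h _ hk hy hx,
    cast4, map_sub, map_sub, Nat.cast_one]
  ring

lemma evl_red {u : ℕ → F} (hu : ∀ c, c / 5 = 25 ∨ c / 5 = 50 → u c = 0) (l : List (ℕ × ℕ)) :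
    evl u l = evl u (red l) := by
  induction l with
  | nil => rfl
  | cons t l ih =>
    rw [red, evl_cons]
    cases h : t.1 % 5 == 0 || (t.2 / 5 == 25 || t.2 / 5 == 50)
    · rw [cond_false, evl_cons, ih, cast_mod_five]
    · rw [cond_true, ih]
      simp only [Bool.or_eq_true, beq_iff_eq] at h
      rcases h with h | h
      · rw [← cast_mod_five, h, Nat.cast_zero, zero_mul, zero_add]
      · rw [hu _ h, mul_zero, zero_add]

/-- The coboundary of an equivariant 1-cochain vanishing at `D₁` and `D₂` cannot be seen at the
pivots of the squaring operations. -/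
lemma val_dB_sq {φ : L →ₗ[F] L} (h : Equi M φ) (h1 : φ (M.E 1 0 0) = 0) (h2 : φ (M.E 2 0 0) = 0)
    {c : ℕ} (hc : c ∈ pivC.take 5) : val M (dB M φ) c = 0 := by
  have hc5 : ∀ c ∈ pivC.take 5, c < 78125 := by decide +kernel
  rw [val_dB h (hc5 c hc), evl_red, red_sq c hc]
  · rfl
  · intro c hc
    rcases hc with hc | hc
    · rw [pv, hc]
      change M.co _ 0 0 (φ (M.E 1 0 0)) = 0
      rw [h1, map_zero]
    · rw [pv, hc]
      change M.co _ 0 0 (φ (M.E 2 0 0)) = 0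
      rw [h2, map_zero]

lemma evl_add (u u' : ℕ → F) (l : List (ℕ × ℕ)) : evl (u + u') l = evl u l + evl u' l := by
  simp only [evl, Pi.add_apply, mul_add, List.sum_map_add]

lemma evl_smul (a : F) (u : ℕ → F) (l : List (ℕ × ℕ)) : evl (a • u) l = a * evl u l := by
  rw [evl, evl, ← List.sum_map_mul_left]
  congr 1
  refine List.map_congr_left fun t _ => ?_
  rw [Pi.smul_apply, smul_eq_mul, mul_left_comm]

/-- The remaining pivots determine the parameters. -/
lemma par_inj {v : ℕ → F} (hu : ∀ c, c / 5 = 25 ∨ c / 5 = 50 → v c = 0)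
    (h : ∀ c ∈ pivC.drop 5, evl v (dterms c) = 0) : ∀ c ∈ parL, v c = 0 := by
  have h1 : ∀ l ∈ (pivC.drop 5).map (fun c => red (dterms c)), evl v l = 0 := by
    intro l hl
    obtain ⟨c, hc, rfl⟩ := List.mem_map.1 hl
    rw [← evl_red hu, h c hc]
  rw [red_ph] at h1
  simp only [List.forall_mem_cons, evl_cons] at h1
  simp only [evl, List.map_nil, List.sum_nil, add_zero, Nat.cast_one, one_mul,
    Nat.cast_ofNat] at h1
  have h5 : (5 : F) = 0 := five_zero F
  obtain ⟨a1, a2, a3, a4, a5, a6, a7, a8, a9, a10, a11, a12, a13, a14, a15, a16, a17, a18, a19,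
    a20, a21, a22, a23, -⟩ := h1
  have b592 : v 592 = 0 := by linear_combination 2 * a3 - v 592 * h5
  have b0 : v 0 = 0 := by linear_combination 2 * (a21 + a23 - a22) + v 0 * h5
  simp only [parL, List.forall_mem_cons]
  refine ⟨b0, ?_, ?_, ?_, ?_, ?_, ?_, ?_, ?_, ?_, ?_, ?_, ?_, ?_, ?_, ?_, ?_, ?_, ?_, ?_, ?_, b592,
    ?_, fun _ h => absurd h List.not_mem_nil⟩
  · linear_combination v 36 * h5 - a12
  · linear_combination v 57 * h5 - a11
  · linear_combination v 98 * h5 - a9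
  · linear_combination 3 * a10 - v 119 * h5
  · linear_combination a19
  · linear_combination v 188 * h5 - a18
  · linear_combination 3 * a13 - v 209 * h5
  · linear_combination 2 * a4 - v 240 * h5
  · linear_combination v 293 * h5 - a15
  · linear_combination v 314 * h5 - a17
  · linear_combination 3 * a5 - v 345 * h5
  · linear_combination a1
  · linear_combination a21 - b0
  · linear_combination a20
  · linear_combination 3 * a16 - 4 * v 430 * h5
  · linear_combination a7 - v 466 * h5
  · linear_combination 2 * a6 - 10 * b592 - v 487 * h5
  · linear_combination a23 - b0
  · linear_combination 3 * a14 - 4 * v 535 * h5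
  · linear_combination 2 * a8 - v 571 * h5
  · linear_combination v 608 * h5 - a2

/-- A family of parameters with given values at the pivots exists. -/
lemma par_surj (g : ℕ → F) : ∃ v : ℕ → F, (∀ c, c ∉ parL → v c = 0) ∧
    ∀ c ∈ pivC.drop 5, evl v (dterms c) = g c := by
  let e : (Fin 23 → F) →ₗ[F] (ℕ → F) :=
    { toFun := fun w c => if h : parL.idxOf c < 23 then w ⟨_, h⟩ else 0
      map_add' := fun w w' => by
        ext c
        by_cases h : parL.idxOf c < 23 <;> simp [h]
      map_smul' := fun a w => by
        ext c
        by_cases h : parL.idxOf c < 23 <;> simp [h] }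
  have he : ∀ w c, e w c = if h : parL.idxOf c < 23 then w ⟨_, h⟩ else 0 := fun _ _ => rfl
  have hout : ∀ w c, c ∉ parL → e w c = 0 := by
    intro w c hc
    rw [he, dif_neg]
    rw [List.idxOf_eq_length_iff.2 hc]
    decide
  let T : (Fin 23 → F) →ₗ[F] (Fin 23 → F) :=
    { toFun := fun w j => evl (e w) (dterms ((pivC.drop 5).getD j 0))
      map_add' := fun w w' => by
        refine funext fun j => ?_
        rw [map_add, evl_add, Pi.add_apply]
      map_smul' := fun a w => by
        refine funext fun j => ?_
        rw [map_smul, evl_smul, Pi.smul_apply, smul_eq_mul, RingHom.id_apply] }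
  have hT : ∀ w j, T w j = evl (e w) (dterms ((pivC.drop 5).getD j 0)) := fun _ _ => rfl
  have hj : ∀ c ∈ pivC.drop 5, ∃ j : Fin 23, (pivC.drop 5).getD j 0 = c := by decide +kernel
  have hinj : Function.Injective T := by
    rw [← LinearMap.ker_eq_bot, LinearMap.ker_eq_bot']
    intro w hw
    have h1 := par_inj (v := e w) (fun c hc => hout w c fun hp => by
      have := (parL_spec' c hp).2.2.2
      omega) (fun c hc => by
        obtain ⟨j, rfl⟩ := hj c hc
        rw [← hT, hw]
        rfl)
    have h2 : ∀ j : Fin 23, ∃ c ∈ parL, parL.idxOf c = j := by decide +kernel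
    ext j
    obtain ⟨c, hc, hcj⟩ := h2 j
    have h3 := h1 c hc
    rw [he, dif_pos (by rw [hcj]; exact j.2)] at h3
    rw [Pi.zero_apply, ← h3]
    congr 1
    exact Fin.ext hcj.symm
  obtain ⟨w, hw⟩ := (LinearMap.injective_iff_surjective.1 hinj) fun j => g ((pivC.drop 5).getD j 0)
  refine ⟨e w, hout w, fun c hc => ?_⟩
  obtain ⟨j, rfl⟩ := hj c hc
  rw [← hT, hw]

/-- An equivariant map is determined by the constant terms of its values. -/
lemma Equi.eq_zero {φ : L →ₗ[F] L} (h : Equi M φ) (h0 : ∀ k < 5, ∀ i < 125,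
    M.co k 0 0 (φ (ee M i)) = 0) : φ = 0 := by
  have h1 : ∀ k < 5, ∀ z, M.co k 0 0 (φ z) = 0 := fun k hk =>
    lin_ext (M := M) (f := M.co k 0 0 ∘ₗ φ) (h0 k hk)
  have key : ∀ a b k, k < 5 → ∀ z, M.co k a b (φ z) = 0 := by
    intro a b
    induction a with
    | zero =>
      induction b with
      | zero => exact h1
      | succ b ih =>
        intro k hk z
        rw [← M.co_d2, h.d2, ih k hk]
    | succ a ih =>
      intro k hk z
      rw [← M.co_d1, h.d1, ih k hk]
  ext z
  exact M.co_ext fun k a b hk _ _ => key a b k hk z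

lemma co_wt {φ : L →ₗ[F] L} {t : L} {w : ℕ → ℕ} (hw : HasWt M t w)
    (h : ∀ y, M.B t (φ y) = φ (M.B t y)) {k i : ℕ} (hk : k < 5) (hi : i < 125)
    (hn : (w (25 * k) + 4 * w i) % 5 ≠ 0) : M.co k 0 0 (φ (ee M i)) = 0 := by
  have hc : M.co k 0 0 = cc M (25 * k) := co_index _ _ _ (by omega) (by omega)
  have h1 := hw (25 * k) (by omega) (φ (ee M i))
  rw [h, hw.apply_ee hi, map_smul, map_smul, smul_eq_mul, ← sub_eq_zero, ← sub_mul,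
    mul_eq_zero] at h1
  rw [hc]
  refine h1.resolve_left fun h2 => hn ?_
  have h3 : ((w (25 * k) + 4 * w i : ℕ) : F) = 0 := by
    rw [Nat.cast_add, Nat.cast_mul, cast4]
    linear_combination -h2
  rw [CharP.cast_eq_zero_iff F 5] at h3
  omega

/-- An equivariant 1-cochain of weight zero which vanishes at `D₁`, `D₂` and whose coboundary
vanishes at the pivots is zero. -/
lemma equi_zero {φ : L →ₗ[F] L} (h : Equi M φ)
    (ht1 : ∀ y, M.B (M.E 1 1 0) (φ y) = φ (M.B (M.E 1 1 0) y))
    (ht2 : ∀ y, M.B (M.E 2 0 1) (φ y) = φ (M.B (M.E 2 0 1) y))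
    (h1 : φ (M.E 1 0 0) = 0) (h2 : φ (M.E 2 0 0) = 0)
    (hd : ∀ c ∈ pivC.drop 5, val M (dB M φ) c = 0) : φ = 0 := by
  have hz : ∀ c, c / 5 = 25 ∨ c / 5 = 50 → pv M φ c = 0 := by
    intro c hc
    rcases hc with hc | hc
    · rw [pv, hc]
      change M.co _ 0 0 (φ (M.E 1 0 0)) = 0
      rw [h1, map_zero]
    · rw [pv, hc]
      change M.co _ 0 0 (φ (M.E 2 0 0)) = 0
      rw [h2, map_zero]
  have hc5 : ∀ c ∈ pivC.drop 5, c < 78125 := by decide +kernel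
  have h3 := par_inj hz fun c hc => by rw [← val_dB h (hc5 c hc), hd c hc]
  refine h.eq_zero fun k hk i hi => ?_
  by_cases w1 : (wt1 (25 * k) + 4 * wt1 i) % 5 = 0
  · by_cases w2 : (wt2 (25 * k) + 4 * wt2 i) % 5 = 0
    · rw [← pv_mk φ hk]
      rcases parL_spec i hi k hk with hi | hi | hi | hi | hi
      · exact absurd w1 hi
      · exact absurd w2 hi
      · exact hz _ (by omega)
      · exact hz _ (by omega)
      · exact h3 _ hi
    · exact co_wt (fun i hi z => cc_t2 hi z) ht2 hk hi w2
  · exact co_wt (fun i hi z => cc_t1 hi z) ht1 hk hi w1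

end

end Mlk
namespace Mlk

section

variable {F L : Type*} [Field F] [CharP F 5] [AddCommGroup L] [Module F L] {M : Model F L}

/-- Equivariant maps of weight zero are given by arbitrary families of parameters. -/
lemma exists_equi (M : Model F L) {v : ℕ → F} (hv : ∀ c, c ∉ parL → v c = 0) :
    ∃ φ : L →ₗ[F] L, Equi M φ ∧ (∀ y, M.B (M.E 1 1 0) (φ y) = φ (M.B (M.E 1 1 0) y)) ∧
      (∀ y, M.B (M.E 2 0 1) (φ y) = φ (M.B (M.E 2 0 1) y)) ∧ φ (M.E 1 0 0) = 0 ∧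
      φ (M.E 2 0 0) = 0 ∧
      ∀ c < 625, pv M φ c = v c := by
  obtain ⟨φ, hφ⟩ := exists_lin M fun k a b =>
    ∑ i ∈ Finset.range 125, v (i * 5 + k) • M.co (i / 25) (i / 5 % 5 + a) (i % 5 + b)
  have key : ∀ k a b z, k < 5 → M.co k a b (φ z) =
      ∑ i ∈ Finset.range 125, v (i * 5 + k) * M.co (i / 25) (i / 5 % 5 + a) (i % 5 + b) z := by
    intro k a b z hk
    by_cases hab : a < 5 ∧ b < 5
    · rw [hφ k a b z hk hab.1 hab.2, LinearMap.sum_apply]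
      rfl
    · rw [M.co_out (by omega), LinearMap.zero_apply]
      refine (Finset.sum_eq_zero fun i _ => ?_).symm
      rw [M.co_out (by omega), LinearMap.zero_apply, mul_zero]
  have hp : ∀ c, v c ≠ 0 → c ∈ parL := fun c hc => by_contra fun h => hc (hv c h)
  have hD : ∀ D : L, (∀ k a b, M.co k a b D ≠ 0 → (k = 1 ∨ k = 2) ∧ a = 0 ∧
      b = 0) → φ D = 0 := by
    intro D hD
    refine M.co_ext fun k a b hk ha hb => ?_
    rw [key _ _ _ _ hk]
    refine Finset.sum_eq_zero fun i hi => ?_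
    by_contra hne
    have h1 := left_ne_zero_of_mul hne
    have h2 := hD _ _ _ (right_ne_zero_of_mul hne)
    have h3 := (parL_spec' _ (hp _ h1)).2.2.2
    have h4 := Finset.mem_range.1 hi
    have h5 : (i * 5 + k) / 5 = i := by omega
    rw [h5] at h3
    have h6 : i / 5 % 5 = 0 := by omega
    have h7 : i % 5 = 0 := by omega
    omega
  have hw : ∀ (t : L) (w : ℕ → ℕ) (α β : ℕ), HasWt M t w →
      (∀ k a b, a < 5 → b < 5 → w (25 * k + 5 * a + b) = a * α + b * β + w (25 * k)) →
      (∀ c ∈ parL, (w (25 * (c % 5)) + 4 * w (c / 5)) % 5 = 0) →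
      ∀ y, M.B t (φ y) = φ (M.B t y) := by
    intro t w α β hw hs hc y
    rw [← sub_eq_zero]
    refine M.co_ext fun k a b hk ha hb => ?_
    rw [map_sub, key _ _ _ _ hk, co_index _ _ _ ha hb, hw _ (by omega), ← co_index _ _ _ ha hb,
      key _ _ _ _ hk, Finset.mul_sum, ← Finset.sum_sub_distrib]
    refine Finset.sum_eq_zero fun i hi => ?_
    have hi' := Finset.mem_range.1 hi
    by_cases hab : i / 5 % 5 + a < 5 ∧ i % 5 + b < 5
    · by_cases h0 : v (i * 5 + k) = 0
      · rw [h0]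
        ring
      · have h1 := hc _ (hp _ h0)
        rw [show (i * 5 + k) % 5 = k by omega, show (i * 5 + k) / 5 = i by omega] at h1
        rw [co_index _ _ _ hab.1 hab.2, hw _ (by omega), hs _ _ _ hab.1 hab.2, hs _ _ _ ha hb]
        have h2 : w i = i / 5 % 5 * α + i % 5 * β + w (25 * (i / 25)) := by
          rw [← hs _ _ _ (by omega) (by omega)]
          congr 1
          omega
        rw [h2] at h1
        have h3 := (CharP.cast_eq_zero_iff F 5 _).2 (Nat.dvd_of_mod_eq_zero h1)
        rw [Nat.cast_add, Nat.cast_mul, cast4] at h3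
        push_cast at h3 ⊢
        linear_combination (v (i * 5 + k) * cc M (25 * (i / 25) + 5 * (i / 5 % 5 + a) +
          (i % 5 + b)) y) * h3
    · rw [M.co_out (by omega), LinearMap.zero_apply, LinearMap.zero_apply]
      ring
  refine ⟨φ, ⟨fun y => ?_, fun y => ?_⟩, ?_, ?_, ?_, ?_, fun c hc => ?_⟩
  · rw [← sub_eq_zero]
    refine M.co_ext fun k a b hk _ _ => ?_
    rw [map_sub, M.co_d1, key _ _ _ _ hk, key _ _ _ _ hk, sub_eq_zero]
    simp only [M.co_d1, add_assoc]
  · rw [← sub_eq_zero]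
    refine M.co_ext fun k a b hk _ _ => ?_
    rw [map_sub, M.co_d2, key _ _ _ _ hk, key _ _ _ _ hk, sub_eq_zero]
    simp only [M.co_d2, add_assoc]
  · refine hw _ wt1 1 0 (fun i hi z => cc_t1 hi z) (fun k a b ha hb => ?_)
      (fun c hc => (parL_spec' c hc).2.1)
    rw [wt1, wt1, show (25 * k + 5 * a + b) / 25 = k by omega,
      show (25 * k + 5 * a + b) / 5 % 5 = a by omega, show 25 * k / 25 = k by omega,
      show 25 * k / 5 % 5 = 0 by omega]
    omega
  · refine hw _ wt2 0 1 (fun i hi z => cc_t2 hi z) (fun k a b ha hb => ?_)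
      (fun c hc => (parL_spec' c hc).2.2.1)
    rw [wt2, wt2, show (25 * k + 5 * a + b) / 25 = k by omega,
      show (25 * k + 5 * a + b) % 5 = b by omega, show 25 * k / 25 = k by omega,
      show 25 * k % 5 = 0 by omega]
    omega
  · refine hD _ fun k a b h => ?_
    rw [M.co_E _ _ _ (by omega) (by omega) (by omega)] at h
    by_contra h'
    exact h (if_neg (by omega))
  · refine hD _ fun k a b h => ?_
    rw [M.co_E _ _ _ (by omega) (by omega) (by omega)] at h
    by_contra h'
    exact h (if_neg (by omega))
  · rw [pv, key _ _ _ _ (Nat.mod_lt _ (by omega)), Finset.sum_eq_single (c / 5)]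
    · rw [ee, M.co_E _ _ _ (by omega) (by omega) (by omega), if_pos (by omega), mul_one,
        show c / 5 * 5 + c % 5 = c by omega]
    · intro i hi hic
      have := Finset.mem_range.1 hi
      rw [ee, M.co_E _ _ _ (by omega) (by omega) (by omega), if_neg (by omega), mul_zero]
    · exact fun h => absurd (Finset.mem_range.2 (by omega)) h

end

end Mlk
namespace Mlk

/-! ### Normalization of cocycles -/

section

variable {F L : Type*} [Field F] [CharP F 5] [AddCommGroup L] [Module F L] {M : Model F L}

lemma t1_d1 : M.B (M.E 1 1 0) (M.E 1 0 0) = -M.E 1 0 0 := by rw [Bneg, br_d1_t1]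
lemma t1_d2 : M.B (M.E 1 1 0) (M.E 2 0 0) = 0 := by rw [Bneg, br_d2_t1, neg_zero]
lemma t2_d1 : M.B (M.E 2 0 1) (M.E 1 0 0) = 0 := by rw [Bneg, br_d1_t2, neg_zero]
lemma t2_d2 : M.B (M.E 2 0 1) (M.E 2 0 0) = -M.E 2 0 0 := by rw [Bneg, br_d2_t2]
lemma d2_d1 : M.B (M.E 2 0 0) (M.E 1 0 0) = 0 := by rw [Bneg, br_d1_d2, neg_zero]

lemma d1_five (y : L) : M.B (M.E 1 0 0) (M.B (M.E 1 0 0) (M.B (M.E 1 0 0) (M.B (M.E 1 0 0)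
    (M.B (M.E 1 0 0) y)))) = 0 := by
  refine M.co_ext fun k a b _ _ _ => ?_
  rw [M.co_d1, M.co_d1, M.co_d1, M.co_d1, M.co_d1, M.co_out (by omega), LinearMap.zero_apply]

lemma d2_five (y : L) : M.B (M.E 2 0 0) (M.B (M.E 2 0 0) (M.B (M.E 2 0 0) (M.B (M.E 2 0 0)
    (M.B (M.E 2 0 0) y)))) = 0 := by
  refine M.co_ext fun k a b _ _ _ => ?_
  rw [M.co_d2, M.co_d2, M.co_d2, M.co_d2, M.co_d2, M.co_out (by omega), LinearMap.zero_apply]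

/-- The projection of a cocycle to weight zero for the whole torus. -/
lemma exists_proj' {ψ : L →ₗ[F] L →ₗ[F] L} (hψ : Coc M ψ) : ∃ φ : L →ₗ[F] L,
    Lie M (M.E 1 1 0) (ψ - dB M φ) = 0 ∧ Lie M (M.E 2 0 1) (ψ - dB M φ) = 0 ∧
    ((∀ y, ψ (M.E 1 0 0) y = 0) → ∀ y, (ψ - dB M φ) (M.E 1 0 0) y = 0) ∧
    ((∀ y, ψ (M.E 2 0 0) y = 0) → ∀ y, (ψ - dB M φ) (M.E 2 0 0) y = 0) := by
  obtain ⟨φ, h1, h2, h3⟩ := exists_proj (M := M) (fun i hi z => cc_t1 hi z) hψ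
  obtain ⟨χ, k1, k2, k3⟩ := exists_proj (M := M) (fun i hi z => cc_t2 hi z) (hψ.sub (coc_dB φ))
  have e : ψ - dB M (φ + χ) = ψ - dB M φ - dB M χ := by rw [dB_add, sub_sub]
  have key : ∀ D, (∃ c : F, M.B (M.E 1 1 0) D = c • D) → (∃ c : F, M.B (M.E 2 0 1) D = c • D) →
      (∀ y, ψ D y = 0) → ∀ y, (ψ - dB M φ - dB M χ) D y = 0 := by
    intro D hD hD' h0
    have h4 : ∀ y, (ψ - dB M φ) D y = 0 := fun y => by
      rw [LinearMap.sub_apply, LinearMap.sub_apply, h0, h2 D h0 hD, sub_zero]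
    intro y
    rw [LinearMap.sub_apply, LinearMap.sub_apply, h4, k2 D h4 hD', sub_zero]
  refine ⟨φ + χ, ?_, ?_, ?_, ?_⟩ <;> rw [e]
  · rw [Lie_sub, h1, k3 _ br_t1_t2 h1, sub_zero]
  · exact k1
  · exact key _ ⟨-1, by rw [t1_d1, neg_one_smul]⟩ ⟨0, by rw [t2_d1, zero_smul]⟩
  · exact key _ ⟨0, by rw [t1_d2, zero_smul]⟩ ⟨-1, by rw [t2_d2, neg_one_smul]⟩

lemma TT_wt (d A e : L →ₗ[F] L) (hd : ∀ y, e (d y) = d (e y) - d y)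
    (hA : ∀ y, e (A y) = A (e y) - A y) (y : L) : e (TT d A 5 y) = TT d A 5 (e y) := by
  have := five_smul (F := F) (TT d A 5 y)
  rw [TT_five] at this
  rw [TT_five, TT_five, ← sub_eq_zero]
  simp only [map_add, map_sub, hd, hA]
  rw [← neg_eq_zero, ← this]
  module

/-- A derivation of weight zero commuting with `ad D₁`, `ad D₂`, and vanishing there, is zero. -/
lemma der_zero {δ : L →ₗ[F] L} (hδ : ∀ y z, δ (M.B y z) = M.B (δ y) z + M.B y (δ z))
    (ht1 : ∀ y, M.B (M.E 1 1 0) (δ y) = δ (M.B (M.E 1 1 0) y))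
    (ht2 : ∀ y, M.B (M.E 2 0 1) (δ y) = δ (M.B (M.E 2 0 1) y))
    (h1 : δ (M.E 1 0 0) = 0) (h2 : δ (M.E 2 0 0) = 0) : δ = 0 := by
  refine equi_zero (M := M) ⟨fun y => ?_, fun y => ?_⟩ ht1 ht2 h1 h2 fun c _ => ?_
  · rw [hδ, h1, map_zero, LinearMap.zero_apply, zero_add]
  · rw [hδ, h2, map_zero, LinearMap.zero_apply, zero_add]
  · have : dB M δ = 0 := by
      ext x y
      rw [dB_apply, hδ, Bneg (δ x) y, LinearMap.zero_apply, LinearMap.zero_apply]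
      abel
    rw [this]
    simp [val]

lemma t1_br (D : L) (c : F) (h : M.B (M.E 1 1 0) D = c • D) (y : L) :
    M.B (M.E 1 1 0) (M.B D y) = M.B D (M.B (M.E 1 1 0) y) + c • M.B D y := by
  rw [ad_br, h, map_smul, LinearMap.smul_apply, add_comm]

lemma t2_br (D : L) (c : F) (h : M.B (M.E 2 0 1) D = c • D) (y : L) :
    M.B (M.E 2 0 1) (M.B D y) = M.B D (M.B (M.E 2 0 1) y) + c • M.B D y := by
  rw [ad_br, h, map_smul, LinearMap.smul_apply, add_comm]

lemma Lie_zero {ψ : L →ₗ[F] L →ₗ[F] L} {t : L} (h : Lie M t ψ = 0) (x y : L) :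
    M.B t (ψ x y) = ψ (M.B t x) y + ψ x (M.B t y) := by
  have h1 := Lie_apply (M := M) t ψ x y
  rw [h, LinearMap.zero_apply, LinearMap.zero_apply] at h1
  rw [← sub_eq_zero, h1]
  abel

/-- A homotopy for `ad D₁`. -/
lemma homotopy_one {A : L →ₗ[F] L} (hA : ∀ y, TT (M.B (M.E 1 0 0)) A 5 y = 0)
    (h1 : A (M.E 1 0 0) = 0) : ∃ φ : L →ₗ[F] L, φ (M.E 1 0 0) = 0 ∧
      ∀ y, M.B (M.E 1 0 0) (φ y) - φ (M.B (M.E 1 0 0) y) = A y := by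
  obtain ⟨φ, hφ⟩ := exists_lin M fun k a b => M.co k 0 b ∘ₗ TT (M.B (M.E 1 0 0)) A a
  refine ⟨φ, ?_, ?_⟩
  · refine M.co_ext fun k a b hk ha hb => ?_
    rw [hφ k a b _ hk ha hb, LinearMap.comp_apply, TT_kill _ _ (M.self _) h1, map_zero]
  · refine exists_homotopy (ι := ℕ × ℕ) _ A (fun a i => M.co i.1 a i.2) (fun a i z => ?_)
      (fun i => M.co_out (by omega)) (fun x hx => ?_) hA φ (fun a ha i z => ?_)
    · exact (M.co_d1 _ _ _ _).symm
    · exact M.co_ext fun k a b hk ha hb => hx a ha (k, b)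
    · change M.co i.1 a i.2 (φ z) = M.co i.1 0 i.2 _
      by_cases h : i.1 < 5 ∧ i.2 < 5
      · exact hφ _ _ _ _ h.1 ha h.2
      · rw [M.co_out (by omega), M.co_out (by omega)]
        rfl

/-- A homotopy for `ad D₂`. -/
lemma homotopy_two {A : L →ₗ[F] L} (hA : ∀ y, TT (M.B (M.E 2 0 0)) A 5 y = 0)
    (h1 : A (M.E 1 0 0) = 0) (h2 : A (M.E 2 0 0) = 0)
    (hc : ∀ y, M.B (M.E 1 0 0) (A y) = A (M.B (M.E 1 0 0) y)) :
    ∃ φ : L →ₗ[F] L, φ (M.E 1 0 0) = 0 ∧ φ (M.E 2 0 0) = 0 ∧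
      (∀ y, M.B (M.E 1 0 0) (φ y) = φ (M.B (M.E 1 0 0) y)) ∧
      ∀ y, M.B (M.E 2 0 0) (φ y) - φ (M.B (M.E 2 0 0) y) = A y := by
  obtain ⟨φ, hφ⟩ := exists_lin M fun k a b => M.co k a 0 ∘ₗ TT (M.B (M.E 2 0 0)) A b
  have hφ' : ∀ k a b z, b < 5 → M.co k a b (φ z) = M.co k a 0 (TT (M.B (M.E 2 0 0)) A b z) := by
    intro k a b z hb
    by_cases h : k < 5 ∧ a < 5
    · exact hφ _ _ _ _ h.1 h.2 hb
    · rw [M.co_out (by omega), M.co_out (by omega)]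
      rfl
  refine ⟨φ, ?_, ?_, ?_, ?_⟩
  · refine M.co_ext fun k a b hk ha hb => ?_
    rw [hφ' k a b _ hb, TT_kill _ _ d2_d1 h1, map_zero]
  · refine M.co_ext fun k a b hk ha hb => ?_
    rw [hφ' k a b _ hb, TT_kill _ _ (M.self _) h2, map_zero]
  · intro y
    rw [← sub_eq_zero]
    refine M.co_ext fun k a b hk ha hb => ?_
    rw [map_sub, M.co_d1, hφ' _ _ _ _ hb, hφ' _ _ _ _ hb, ← M.co_d1,
      TT_comm _ _ _ d1d2 hc, sub_self]
  · refine exists_homotopy (ι := ℕ × ℕ) _ A (fun b i => M.co i.1 i.2 b) (fun b i z => ?_)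
      (fun i => M.co_out (by omega)) (fun x hx => ?_) hA φ (fun b hb i z => hφ' _ _ _ _ hb)
    · exact (M.co_d2 _ _ _ _).symm
    · exact M.co_ext fun k a b hk ha hb => hx b hb (k, a)

/-- The obstruction for `D₁` is a multiple of `ad (x₂D₂)`. -/
lemma obs_one {ψ : L →ₗ[F] L →ₗ[F] L} (hψ : Coc M ψ) (h1 : Lie M (M.E 1 1 0) ψ = 0)
    (h2 : Lie M (M.E 2 0 1) ψ = 0) :
    ∃ c : F, ∀ y, TT (M.B (M.E 1 0 0)) (ψ (M.E 1 0 0)) 5 y = c • M.B (M.E 2 0 1) y := by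
  set δ := TT (M.B (M.E 1 0 0)) (ψ (M.E 1 0 0)) 5 with hδ
  have hder : ∀ y z, δ (M.B y z) = M.B (δ y) z + M.B y (δ z) := TT_der hψ d1_five
  have hd1 : ∀ y, M.B (M.E 1 0 0) (δ y) = δ (M.B (M.E 1 0 0) y) := TT_self _ _ d1_five
  have ht1 : ∀ y, M.B (M.E 1 1 0) (δ y) = δ (M.B (M.E 1 1 0) y) := by
    refine TT_wt _ _ _ (fun y => ?_) fun y => ?_
    · rw [t1_br _ (-1) (by rw [t1_d1, neg_one_smul]), neg_one_smul, sub_eq_add_neg]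
    · rw [Lie_zero h1, t1_d1, map_neg, LinearMap.neg_apply]
      abel
  have ht2 : ∀ y, M.B (M.E 2 0 1) (δ y) = δ (M.B (M.E 2 0 1) y) := by
    refine TT_comm _ _ _ (fun y => ?_) (fun y => ?_) 5
    · rw [t2_br _ 0 (by rw [t2_d1, zero_smul]), zero_smul, add_zero]
    · rw [Lie_zero h2, t2_d1, map_zero, LinearMap.zero_apply, zero_add]
  have k1 : δ (M.E 1 0 0) = 0 := TT_kill _ _ (M.self _) (hψ.1 _) 5
  have k2 : δ (M.E 2 0 0) = M.co 2 0 0 (δ (M.E 2 0 0)) • M.E 2 0 0 := by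
    set u := δ (M.E 2 0 0) with hu
    have u1 : M.B (M.E 1 0 0) u = 0 := by rw [hu, hd1, br_d1_d2, map_zero]
    have u2 : M.B (M.E 1 1 0) u = 0 := by rw [hu, ht1, t1_d2, map_zero]
    have u3 : M.B (M.E 2 0 1) u = -u := by rw [hu, ht2, t2_d2, map_neg]
    rw [← sub_eq_zero]
    refine M.co_ext fun k a b hk ha hb => ?_
    rw [map_sub, map_smul, M.co_E _ _ _ (by omega) (by omega) (by omega)]
    by_cases h : k = 2 ∧ a = 0 ∧ b = 0
    · obtain ⟨rfl, rfl, rfl⟩ := h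
      rw [if_pos ⟨rfl, rfl, rfl⟩, smul_eq_mul, mul_one, sub_self]
    · rw [if_neg h, smul_zero, sub_zero]
      rcases a with _ | a
      · have e1 := cc_t1 (M := M) (i := 25 * k + b) (by omega) u
        have e2 := cc_t2 (M := M) (i := 25 * k + b) (by omega) u
        rw [u2, map_zero] at e1
        rw [u3, map_neg] at e2
        have e3 : cc M (25 * k + b) = M.co k 0 b := by
          rw [co_index k 0 b (by omega) hb]
          congr 1
        rw [e3] at e1 e2
        rcases mul_eq_zero.1 e1.symm with e4 | e4
        · rw [CharP.cast_eq_zero_iff F 5] at e4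
          have e5 : ((wt2 (25 * k + b) + 1 : ℕ) : F) * M.co k 0 b u = 0 := by
            push_cast
            linear_combination -e2
          rcases mul_eq_zero.1 e5 with e6 | e6
          · rw [CharP.cast_eq_zero_iff F 5] at e6
            exfalso
            revert e4 e6 h
            clear * - hk hb
            interval_cases k <;> interval_cases b <;> decide
          · exact e6
        · exact e4
      · rw [← M.co_d1, u1, map_zero]
  refine ⟨-M.co 2 0 0 (δ (M.E 2 0 0)), fun y => ?_⟩
  set c := M.co 2 0 0 (δ (M.E 2 0 0)) with hc
  have hz : δ + c • M.B (M.E 2 0 1) = 0 := by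
    refine der_zero (M := M) (fun y z => ?_) (fun y => ?_) (fun y => ?_) ?_ ?_
    · simp only [LinearMap.add_apply, LinearMap.smul_apply, map_add, map_smul]
      rw [hder, ad_br (M.E 2 0 1) y z, smul_add]
      abel
    · simp only [LinearMap.add_apply, LinearMap.smul_apply, map_add, map_smul]
      rw [ht1, ad_br (M.E 1 1 0) (M.E 2 0 1) y, br_t1_t2, map_zero, LinearMap.zero_apply, zero_add]
    · simp only [LinearMap.add_apply, LinearMap.smul_apply, map_add, map_smul]
      rw [ht2]
    · rw [LinearMap.add_apply, LinearMap.smul_apply, k1, t2_d1, smul_zero, add_zero]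
    · rw [LinearMap.add_apply, LinearMap.smul_apply, t2_d2, k2, smul_neg, add_neg_cancel]
  have := LinearMap.congr_fun hz y
  rw [LinearMap.add_apply, LinearMap.smul_apply, LinearMap.zero_apply] at this
  rw [neg_smul]
  exact eq_neg_of_add_eq_zero_left this

lemma d1_pow_E : M.B (M.E 1 0 0) (M.B (M.E 1 0 0) (M.B (M.E 1 0 0) (M.B (M.E 1 0 0)
    (M.E 2 4 1)))) = M.E 2 0 1 := by
  rw [← sub_eq_zero]
  refine M.co_ext fun k a b hk ha hb => ?_
  rw [map_sub, M.co_d1, M.co_d1, M.co_d1, M.co_d1, M.co_E _ _ _ (by omega) (by omega) (by omega),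
    M.co_E _ _ _ (by omega) (by omega) (by omega), sub_eq_zero]
  congr 1
  exact propext (by omega)

/-- A cocycle of weight zero is cohomologous to one vanishing on `D₁`. -/
lemma kill_one {ψ : L →ₗ[F] L →ₗ[F] L} (hψ : Coc M ψ) (h1 : Lie M (M.E 1 1 0) ψ = 0)
    (h2 : Lie M (M.E 2 0 1) ψ = 0) : ∃ φ, ∀ y, (ψ - dB M φ) (M.E 1 0 0) y = 0 := by
  obtain ⟨c, hc⟩ := obs_one hψ h1 h2
  -- `(ad D₁)⁴` maps the element `E 2 4 1` to `x₂D₂`, so the obstruction of the coboundary of `ρ`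
  -- is the one of `ψ`.
  let ρ : L →ₗ[F] L := (M.co 1 0 0).smulRight (c • M.E 2 4 1)
  have hρ : ρ (M.E 1 0 0) = c • M.E 2 4 1 := by
    change M.co 1 0 0 (M.E 1 0 0) • (c • M.E 2 4 1) = _
    rw [M.co_E _ _ _ (by omega) (by omega) (by omega), if_pos ⟨rfl, rfl, rfl⟩, one_smul]
  have hρ' : dB M ρ (M.E 1 0 0) = M.B (M.E 1 0 0) ∘ₗ ρ - ρ ∘ₗ M.B (M.E 1 0 0) -
      M.B (-(c • M.E 2 4 1)) := by
    ext y
    rw [dB_apply, hρ, Bneg (c • M.E 2 4 1) y, map_neg]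
    simp only [LinearMap.sub_apply, LinearMap.comp_apply, LinearMap.neg_apply]
    abel
  have hψ' := hψ.sub (coc_dB (M := M) ρ)
  obtain ⟨φ, p1, p2⟩ := homotopy_one (M := M) (A := (ψ - dB M ρ) (M.E 1 0 0)) (fun y => by
    rw [LinearMap.sub_apply, TT_sub, hρ', TT_sub, TT_commutator _ _ d1_five, TT_ad, hc]
    simp only [map_neg, map_smul, LinearMap.neg_apply, LinearMap.smul_apply]
    rw [d1_pow_E]
    abel) (hψ'.1 _)
  refine ⟨ρ + φ, fun y => ?_⟩
  rw [dB_add, ← sub_sub, LinearMap.sub_apply, LinearMap.sub_apply, ← p2 y, dB_apply, p1, map_zero]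
  abel

/-- A cocycle of weight zero vanishing on `D₁` is cohomologous to one vanishing on `D₁`, `D₂`. -/
lemma kill_two {ψ : L →ₗ[F] L →ₗ[F] L} (hψ : Coc M ψ) (h1 : Lie M (M.E 1 1 0) ψ = 0)
    (h2 : Lie M (M.E 2 0 1) ψ = 0) (h0 : ∀ y, ψ (M.E 1 0 0) y = 0) :
    ∃ φ, (∀ y, (ψ - dB M φ) (M.E 1 0 0) y = 0) ∧ ∀ y, (ψ - dB M φ) (M.E 2 0 0) y = 0 := by
  have a1 : ψ (M.E 2 0 0) (M.E 1 0 0) = 0 := by rw [alt_neg hψ.1 (M.E 1 0 0), h0, neg_zero]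
  have a2 : ∀ y, M.B (M.E 1 0 0) (ψ (M.E 2 0 0) y) = ψ (M.E 2 0 0) (M.B (M.E 1 0 0) y) := by
    intro y
    rw [eqv_of_kill hψ h0, br_d1_d2, map_zero, LinearMap.zero_apply, zero_add]
  have hz : TT (M.B (M.E 2 0 0)) (ψ (M.E 2 0 0)) 5 = 0 := by
    refine der_zero (M := M) (TT_der hψ d2_five) ?_ ?_ (TT_kill _ _ d2_d1 a1 5)
      (TT_kill _ _ (M.self _) (hψ.1 _) 5)
    · refine TT_comm _ _ _ (fun y => ?_) (fun y => ?_) 5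
      · rw [t1_br _ 0 (by rw [t1_d2, zero_smul]), zero_smul, add_zero]
      · rw [Lie_zero h1, t1_d2, map_zero, LinearMap.zero_apply, zero_add]
    · refine TT_wt _ _ _ (fun y => ?_) fun y => ?_
      · rw [t2_br _ (-1) (by rw [t2_d2, neg_one_smul]), neg_one_smul, sub_eq_add_neg]
      · rw [Lie_zero h2, t2_d2, map_neg, LinearMap.neg_apply]
        abel
  obtain ⟨φ, p1, p2, p3, p4⟩ := homotopy_two (M := M) (A := ψ (M.E 2 0 0))
    (fun y => by rw [hz, LinearMap.zero_apply]) a1 (hψ.1 _) a2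
  refine ⟨φ, fun y => ?_, fun y => ?_⟩
  · rw [LinearMap.sub_apply, LinearMap.sub_apply, h0, dB_apply, p1, p3, map_zero]
    abel
  · rw [LinearMap.sub_apply, LinearMap.sub_apply, ← p4, dB_apply, p2, map_zero]
    abel

/-- Every cocycle is cohomologous to a normalized one. -/
theorem exists_nrm {ψ : L →ₗ[F] L →ₗ[F] L} (hψ : Coc M ψ) : ∃ φ, Nrm M (ψ - dB M φ) := by
  obtain ⟨φ₁, a1, a2, -, -⟩ := exists_proj' hψ
  have c1 := hψ.sub (coc_dB (M := M) φ₁)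
  obtain ⟨φ₂, b1⟩ := kill_one c1 a1 a2
  have c2 := c1.sub (coc_dB (M := M) φ₂)
  obtain ⟨φ₃, d1, d2, d3, -⟩ := exists_proj' c2
  have c3 := c2.sub (coc_dB (M := M) φ₃)
  obtain ⟨φ₄, e1, e2⟩ := kill_two c3 d1 d2 (d3 b1)
  have c4 := c3.sub (coc_dB (M := M) φ₄)
  obtain ⟨φ₅, f1, f2, f3, f4⟩ := exists_proj' c4
  have c5 := c4.sub (coc_dB (M := M) φ₅)
  refine ⟨φ₁ + φ₂ + φ₃ + φ₄ + φ₅, ?_⟩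
  rw [dB_add, dB_add, dB_add, dB_add, ← sub_sub, ← sub_sub, ← sub_sub, ← sub_sub]
  exact ⟨c5, f3 e1, f4 e2, f1, f2⟩

end

end Mlk
namespace Mlk

/-! ### The squaring operations -/

section

/-- The bracket with `e_i` on lists of pairs (coefficient, index). -/
def adL (i : ℕ) (l : List (ℕ × ℕ)) : List (ℕ × ℕ) :=
  l.flatMap fun t => (brE i t.2).map fun s => (t.1 * s.1, s.2)

/-- The bracket on lists of pairs (coefficient, index). -/
def brL (l l' : List (ℕ × ℕ)) : List (ℕ × ℕ) :=
  l.flatMap fun t => (adL t.2 l').map fun s => (t.1 * s.1, s.2)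

/-- The coefficient of index `i` in a list of pairs (coefficient, index). -/
def coL (i : ℕ) (l : List (ℕ × ℕ)) : ℕ := (l.map fun t => if i = t.2 then t.1 else 0).sum

/-- The value at the unknown of code `c` of the squaring of `E j 0 0`, modulo 5. -/
def sqL (j c : ℕ) : ℕ :=
  let x := fun i => (adL (25 * j))^[i] [(1, c / 625)]
  let y := fun i => (adL (25 * j))^[i] [(1, c / 5 % 125)]
  let k := 25 * (c % 5)
  4 * coL k (brL (x 1) (y 4)) + 3 * coL k (brL (x 2) (y 3)) + 3 * coL k (brL (x 3) (y 2)) +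
    4 * coL k (brL (x 4) (y 1))

/-- The pivots of the squaring operations. -/
def sp : ℕ → ℕ
  | 0 => 63016
  | 1 => 12901
  | 2 => 49260
  | 3 => 38001
  | _ => 17252

lemma sp_mem : ∀ j < 5, sp j ∈ pivC.take 5 := by decide +kernel

lemma mem_sp : ∀ c ∈ pivC.take 5, ∃ j < 5, c = sp j := by decide +kernel

/-- The squaring of `E j 0 0` does not vanish at its pivot. -/
lemma sp_diag : ∀ j < 5, sqL j (sp j) % 5 ≠ 0 := by decide +kernel

/-- The squaring of `E j 0 0` vanishes at the pivots of the other squarings. -/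
lemma sp_off : ∀ i < 5, ∀ j < 5, i ≠ j → sqL j (sp i) % 5 = 0 := by decide +kernel

variable {F L : Type*} [Field F] [CharP F 5] [AddCommGroup L] [Module F L] (M : Model F L)

/-- The element given by a list of pairs (coefficient, index). -/
def vl (l : List (ℕ × ℕ)) : L := (l.map fun t => (t.1 : F) • ee M t.2).sum

/-- The integral form of the squaring of a linear map `g`. -/
def SqZ (g : L →ₗ[F] L) : L →ₗ[F] L →ₗ[F] L :=
  M.B.compl₁₂ g (g ^ 4) + (2 : F) • M.B.compl₁₂ (g ^ 2) (g ^ 3) +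
    (2 : F) • M.B.compl₁₂ (g ^ 3) (g ^ 2) + M.B.compl₁₂ (g ^ 4) g

/-- The squaring of `z`. The coefficients `1 / (i! (5 - i)!)` are `-1, -2, -2, -1` in
characteristic 5. -/
def SqM (z : L) : L →ₗ[F] L →ₗ[F] L := (-1 : F) • SqZ M (M.B z)

variable {M}

lemma SqZ_apply (g : L →ₗ[F] L) (x y : L) : SqZ M g x y =
    M.B (g x) (g (g (g (g y)))) + (2 : F) • M.B (g (g x)) (g (g (g y))) +
    (2 : F) • M.B (g (g (g x))) (g (g y)) + M.B (g (g (g (g x)))) (g y) := by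
  simp only [SqZ, LinearMap.add_apply, LinearMap.smul_apply, LinearMap.compl₁₂_apply, pow_succ,
    pow_zero, Module.End.mul_apply, Module.End.one_apply]

/-- Over the rational numbers the sum of the `[gⁱ x, g⁵⁻ⁱ y] / (i! (5 - i)!)` over `0 < i < 5` is,
up to the sign, the coboundary of `g⁵ / 5!`. The cocycle identity thus holds over the integers after
multiplication by `4!`. -/
lemma coc_SqZ {g : L →ₗ[F] L} (hg : ∀ u v, g (M.B u v) = M.B (g u) v + M.B u (g v)) :
    Coc M (SqZ M g) := by
  refine ⟨fun x => ?_, fun x y w => ?_⟩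
  · rw [SqZ_apply, Bneg (g x), Bneg (g (g x)) (g (g (g x)))]
    module
  · have hX : ∀ x, ∃ X : ℕ → L, x = X 0 ∧ ∀ i, g (X i) = X (i + 1) := fun x =>
      ⟨fun i => (g ^ i) x, rfl, fun i => by
        change g ((g ^ i) x) = (g ^ (i + 1)) x
        rw [pow_succ', Module.End.mul_apply]⟩
    obtain ⟨X, rfl, hx⟩ := hX x
    obtain ⟨Y, rfl, hy⟩ := hX y
    obtain ⟨W, rfl, hw⟩ := hX w
    have r1 : ∀ i j k, M.B (M.B (X i) (Y j)) (W k) =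
        M.B (X i) (M.B (Y j) (W k)) - M.B (Y j) (M.B (X i) (W k)) := fun i j k => by
      rw [ad_br (X i)]
      abel
    have r2 : ∀ i j k, M.B (W k) (M.B (X i) (Y j)) =
        M.B (Y j) (M.B (X i) (W k)) - M.B (X i) (M.B (Y j) (W k)) := fun i j k => by
      rw [Bneg, r1]
      abel
    have r3 : ∀ i j k, M.B (M.B (X i) (W k)) (Y j) = -M.B (Y j) (M.B (X i) (W k)) :=
      fun i j k => Bneg _ _
    have r4 : ∀ i j k, M.B (M.B (Y j) (W k)) (X i) = -M.B (X i) (M.B (Y j) (W k)) :=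
      fun i j k => Bneg _ _
    simp only [SqZ_apply, hg, map_add, map_smul, LinearMap.add_apply, hx, hy, hw, r1, r2, r3, r4,
      zero_add, Nat.reduceAdd]
    module

lemma coc_SqM (z : L) : Coc M (SqM M z) := (coc_SqZ (ad_br z)).smul _

/-- The squaring of an eigenvector for `t` has weight zero. -/
lemma Lie_SqM {t z : L} {c : F} (h : M.B t z = c • z) : Lie M t (SqM M z) = 0 := by
  have hz : ∀ u, M.B t (M.B z u) = M.B z (M.B t u) + c • M.B z u := fun u => by
    rw [ad_br t z u, h, map_smul, LinearMap.smul_apply, add_comm]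
  ext x y
  have h5 := five_smul (F := F) (c • SqM M z x y)
  rw [Lie_apply, LinearMap.zero_apply, LinearMap.zero_apply, ← h5]
  simp only [SqM, LinearMap.smul_apply, SqZ_apply]
  set g := M.B z with hg
  simp only [map_add, map_smul, ad_br t (g _) _, hz, LinearMap.add_apply, LinearMap.smul_apply]
  module

lemma SqM_kill {z D : L} (h : M.B z D = 0) (y : L) : SqM M z D y = 0 := by
  simp [SqM, SqZ_apply, h]

/-- The squarings of the elements `E j 0 0` are normalized. -/
lemma nrm_SqM {j : ℕ} (hj : j < 5) : Nrm M (SqM M (ee M (25 * j))) := by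
  have e : ee M (25 * j) = M.E j 0 0 := by
    rw [ee]
    congr 1 <;> omega
  refine ⟨coc_SqM _, SqM_kill ?_, SqM_kill ?_, Lie_SqM (c := wt1 (25 * j)) ?_,
    Lie_SqM (c := wt2 (25 * j)) ?_⟩
  · rw [Bneg, neg_eq_zero, e]
    refine M.co_ext fun k a b _ _ _ => ?_
    rw [M.co_d1, M.co_E _ _ _ hj (by omega) (by omega), if_neg (by omega)]
  · rw [Bneg, neg_eq_zero, e]
    refine M.co_ext fun k a b _ _ _ => ?_
    rw [M.co_d2, M.co_E _ _ _ hj (by omega) (by omega), if_neg (by omega)]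
  · exact HasWt.apply_ee (fun i hi z => cc_t1 hi z) (by omega)
  · exact HasWt.apply_ee (fun i hi z => cc_t2 hi z) (by omega)

lemma B_vl {i : ℕ} (hi : i < 125) {l : List (ℕ × ℕ)} (hl : ∀ t ∈ l, t.2 < 125) :
    M.B (ee M i) (vl M l) = vl M (adL i l) := by
  rw [vl, vl, adL, sum_map, sum_flatMap]
  congr 1
  refine List.map_congr_left fun t ht => ?_
  rw [map_smul, br_ee hi (hl t ht), List.map_map, List.smul_sum, List.map_map]
  congr 1
  refine List.map_congr_left fun s _ => ?_
  change (t.1 : F) • (s.1 : F) • ee M s.2 = ((t.1 * s.1 : ℕ) : F) • ee M s.2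
  rw [Nat.cast_mul, mul_smul]

lemma adL_lt (i : ℕ) (l : List (ℕ × ℕ)) : ∀ t ∈ adL i l, t.2 < 125 := by
  intro t ht
  rw [adL, List.mem_flatMap] at ht
  obtain ⟨s, _, ht⟩ := ht
  obtain ⟨r, hr, rfl⟩ := List.mem_map.1 ht
  exact brE_lt _ _ r hr

lemma B_vl_vl {l l' : List (ℕ × ℕ)} (hl : ∀ t ∈ l, t.2 < 125) (hl' : ∀ t ∈ l', t.2 < 125) :
    M.B (vl M l) (vl M l') = vl M (brL l l') := by
  change M.B.flip (vl M l') (vl M l) = _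
  rw [vl.eq_def M l, vl.eq_def M (brL l l'), brL, sum_map (M.B.flip _), sum_flatMap]
  congr 1
  refine List.map_congr_left fun t ht => ?_
  change M.B ((t.1 : F) • ee M t.2) (vl M l') = _
  rw [map_smul, LinearMap.smul_apply, B_vl (hl t ht) hl', vl, List.map_map,
    List.smul_sum, List.map_map]
  congr 1
  refine List.map_congr_left fun s _ => ?_
  change (t.1 : F) • (s.1 : F) • ee M s.2 = ((t.1 * s.1 : ℕ) : F) • ee M s.2
  rw [Nat.cast_mul, mul_smul]

lemma cc_vl (i : ℕ) {l : List (ℕ × ℕ)} (hl : ∀ t ∈ l, t.2 < 125) :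
    cc M i (vl M l) = (coL i l : F) := by
  rw [vl, coL, sum_map, Nat.cast_list_sum, List.map_map]
  congr 1
  refine List.map_congr_left fun t ht => ?_
  rw [map_smul, cc_ee (hl t ht), Function.comp_apply]
  by_cases h : i = t.2
  · rw [if_pos h, if_pos h, smul_eq_mul, mul_one]
  · rw [if_neg h, if_neg h, smul_zero, Nat.cast_zero]

lemma brL_lt (l l' : List (ℕ × ℕ)) : ∀ t ∈ brL l l', t.2 < 125 := by
  intro t ht
  rw [brL, List.mem_flatMap] at ht
  obtain ⟨s, _, ht⟩ := ht
  obtain ⟨r, hr, rfl⟩ := List.mem_map.1 ht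
  exact adL_lt _ _ r hr

lemma val_SqM {j c : ℕ} (hj : j < 5) (hc : c < 78125) :
    val M (SqM M (ee M (25 * j))) c = (sqL j c : F) := by
  have key : ∀ i < 125, ∃ X : ℕ → List (ℕ × ℕ), (∀ n, X n = (adL (25 * j))^[n] [(1, i)]) ∧
      (∀ n, ∀ t ∈ X n, t.2 < 125) ∧ ee M i = vl M (X 0) ∧
      ∀ n, M.B (ee M (25 * j)) (vl M (X n)) = vl M (X (n + 1)) := by
    intro i hi
    have h : ∀ n, ∀ t ∈ (adL (25 * j))^[n] [(1, i)], t.2 < 125 := by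
      intro n
      cases n with
      | zero =>
        intro t ht
        obtain rfl : t = (1, i) := List.mem_singleton.1 ht
        exact hi
      | succ n =>
        rw [Function.iterate_succ_apply']
        exact adL_lt _ _
    refine ⟨_, fun n => rfl, h, ?_, fun n => ?_⟩
    · simp [vl]
    · rw [B_vl (by omega) (h n), Function.iterate_succ_apply']
  obtain ⟨X, hX, xl, x0, x1⟩ := key (c / 625) (by omega)
  obtain ⟨Y, hY, yl, y0, y1⟩ := key (c / 5 % 125) (by omega)
  have hk : M.co (c % 5) 0 0 = cc M (25 * (c % 5)) := co_index _ _ _ (by omega) (by omega)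
  have h4 : (3 : F) = -2 := by
    have := cast4 (F := F)
    push_cast at this
    linear_combination this
  rw [val, hk, x0, y0, SqM, LinearMap.smul_apply, LinearMap.smul_apply, SqZ_apply]
  simp only [x1, y1, B_vl_vl (xl _) (yl _), map_add, map_smul, cc_vl _ (brL_lt _ _), zero_add,
    Nat.reduceAdd]
  rw [sqL]
  simp only [← hX, ← hY, Nat.cast_add, Nat.cast_mul, cast4, smul_eq_mul]
  rw [show ((3 : ℕ) : F) = -2 from h4]
  ring

end

end Mlk
namespace Mlk

/-! ### The second cohomology in coordinates -/

section

variable {F L : Type*} [Field F] [CharP F 5] [AddCommGroup L] [Module F L] {M : Model F L}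

lemma Nrm.sub {ψ χ : L →ₗ[F] L →ₗ[F] L} (h : Nrm M ψ) (h' : Nrm M χ) : Nrm M (ψ - χ) := by
  refine ⟨h.coc.sub h'.coc, fun y => ?_, fun y => ?_, ?_, ?_⟩
  · rw [LinearMap.sub_apply, LinearMap.sub_apply, h.d1, h'.d1, sub_zero]
  · rw [LinearMap.sub_apply, LinearMap.sub_apply, h.d2, h'.d2, sub_zero]
  · rw [Lie_sub, h.t1, h'.t1, sub_zero]
  · rw [Lie_sub, h.t2, h'.t2, sub_zero]

lemma Lie_smul (t : L) (a : F) (ψ : L →ₗ[F] L →ₗ[F] L) : Lie M t (a • ψ) = a • Lie M t ψ := by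
  ext x y
  simp only [Lie_apply, LinearMap.smul_apply, map_smul]
  module

lemma Nrm.smul {ψ : L →ₗ[F] L →ₗ[F] L} (h : Nrm M ψ) (a : F) : Nrm M (a • ψ) := by
  refine ⟨h.coc.smul a, fun y => ?_, fun y => ?_, ?_, ?_⟩
  · rw [LinearMap.smul_apply, LinearMap.smul_apply, h.d1, smul_zero]
  · rw [LinearMap.smul_apply, LinearMap.smul_apply, h.d2, smul_zero]
  · rw [Lie_smul, h.t1, smul_zero]
  · rw [Lie_smul, h.t2, smul_zero]

/-- The combinations of the squarings of the elements `E j 0 0`. -/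
def sqS (M : Model F L) (c : ℕ → F) : ℕ → (L →ₗ[F] L →ₗ[F] L)
  | 0 => 0
  | n + 1 => sqS M c n + c n • SqM M (ee M (25 * n))

lemma nrm_zero : Nrm M 0 := by
  have h := nrm_SqM (M := M) (j := 0) (by omega)
  simpa using h.sub h

lemma nrm_sqS (c : ℕ → F) : ∀ n ≤ 5, Nrm M (sqS M c n)
  | 0, _ => nrm_zero
  | n + 1, hn => by
    have h := (nrm_sqS c n (by omega)).sub ((nrm_SqM (M := M) (j := n) (by omega)).smul (-c n))
    have e : sqS M c (n + 1) = sqS M c n - (-c n) • SqM M (ee M (25 * n)) := by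
      rw [sqS]
      module
    rw [e]
    exact h

lemma val_sub (ψ χ : L →ₗ[F] L →ₗ[F] L) (c : ℕ) : val M (ψ - χ) c = val M ψ c - val M χ c := by
  simp only [val, LinearMap.sub_apply, map_sub]

lemma sp_lt : ∀ j < 5, sp j < 78125 := by decide +kernel

lemma val_sqS (c : ℕ → F) {i : ℕ} (hi : i < 5) : ∀ n ≤ 5, val M (sqS M c n) (sp i) =
    if i < n then c i * (sqL i (sp i) : F) else 0
  | 0, _ => by simp [sqS, val]
  | n + 1, hn => by
    have h : val M (sqS M c (n + 1)) (sp i) = val M (sqS M c n) (sp i) +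
        c n * val M (SqM M (ee M (25 * n))) (sp i) := by
      simp only [sqS, val, LinearMap.add_apply, LinearMap.smul_apply, map_add, map_smul,
        smul_eq_mul]
    rw [h, val_sqS c hi n (by omega), val_SqM (by omega) (sp_lt i hi)]
    rcases lt_trichotomy i n with h' | h' | h'
    · rw [if_pos h', if_pos (by omega), ← cast_mod_five (sqL n _),
        sp_off i hi n (by omega) (by omega), Nat.cast_zero, mul_zero, add_zero]
    · subst h'
      rw [if_neg (by omega), if_pos (by omega), zero_add]
    · rw [if_neg (by omega), if_neg (by omega), ← cast_mod_five (sqL n _),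
        sp_off i hi n (by omega) (by omega), Nat.cast_zero, mul_zero, add_zero]

lemma sp_ne {i : ℕ} (hi : i < 5) : (sqL i (sp i) : F) ≠ 0 := cast_ne_zero (sp_diag i hi)

lemma evl_congr {u v : ℕ → F} {l : List (ℕ × ℕ)} (h : ∀ t ∈ l, u t.2 = v t.2) :
    evl u l = evl v l := by
  rw [evl, evl]
  congr 1
  refine List.map_congr_left fun t ht => ?_
  rw [h t ht]

lemma dterms_lt : ∀ c ∈ pivC.drop 5, ∀ t ∈ dterms c, t.2 < 625 := by decide +kernel

/-- Every cocycle is cohomologous to a combination of squarings. -/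
theorem exists_comb {ψ : L →ₗ[F] L →ₗ[F] L} (hψ : Coc M ψ) :
    ∃ c : ℕ → F, ∃ φ : L →ₗ[F] L, ψ - sqS M c 5 = dB M φ := by
  obtain ⟨φ₀, h0⟩ := exists_nrm hψ
  refine ⟨fun i => val M (ψ - dB M φ₀) (sp i) / (sqL i (sp i) : F), ?_⟩
  set c : ℕ → F := fun i => val M (ψ - dB M φ₀) (sp i) / (sqL i (sp i) : F) with hc
  have h1 := h0.sub (nrm_sqS (M := M) c 5 le_rfl)
  have h2 : ∀ i < 5, val M (ψ - dB M φ₀ - sqS M c 5) (sp i) = 0 := by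
    intro i hi
    rw [val_sub, val_sqS c hi 5 le_rfl, if_pos hi, hc]
    change _ - _ / _ * _ = (0 : F)
    rw [div_mul_cancel₀ _ (sp_ne hi), sub_self]
  obtain ⟨v, v0, v1⟩ := par_surj (fun n => val M (ψ - dB M φ₀ - sqS M c 5) n)
  obtain ⟨φ, e, t1, t2, d1, d2, hv⟩ := exists_equi M v0
  have h3 : Nrm M (dB M φ) := by
    refine ⟨coc_dB φ, fun y => ?_, fun y => ?_, Lie_dB _ _ t1, Lie_dB _ _ t2⟩
    · rw [dB_apply, d1, e.d1, map_zero, sub_zero, sub_self]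
    · rw [dB_apply, d2, e.d2, map_zero, sub_zero, sub_self]
  have hc5 : ∀ c ∈ pivC, c < 78125 := by decide +kernel
  have h4 : ψ - dB M φ₀ - sqS M c 5 - dB M φ = 0 := by
    refine (h1.sub h3).eq_zero fun n hn => ?_
    rw [val_sub]
    have hn' := hn
    rw [← List.take_append_drop 5 pivC, List.mem_append] at hn'
    rcases hn' with hn' | hn'
    · rw [val_dB_sq e d1 d2 hn', sub_zero]
      obtain ⟨j, hj, rfl⟩ := mem_sp n hn'
      exact h2 j hj
    · rw [val_dB e (hc5 n hn), evl_congr fun t ht => hv _ (dterms_lt n hn' t ht), v1 n hn',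
        sub_self]
  refine ⟨φ₀ + φ, ?_⟩
  rw [dB_add, ← sub_eq_zero, ← h4]
  abel

/-- The centre vanishes. -/
lemma center {m : L} (h : ∀ y, M.B m y = 0) : m = 0 := by
  have h' : ∀ y, M.B y m = 0 := fun y => by rw [Bneg, h, neg_zero]
  refine M.co_ext fun k a b hk ha hb => ?_
  rcases a with _ | a
  · rcases b with _ | b
    · have e1 := cc_t1 (M := M) (i := 25 * k) (by omega) m
      have e2 := cc_t2 (M := M) (i := 25 * k) (by omega) m
      have e3 : cc M (25 * k) = M.co k 0 0 := (co_index k 0 0 (by omega) (by omega)).symm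
      rw [h', map_zero, e3] at e1 e2
      rcases mul_eq_zero.1 e1.symm with e4 | e4
      · rcases mul_eq_zero.1 e2.symm with e5 | e5
        · rw [CharP.cast_eq_zero_iff F 5] at e4 e5
          exfalso
          revert e4 e5
          clear * - hk
          interval_cases k <;> decide
        · exact e5
      · exact e4
    · rw [← M.co_d2, h', map_zero]
  · rw [← M.co_d1, h', map_zero]

/-- An element killed by `(ad D₁)⁴` lies in the image of `ad D₁`. -/
lemma int_one {u : L} (h : M.B (M.E 1 0 0) (M.B (M.E 1 0 0) (M.B (M.E 1 0 0)
    (M.B (M.E 1 0 0) u))) = 0) : ∃ w, M.B (M.E 1 0 0) w = u := by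
  obtain ⟨φ, hφ⟩ := exists_lin M fun k a b => if a = 0 then 0 else M.co k (a - 1) b
  refine ⟨φ u, ?_⟩
  rw [← sub_eq_zero]
  refine M.co_ext fun k a b hk ha hb => ?_
  rw [map_sub, M.co_d1]
  rcases Nat.lt_or_ge (a + 1) 5 with h4 | h4
  · rw [hφ k (a + 1) b _ hk h4 hb, if_neg (by omega), Nat.add_sub_cancel, sub_self]
  · obtain rfl : a = 4 := by omega
    have h5 := congrArg (M.co k 0 b) h
    rw [M.co_d1, M.co_d1, M.co_d1, M.co_d1, map_zero] at h5
    rw [M.co_out (by omega), LinearMap.zero_apply, zero_sub, neg_eq_zero]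
    exact h5

/-- An element killed by `ad D₁` and `(ad D₂)⁴` is the image under `ad D₂` of an element killed by
`ad D₁`. -/
lemma int_two {u : L} (h1 : M.B (M.E 1 0 0) u = 0) (h : M.B (M.E 2 0 0) (M.B (M.E 2 0 0)
    (M.B (M.E 2 0 0) (M.B (M.E 2 0 0) u))) = 0) :
    ∃ w, M.B (M.E 2 0 0) w = u ∧ M.B (M.E 1 0 0) w = 0 := by
  obtain ⟨φ, hφ⟩ := exists_lin M fun k a b => if b = 0 then 0 else M.co k a (b - 1)
  refine ⟨φ u, ?_, ?_⟩
  · rw [← sub_eq_zero]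
    refine M.co_ext fun k a b hk ha hb => ?_
    rw [map_sub, M.co_d2]
    rcases Nat.lt_or_ge (b + 1) 5 with h4 | h4
    · rw [hφ k a (b + 1) _ hk ha h4, if_neg (by omega), Nat.add_sub_cancel, sub_self]
    · obtain rfl : b = 4 := by omega
      have h5 := congrArg (M.co k a 0) h
      rw [M.co_d2, M.co_d2, M.co_d2, M.co_d2, map_zero] at h5
      rw [M.co_out (by omega), LinearMap.zero_apply, zero_sub, neg_eq_zero]
      exact h5
  · refine M.co_ext fun k a b hk ha hb => ?_
    rw [M.co_d1]
    rcases Nat.lt_or_ge (a + 1) 5 with h4 | h4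
    · rw [hφ k (a + 1) b _ hk h4 hb]
      split_ifs with hb0
      · rfl
      · rw [← M.co_d1, h1, map_zero]
    · rw [M.co_out (by omega), LinearMap.zero_apply]

/-- If the coboundary of `φ` vanishes on `x`, then `(ad x)⁴` kills `φ x`. -/
lemma pow_four {φ : L →ₗ[F] L} {x : L}
    (hx : ∀ y, M.B x (M.B x (M.B x (M.B x (M.B x y)))) = 0) (h : ∀ y, dB M φ x y = 0) :
    M.B x (M.B x (M.B x (M.B x (φ x)))) = 0 := by
  refine center (M := M) fun y => ?_
  have e : M.B x ∘ₗ φ - φ ∘ₗ M.B x = M.B (-φ x) := by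
    ext y
    have h1 := h y
    rw [dB_apply, Bneg (φ x) y] at h1
    rw [map_neg, LinearMap.neg_apply, ← sub_eq_zero, ← h1]
    simp only [LinearMap.sub_apply, LinearMap.comp_apply]
    abel
  have h2 := TT_commutator (M.B x) φ hx y
  rw [e, TT_ad] at h2
  simpa using h2

/-- The squarings are linearly independent modulo coboundaries. -/
theorem comb_unique {c : ℕ → F} {φ : L →ₗ[F] L} (h : sqS M c 5 = dB M φ) : ∀ i < 5, c i = 0 := by
  have hn := nrm_sqS (M := M) c 5 le_rfl
  obtain ⟨w, hw⟩ := int_one (pow_four (M := M) (φ := φ) d1_five fun y => by rw [← h, hn.d1])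
  have e1 : dB M (φ + M.B w) = sqS M c 5 := by rw [dB_add, dB_ad, add_zero, h]
  have k1 : (φ + M.B w) (M.E 1 0 0) = 0 := by
    rw [LinearMap.add_apply, Bneg _ w, hw, add_neg_cancel]
  generalize φ + M.B w = φ₁ at e1 k1
  have k2 : ∀ y, M.B (M.E 1 0 0) (φ₁ y) = φ₁ (M.B (M.E 1 0 0) y) := by
    intro y
    have := hn.d1 y
    rwa [← e1, dB_apply, k1, map_zero, sub_zero, sub_eq_zero] at this
  obtain ⟨w', hw1, hw2⟩ := int_two (M := M) (u := φ₁ (M.E 2 0 0))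
    (by rw [k2, br_d1_d2, map_zero])
    (pow_four (M := M) (φ := φ₁) d2_five fun y => by rw [e1, hn.d2])
  have e2 : dB M (φ₁ + M.B w') = sqS M c 5 := by rw [dB_add, dB_ad, add_zero, e1]
  have k3 : (φ₁ + M.B w') (M.E 2 0 0) = 0 := by
    rw [LinearMap.add_apply, Bneg _ w', hw1, add_neg_cancel]
  have k4 : (φ₁ + M.B w') (M.E 1 0 0) = 0 := by
    rw [LinearMap.add_apply, k1, Bneg _ w', hw2, neg_zero, add_zero]
  generalize φ₁ + M.B w' = φ₂ at e2 k3 k4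
  have he : Equi M φ₂ := by
    refine ⟨fun y => ?_, fun y => ?_⟩
    · have := hn.d1 y
      rwa [← e2, dB_apply, k4, map_zero, sub_zero, sub_eq_zero] at this
    · have := hn.d2 y
      rwa [← e2, dB_apply, k3, map_zero, sub_zero, sub_eq_zero] at this
  intro i hi
  have h1 := val_dB_sq he k4 k3 (sp_mem i hi)
  rw [e2, val_sqS c hi 5 le_rfl, if_pos hi] at h1
  exact (mul_eq_zero.1 h1).resolve_right (sp_ne hi)

end

end Mlk
namespace Mlk

/-! ### Cocycles as bilinear maps -/

section

variable {F L : Type*} [Field F] [CharP F 5] [AddCommGroup L] [Module F L] (M : Model F L)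

/-- `SqE` agrees with the bilinear map `SqM`, because `1/24 = -1` and `1/12 = -2` in `F`. -/
lemma SqE_eq (z x y : L) : SqE F 5 (fun x y => M.B x y) z x y = SqM M z x y := by
  have h5 : (5 : F) = 0 := by exact_mod_cast CharP.cast_eq_zero F 5
  have e1 : ((24 : ℕ) : F)⁻¹ = -1 :=
    inv_eq_of_mul_eq_one_right (by push_cast; linear_combination (-5 : F) * h5)
  have e2 : ((12 : ℕ) : F)⁻¹ = -2 :=
    inv_eq_of_mul_eq_one_right (by push_cast; linear_combination (-5 : F) * h5)
  have hI : Finset.Ioo 0 5 = {1, 2, 3, 4} := by decide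
  have f1 : Nat.factorial 1 * Nat.factorial (5 - 1) = 24 := by decide
  have f2 : Nat.factorial 2 * Nat.factorial (5 - 2) = 12 := by decide
  have f3 : Nat.factorial 3 * Nat.factorial (5 - 3) = 12 := by decide
  have f4 : Nat.factorial 4 * Nat.factorial (5 - 4) = 24 := by decide
  rw [SqE, Squaring, hI, Finset.sum_insert (by decide), Finset.sum_insert (by decide),
    Finset.sum_insert (by decide), Finset.sum_singleton, f1, f2, f3, f4, e1, e2, SqM,
    LinearMap.smul_apply, LinearMap.smul_apply, SqZ_apply]
  change (-1 : F) • M.B (M.B z x) (M.B z (M.B z (M.B z (M.B z y)))) +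
    ((-2 : F) • M.B (M.B z (M.B z x)) (M.B z (M.B z (M.B z y))) +
    ((-2 : F) • M.B (M.B z (M.B z (M.B z x))) (M.B z (M.B z y)) +
    (-1 : F) • M.B (M.B z (M.B z (M.B z (M.B z x)))) (M.B z y))) = _
  module

lemma cocycle_of_coc {ψ : L →ₗ[F] L →ₗ[F] L} (h : Coc M ψ) :
    IsCocycle F (fun x y => M.B x y) fun x y => ψ x y :=
  ⟨⟨⟨fun x => ⟨map_add _, map_smul _⟩, fun y => ⟨fun a b => LinearMap.map_add₂ ψ a b y,
      fun c a => LinearMap.map_smul₂ ψ c a y⟩⟩, h.1⟩, h.2⟩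

lemma cocycle_SqE (z : L) : IsCocycle F (fun x y => M.B x y) (SqE F 5 (fun x y => M.B x y) z) := by
  have e : SqE F 5 (fun x y => M.B x y) z = fun x y => SqM M z x y := by
    funext x y
    exact SqE_eq M z x y
  rw [e]
  exact cocycle_of_coc M (coc_SqM z)

lemma exists_bilin {ψ : L → L → L} (h : IsCocycle F (fun x y => M.B x y) ψ) :
    ∃ Ψ : L →ₗ[F] L →ₗ[F] L, Coc M Ψ ∧ ∀ x y, Ψ x y = ψ x y :=
  ⟨LinearMap.mk₂ F ψ (fun a b y => (h.1.1.2 y).map_add a b) (fun c a y => (h.1.1.2 y).map_smul c a)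
    (fun x => (h.1.1.1 x).map_add) (fun c x y => (h.1.1.1 x).map_smul c y),
    ⟨h.1.2, h.2⟩, fun _ _ => rfl⟩

lemma sqS_five (c : ℕ → F) (x y : L) : sqS M c 5 x y =
    c 0 • SqM M (ee M (25 * 0)) x y + c 1 • SqM M (ee M (25 * 1)) x y +
      c 2 • SqM M (ee M (25 * 2)) x y + c 3 • SqM M (ee M (25 * 3)) x y +
      c 4 • SqM M (ee M (25 * 4)) x y := by
  simp only [sqS, LinearMap.add_apply, LinearMap.smul_apply, zero_add]

/-- The five scalars as a function on `ℕ`. -/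
def seq (c : F × (Fin 2 → F) × (Fin 2 → F)) : ℕ → F
  | 0 => c.1
  | 1 => c.2.1 0
  | 2 => c.2.1 1
  | 3 => c.2.2 0
  | _ => c.2.2 1

lemma sum_seq (c : F × (Fin 2 → F) × (Fin 2 → F)) (w x y : L) :
    w - c.1 • SqE F 5 (fun x y => M.B x y) (ee M 0) x y
      - ∑ i : Fin 2, c.2.1 i • SqE F 5 (fun x y => M.B x y) (ee M (25 * (1 + i))) x y
      - ∑ i : Fin 2, c.2.2 i • SqE F 5 (fun x y => M.B x y) (ee M (25 * (3 + i))) x y =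
    w - sqS M (seq c) 5 x y := by
  simp only [SqE_eq, Fin.sum_univ_two, sqS_five]
  change w - c.1 • SqM M (ee M 0) x y
    - (c.2.1 0 • SqM M (ee M 25) x y + c.2.1 1 • SqM M (ee M 50) x y)
    - (c.2.2 0 • SqM M (ee M 75) x y + c.2.2 1 • SqM M (ee M 100) x y) =
    w - (c.1 • SqM M (ee M 0) x y + c.2.1 0 • SqM M (ee M 25) x y + c.2.1 1 • SqM M (ee M 50) x y +
      c.2.2 0 • SqM M (ee M 75) x y + c.2.2 1 • SqM M (ee M 100) x y)
  abel

lemma sqS_congr {c d : ℕ → F} (h : ∀ i < 5, c i = d i) : sqS M c 5 = sqS M d 5 := by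
  ext x y
  rw [sqS_five, sqS_five, h 0 (by omega), h 1 (by omega), h 2 (by omega), h 3 (by omega),
    h 4 (by omega)]

/-- The second cohomology of a Lie algebra with the Melikian structure constants. -/
theorem main {ψ : L → L → L} (hψ : IsCocycle F (fun x y => M.B x y) ψ) :
    ∃! c : F × (Fin 2 → F) × (Fin 2 → F),
      IsCoboundary F (fun x y => M.B x y) fun x y =>
        ψ x y - c.1 • SqE F 5 (fun x y => M.B x y) (ee M 0) x y
          - ∑ i : Fin 2, c.2.1 i • SqE F 5 (fun x y => M.B x y) (ee M (25 * (1 + i))) x y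
          - ∑ i : Fin 2, c.2.2 i • SqE F 5 (fun x y => M.B x y) (ee M (25 * (3 + i))) x y := by
  obtain ⟨Ψ, hΨ, e⟩ := exists_bilin M hψ
  simp only [sum_seq, ← e]
  obtain ⟨c, φ, hc⟩ := exists_comb hΨ
  refine ⟨(c 0, ![c 1, c 2], ![c 3, c 4]), ⟨φ, fun x y => ?_⟩, ?_⟩
  · have h1 : sqS M (seq (c 0, ![c 1, c 2], ![c 3, c 4])) 5 = sqS M c 5 := by
      refine sqS_congr M fun i hi => ?_
      interval_cases i <;> rfl
    change Ψ x y - sqS M (seq (c 0, ![c 1, c 2], ![c 3, c 4])) 5 x y = dB M φ x y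
    rw [h1, ← hc]
    rfl
  · rintro d ⟨φ', hd⟩
    have h1 : sqS M (fun i => seq d i - c i) 5 = dB M (φ - φ') := by
      ext x y
      have h2 : Ψ x y - sqS M (seq d) 5 x y = dB M φ' x y := hd x y
      have h3 : Ψ x y - sqS M c 5 x y = dB M φ x y := by rw [← hc]; rfl
      have h4 : sqS M (fun i => seq d i - c i) 5 x y = sqS M (seq d) 5 x y - sqS M c 5 x y := by
        rw [sqS_five, sqS_five, sqS_five]
        module
      have h5 : dB M (φ - φ') x y = dB M φ x y - dB M φ' x y := by
        simp only [dB_apply, LinearMap.sub_apply, map_sub]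
        abel
      rw [h4, h5, ← h2, ← h3]
      abel
    have h2 := comb_unique h1
    refine Prod.ext (sub_eq_zero.1 (h2 0 (by omega))) (Prod.ext ?_ ?_)
    · funext i
      fin_cases i
      · exact sub_eq_zero.1 (h2 1 (by omega))
      · exact sub_eq_zero.1 (h2 2 (by omega))
    · funext i
      fin_cases i
      · exact sub_eq_zero.1 (h2 3 (by omega))
      · exact sub_eq_zero.1 (h2 4 (by omega))

end

section

variable (F : Type*) [Field F] [CharP F 5]

lemma melOne_eq : melOne F = ee (melModel F) 0 := by
  change melOne F = mk F 0 (X F 0 0)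
  rw [X_zero]
  rfl

lemma melD_eq (i : Fin 2) : melD F i = ee (melModel F) (25 * (1 + i)) := by
  fin_cases i
  · change melD F 0 = mk F 1 (X F 0 0)
    rw [X_zero, mk1, one_smul]
    rfl
  · change melD F 1 = mk F 2 (X F 0 0)
    rw [X_zero, mk2, one_smul]
    rfl

lemma melDt_eq (i : Fin 2) : melDt F i = ee (melModel F) (25 * (3 + i)) := by
  fin_cases i
  · change melDt F 0 = mk F 3 (X F 0 0)
    rw [X_zero, mk3, one_smul]
    rfl
  · change melDt F 1 = mk F 4 (X F 0 0)
    rw [X_zero, mk4, one_smul]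
    rfl

lemma Mbr_eq_model : Mbr F = fun x y => (melModel F).B x y := rfl

end

end Mlk
/-- Theorem 1.5: `H²(M, M) = ⟨Sq(1)⟩ ⊕ ⊕_{i=1}^2 ⟨Sq(D_i)⟩ ⊕ ⊕_{i=1}^2 ⟨Sq(D̃_i)⟩`
for the restricted Melikian algebra `M` in characteristic `5`.  Each of `Sq(1)`,
`Sq(D_i)`, `Sq(D̃_i)` is a 2-cocycle with adjoint coefficients, and every 2-cocycle
differs from a unique combination of them by a 2-coboundary. -/
theorem melikian_second_cohomology
    (F : Type*) [Field F] [IsAlgClosed F] [CharP F 5] :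
    (IsCocycle F (Mbr F) (SqE F 5 (Mbr F) (melOne F))
      ∧ (∀ i : Fin 2, IsCocycle F (Mbr F) (SqE F 5 (Mbr F) (melD F i)))
      ∧ (∀ i : Fin 2, IsCocycle F (Mbr F) (SqE F 5 (Mbr F) (melDt F i))))
    ∧ ∀ ψ : Mel F → Mel F → Mel F, IsCocycle F (Mbr F) ψ →
        ∃! c : F × (Fin 2 → F) × (Fin 2 → F),
          IsCoboundary F (Mbr F)
            (fun x y => ψ x y - c.1 • SqE F 5 (Mbr F) (melOne F) x y
              - ∑ i, c.2.1 i • SqE F 5 (Mbr F) (melD F i) x y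
              - ∑ i, c.2.2 i • SqE F 5 (Mbr F) (melDt F i) x y) := by
  simp only [Mlk.Mbr_eq_model, Mlk.melOne_eq, Mlk.melD_eq, Mlk.melDt_eq]
  exact ⟨⟨Mlk.cocycle_SqE _ _, fun _ => Mlk.cocycle_SqE _ _, fun _ => Mlk.cocycle_SqE _ _⟩,
    fun _ hψ => Mlk.main _ hψ⟩
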